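/- arXiv:2002.04810 — 7 statements merged into one kernel-verified Lean document; each statement's English description precedes it below -/
import Mathlib

section
/- Let 1 ≤ a ≤ b be integers. There exists a bijection φ : J(𝓡(a,b)) → J(𝓣(a,b)) between the order ideals of the rectangle poset and the order ideals of the trapezoid poset that commutes with rowmotion, i.e. φ(row(I)) = row(φ(I)) for every order ideal I of 𝓡(a,b). In particular, rowmotion on J(𝓣(a,b)) has the same orbit structure as rowmotion on J(𝓡(a,b)). -/
/-!
STATEMENT 0: There exists a bijection φ between the order ideals of the rectangle
poset 𝓡(a,b) and those of the trapezoid poset 𝓣(a,b) commuting with rowmotion.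
-/

open scoped Classical

noncomputable section

namespace Stmt0

/-- The rectangle poset `𝓡(a,b) = {(i,j) : 1 ≤ i ≤ a, 1 ≤ j ≤ b}`,
as a finite subset of `ℤ × ℤ` with the componentwise order. -/
def rect (a b : ℤ) : Finset (ℤ × ℤ) := Finset.Icc (1, 1) (a, b)

/-- The trapezoid poset `𝓣(a,b) = {(i,j) : 1 ≤ i ≤ a, i ≤ j ≤ a+b-i}`,
as a finite subset of `ℤ × ℤ` with the componentwise order. -/
def trap (a b : ℤ) : Finset (ℤ × ℤ) :=
  (Finset.Icc (1, 1) (a, a + b - 1)).filter (fun p => p.1 ≤ p.2 ∧ p.2 ≤ a + b - p.1)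

/-- `I` is an order ideal of the poset with ground set `P ⊆ ℤ × ℤ`
(componentwise order): a downward-closed subset of `P`. -/
def IsIdeal (P I : Finset (ℤ × ℤ)) : Prop :=
  I ⊆ P ∧ ∀ x ∈ I, ∀ y ∈ P, y ≤ x → y ∈ I

/-- Rowmotion on order ideals of the poset with ground set `P`:
`row P I` is the order ideal generated by the minimal elements of `P \ I`. -/
def row (P I : Finset (ℤ × ℤ)) : Finset (ℤ × ℤ) :=
  P.filter (fun x => ∃ m ∈ P, m ∉ I ∧ (∀ y ∈ P, y ∉ I → y ≤ m → y = m) ∧ x ≤ m)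

/-!
Both sets of ideals are parametrised by the bi-infinite `0`-`1` words of period `a + b` with `a`
ones per period, in such a way that rowmotion becomes the rotation of words. The ideal of a word
consists of the points `(i, j)` for which a statistic of a window starting at `-i` is at least `i`;
for the rectangle the statistic is the number of ones, for the trapezoid it is the number of matched
pairs when the word is read as a string of parentheses. Rowmotion is a local rule on the Hasse
diagram, and it reduces to a modular law of the statistic.

A word is determined by its ideal, because the rowmotion orbit of the ideal shows the statistic on
all translates of the windows. To see that every ideal occurs, it is enough to count. Reading the
point `(i, j)` at time `i` instead of time `0`, that is, with the window starting at `0`, turns the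
diagonals `j - i` of an ideal into a lattice path. For the rectangle any such path is a word; for
the trapezoid it is a ballot path, which is the path of matched pairs of some word by inverting the
Pitman transform.
-/

section Transfer

variable {α β γ : Type*}

lemma range_eq_of_subset_range {f h : α → β} {s : Set β} (hf : f.Injective) (hs : s.Finite)
    (hfs : Set.range f ⊆ s) (hsh : s ⊆ Set.range h) : Set.range f = s := by
  have : Finite (Set.range f) := hs.subset hfs
  have : Finite α := Finite.of_injective_finite_range hf
  refine Set.eq_of_subset_of_ncard_le hfs ?_ hs
  calc s.ncard ≤ (Set.range h).ncard := Set.ncard_le_ncard hsh (Set.finite_range h)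
    _ ≤ Nat.card α := Finite.card_range_le h
    _ = (Set.range f).ncard := (Nat.card_range_of_injective hf).symm

lemma exists_bijOn_range_of_semiconj [Nonempty γ] {f : α → β} {g : α → γ} {r : α → α} {ρ : β → β}
    {σ : γ → γ} (hf : f.Injective) (hg : g.Injective) (hρ : Function.Semiconj f r ρ)
    (hσ : Function.Semiconj g r σ) :
    ∃ φ : β → γ, Set.BijOn φ (Set.range f) (Set.range g) ∧
      ∀ x ∈ Set.range f, φ (ρ x) = σ (φ x) := by
  let φ : β → γ := Function.extend f g fun _ => Classical.arbitrary γ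
  have hφ : ∀ w, φ (f w) = g w := hf.extend_apply g _
  refine ⟨φ, ⟨?_, ?_, ?_⟩, ?_⟩
  · rintro _ ⟨w, rfl⟩
    exact ⟨w, (hφ w).symm⟩
  · rintro _ ⟨w, rfl⟩ _ ⟨w', rfl⟩ h
    rw [hφ, hφ] at h
    rw [hg h]
  · rintro _ ⟨w, rfl⟩
    exact ⟨f w, ⟨w, rfl⟩, hφ w⟩
  · rintro _ ⟨w, rfl⟩
    rw [← hρ w, hφ, hφ, hσ w]

end Transfer

/-- `P` is saturated if every strict inequality in `P` can be started by a cover of the ambient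
order `ℤ × ℤ` without leaving `P`: the Hasse diagram of `P` is then a part of the square grid. -/
def IsSaturated (P : Finset (ℤ × ℤ)) : Prop :=
  ∀ x ∈ P, ∀ y ∈ P, x < y → ∃ z ∈ P, x ⋖ z ∧ z ≤ y

section Rowmotion

variable {P I K : Finset (ℤ × ℤ)}

lemma IsSaturated.exists_le_covBy (hP : IsSaturated P) {x y : ℤ × ℤ} (hx : x ∈ P) (hy : y ∈ P)
    (hxy : x < y) : ∃ z ∈ P, x ≤ z ∧ z ⋖ y := by
  obtain ⟨z, hz⟩ := (P.filter fun z => x ≤ z ∧ z < y).exists_maximal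
    ⟨x, Finset.mem_filter.2 ⟨hx, le_rfl, hxy⟩⟩
  obtain ⟨hzP, hxz, hzy⟩ := Finset.mem_filter.1 hz.prop
  obtain ⟨z', hz'P, hzz', hz'y⟩ := hP z hzP y hy hzy
  have hz'_eq : z' = y := by
    by_contra hne
    have hmem : z' ∈ P.filter fun z => x ≤ z ∧ z < y :=
      Finset.mem_filter.2 ⟨hz'P, hxz.trans hzz'.le, hz'y.lt_of_ne hne⟩
    exact hz.not_gt hmem hzz'.lt
  exact ⟨z, hzP, hxz, hz'_eq ▸ hzz'⟩

lemma mem_row_iff {x : ℤ × ℤ} : x ∈ row P I ↔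
    x ∈ P ∧ (∀ y ∈ P, y < x → y ∈ I) ∧ (x ∉ I ∨ ∃ y ∈ row P I, x < y) := by
  simp only [row, Finset.mem_filter]
  constructor
  · rintro ⟨hx, m, hm, hmI, hmin, hxm⟩
    refine ⟨hx, fun y hy hyx => ?_, ?_⟩
    · by_contra hyI
      exact (hyx.trans_le hxm).ne (hmin y hy hyI (hyx.le.trans hxm))
    · rcases hxm.eq_or_lt with rfl | hlt
      · exact Or.inl hmI
      · exact Or.inr ⟨m, ⟨hm, m, hm, hmI, hmin, le_rfl⟩, hlt⟩
  · rintro ⟨hx, hbelow, hxI | ⟨y, ⟨-, m, hm, hmI, hmin, hym⟩, hxy⟩⟩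
    · refine ⟨hx, x, hx, hxI, fun y hy hyI hyx => ?_, le_rfl⟩
      by_contra hne
      exact hyI (hbelow y hy (hyx.lt_of_ne hne))
    · exact ⟨hx, m, hm, hmI, hmin, hxy.le.trans hym⟩

lemma row_eq_of_mem_iff (hK : ∀ x, x ∈ K ↔
    x ∈ P ∧ (∀ y ∈ P, y < x → y ∈ I) ∧ (x ∉ I ∨ ∃ y ∈ K, x < y)) : row P I = K := by
  have agree : ∀ x ∈ P, x ∈ row P I ↔ x ∈ K := by
    intro x hx
    refine Set.WellFoundedOn.induction (P := fun x => x ∈ row P I ↔ x ∈ K)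
      (P.finite_toSet.wellFoundedOn (r := (· > ·))) hx fun x _ ih => ?_
    have above : (∃ y ∈ row P I, x < y) ↔ ∃ y ∈ K, x < y :=
      ⟨fun ⟨y, hy, hxy⟩ => ⟨y, (ih y (mem_row_iff.1 hy).1 hxy).1 hy, hxy⟩,
        fun ⟨y, hy, hxy⟩ => ⟨y, (ih y ((hK y).1 hy).1 hxy).2 hy, hxy⟩⟩
    rw [mem_row_iff, hK, above]
  ext x
  exact ⟨fun h => (agree x (mem_row_iff.1 h).1).1 h, fun h => (agree x ((hK x).1 h).1).2 h⟩

lemma row_eq_of_forall_covBy (hP : IsSaturated P) (hI : IsIdeal P I) (hK : IsIdeal P K)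
    (h : ∀ x ∈ P, x ∈ K ↔ (∀ y, y ⋖ x → y ∈ P → y ∈ I) ∧ (x ∉ I ∨ ∃ y ∈ K, x ⋖ y)) :
    row P I = K := by
  refine row_eq_of_mem_iff fun x => ?_
  by_cases hx : x ∈ P
  · have below : (∀ y ∈ P, y < x → y ∈ I) ↔ ∀ y, y ⋖ x → y ∈ P → y ∈ I := by
      refine ⟨fun hlt y hyx hy => hlt y hy hyx.lt, fun hcov y hy hyx => ?_⟩
      obtain ⟨z, hz, hyz, hzx⟩ := hP.exists_le_covBy hy hx hyx
      exact hI.2 z (hcov z hzx hz) y hy hyz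
    have above : (∃ y ∈ K, x < y) ↔ ∃ y ∈ K, x ⋖ y := by
      refine ⟨fun ⟨y, hy, hxy⟩ => ?_, fun ⟨y, hy, hxy⟩ => ⟨y, hy, hxy.lt⟩⟩
      obtain ⟨z, hz, hxz, hzy⟩ := hP x hx y (hK.1 hy) hxy
      exact ⟨z, hK.2 y hy z hz hzy, hxz⟩
    rw [h x hx, below, above, and_iff_right hx]
  · exact iff_of_false (fun hxK => hx (hK.1 hxK)) fun hxP => hx hxP.1

lemma forall_covBy_mk_iff {i j : ℤ} {p : ℤ × ℤ → Prop} :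
    (∀ y, y ⋖ (i, j) → p y) ↔ p (i - 1, j) ∧ p (i, j - 1) := by
  simp only [Prod.forall, Prod.mk_covBy_mk_iff, Order.covBy_iff_add_one_eq,
    ← eq_sub_iff_add_eq]
  grind

lemma exists_mk_covBy_iff {i j : ℤ} {p : ℤ × ℤ → Prop} :
    (∃ y, p y ∧ (i, j) ⋖ y) ↔ p (i + 1, j) ∨ p (i, j + 1) := by
  simp only [Prod.exists, Prod.mk_covBy_mk_iff, Order.covBy_iff_add_one_eq]
  grind

lemma finite_setOf_isIdeal (P : Finset (ℤ × ℤ)) : {I | IsIdeal P I}.Finite :=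
  P.powerset.finite_toSet.subset fun _ hI => Finset.mem_coe.2 (Finset.mem_powerset.2 hI.1)

end Rowmotion

/-- An integer-valued statistic `F t s` of the windows `(t, s]`, `t ≤ s`, which vanishes on the
empty window and increases by `0` or `1` when the window is enlarged by one position. -/
structure IsWindowStatistic (F : ℤ → ℤ → ℤ) : Prop where
  self (t : ℤ) : F t t = 0
  succ_right {t s : ℤ} (h : t ≤ s) : F t (s + 1) = F t s ∨ F t (s + 1) = F t s + 1
  succ_left {t s : ℤ} (h : t < s) : F t s = F (t + 1) s ∨ F t s = F (t + 1) s + 1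

/-- The points `(i, j)` of `P` for which the statistic `F` is at least `i` on the window
`(-i, N - j]`: moving along a cover relation moves one end of the window by one position, and
rowmotion will amount to translating all windows. -/
def windowIdeal (P : Finset (ℤ × ℤ)) (N : ℤ) (F : ℤ → ℤ → ℤ) : Finset (ℤ × ℤ) :=
  P.filter fun x => x.1 ≤ F (-x.1) (N - x.2)

section WindowIdeal

variable {P : Finset (ℤ × ℤ)} {N : ℤ} {F : ℤ → ℤ → ℤ}

namespace IsWindowStatistic

lemma mono_right (hF : IsWindowStatistic F) {t s s' : ℤ} (hts : t ≤ s) (hs : s ≤ s') :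
    F t s ≤ F t s' := by
  induction s', hs using Int.leInduction with
  | base => exact le_rfl
  | succ s' hs ih => have := hF.succ_right (hts.trans hs); omega

lemma le_add_left (hF : IsWindowStatistic F) {t t' s : ℤ} (ht : t ≤ t') (hs : t' ≤ s) :
    F t s ≤ F t' s + (t' - t) := by
  induction t', ht using Int.leInduction with
  | base => simp
  | succ t' _ ih =>
    have := ih (by omega)
    have := hF.succ_left (show t' < s by omega)
    omega

lemma nonneg (hF : IsWindowStatistic F) {t s : ℤ} (hts : t ≤ s) : 0 ≤ F t s :=
  (hF.self t).symm.le.trans (hF.mono_right le_rfl hts)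

lemma le_sub (hF : IsWindowStatistic F) {t s : ℤ} (hts : t ≤ s) : F t s ≤ s - t := by
  simpa only [hF.self, zero_add] using hF.le_add_left hts le_rfl

lemma comp_add_one (hF : IsWindowStatistic F) :
    IsWindowStatistic fun t s => F (t + 1) (s + 1) where
  self t := hF.self _
  succ_right h := hF.succ_right (by omega)
  succ_left h := hF.succ_left (by omega)

/-- The modular law is the tropical form of the local rule of rowmotion. -/
lemma le_add_one_iff_of_modular (hF : IsWindowStatistic F) {t s : ℤ} (hts : t < s)
    {i : ℤ} (hmod : F (t + 1) s < i → F t s + F (t + 1) (s + 1) = F (t + 1) s + F t (s + 1)) :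
    i ≤ F (t + 1) (s + 1) ↔ i - 1 ≤ F (t + 1) s ∧ i ≤ F t (s + 1) ∧
      (F t s < i ∨ i + 1 ≤ F t (s + 1) ∨ i ≤ F (t + 1) s) := by
  have := hF.succ_left hts
  have := hF.succ_left (show t < s + 1 by omega)
  have := hF.succ_right hts.le
  have := hF.succ_right (show t + 1 ≤ s by omega)
  omega

end IsWindowStatistic

lemma mem_windowIdeal {i j : ℤ} :
    (i, j) ∈ windowIdeal P N F ↔ (i, j) ∈ P ∧ i ≤ F (-i) (N - j) :=
  Finset.mem_filter

lemma isIdeal_windowIdeal (hF : IsWindowStatistic F) (hN : ∀ i j, (i, j) ∈ P → -i < N - j) :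
    IsIdeal P (windowIdeal P N F) := by
  refine ⟨Finset.filter_subset _ _, ?_⟩
  rintro ⟨i, j⟩ hx ⟨i', j'⟩ hy hle
  rw [mem_windowIdeal] at hx ⊢
  obtain ⟨hi, hj⟩ := Prod.mk_le_mk.1 hle
  have hwindow := hN i j hx.1
  have hright := hF.mono_right hwindow.le (show N - j ≤ N - j' by omega)
  have hleft := hF.le_add_left (show -i ≤ -i' by omega) (hN i' j' hy).le
  exact ⟨hy, by omega⟩

lemma row_windowIdeal (hP : IsSaturated P) (hF : IsWindowStatistic F)
    (hN : ∀ i j, (i, j) ∈ P → -i < N - j)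
    (hlocal : ∀ i j, (i, j) ∈ P → (i ≤ F (-i + 1) (N - j + 1) ↔
      ((i - 1, j) ∈ P → i - 1 ≤ F (-i + 1) (N - j)) ∧
      ((i, j - 1) ∈ P → i ≤ F (-i) (N - j + 1)) ∧
      (F (-i) (N - j) < i ∨ ((i + 1, j) ∈ P ∧ i + 1 ≤ F (-i) (N - j + 1)) ∨
        ((i, j + 1) ∈ P ∧ i ≤ F (-i + 1) (N - j))))) :
    row P (windowIdeal P N F) = windowIdeal P N fun t s => F (t + 1) (s + 1) := by
  refine row_eq_of_forall_covBy hP (isIdeal_windowIdeal hF hN)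
    (isIdeal_windowIdeal hF.comp_add_one hN) ?_
  rintro ⟨i, j⟩ hij
  have hi_pred : -(i - 1) = -i + 1 := by ring
  have hj_pred : N - (j - 1) = N - j + 1 := by ring
  have hi_succ : -(i + 1) + 1 = -i := by ring
  have hj_succ : N - (j + 1) + 1 = N - j := by ring
  rw [forall_covBy_mk_iff, exists_mk_covBy_iff]
  simp only [mem_windowIdeal, hij, true_and, imp_and, imp_self, not_le, hi_pred, hj_pred, hi_succ,
    hj_succ]
  rw [hlocal i j hij, and_assoc]

end WindowIdeal

/-- A bi-infinite `0`-`1` word with period `n` and `a` ones per period, given by its counting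
function: `count q` is the number of ones in the window `(0, q]`, and minus the number of ones in
`(q, 0]` when `q < 0`. -/
@[ext]
structure PeriodicWord (n a : ℤ) where
  count : ℤ → ℤ
  count_zero : count 0 = 0
  count_succ (q : ℤ) : count (q + 1) = count q ∨ count (q + 1) = count q + 1
  count_add_period (q : ℤ) : count (q + n) = count q + a

namespace PeriodicWord

variable {n a : ℤ}

/-- The word shifted by one position to the left. -/
@[simps]
def rotate (w : PeriodicWord n a) : PeriodicWord n a where
  count q := w.count (q + 1) - w.count 1
  count_zero := by simp
  count_succ q := by have := w.count_succ (q + 1); omega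
  count_add_period q := by
    have := w.count_add_period (q + 1)
    rw [add_right_comm] at this
    omega

lemma count_add_mul_period (w : PeriodicWord n a) (k : ℕ) (q : ℤ) :
    w.count (q + k * n) = w.count q + k * a := by
  induction k with
  | zero => simp
  | succ k ih =>
    calc w.count (q + (k + 1 : ℕ) * n) = w.count (q + k * n + n) := by push_cast; ring_nf
      _ = w.count q + (k + 1 : ℕ) * a := by rw [w.count_add_period, ih]; push_cast; ring

lemma ext_of_eventually {w w' : PeriodicWord n a} (hn : 1 ≤ n) (m : ℤ)
    (h : ∀ q, m ≤ q → w.count (q + 1) - w.count q = w'.count (q + 1) - w'.count q) : w = w' := by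
  have letter_eq : ∀ q, w.count (q + 1) - w.count q = w'.count (q + 1) - w'.count q := by
    intro q
    have hlate : m ≤ q + (m - q).toNat * n := by nlinarith [Int.self_le_toNat (m - q)]
    have := h _ hlate
    rw [add_right_comm] at this
    simp only [count_add_mul_period] at this
    linarith
  ext q
  induction q using Int.induction_on with
  | zero => rw [w.count_zero, w'.count_zero]
  | succ q ih => have := letter_eq q; omega
  | pred q ih =>
    have := letter_eq (-q - 1)
    rw [sub_add_cancel] at this
    omega

theorem exists_count_eq (hn : 1 ≤ n) {c : ℤ → ℤ} (h0 : c 0 = 0) (hcn : c n = a)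
    (hc : ∀ q, 0 ≤ q → q < n → c (q + 1) = c q ∨ c (q + 1) = c q + 1) :
    ∃ w : PeriodicWord n a, ∀ q, 0 ≤ q → q ≤ n → w.count q = c q := by
  let d : ℤ → ℤ := fun q => c (q % n) + a * (q / n)
  have d_add_mul : ∀ r k, 0 ≤ r → r ≤ n → d (r + n * k) = c r + a * k := by
    intro r k hr hrn
    rcases hrn.eq_or_lt with rfl | hlt
    · simp [d, h0, hcn, Int.add_mul_ediv_left, show r ≠ 0 by omega, mul_add]
    · simp [d, Int.add_mul_ediv_left, show n ≠ 0 by omega, Int.emod_eq_of_lt hr hlt,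
        Int.ediv_eq_zero_of_lt hr hlt]
  have d_eq : ∀ q, 0 ≤ q → q ≤ n → d q = c q := fun q hq hqn => by
    simpa using d_add_mul q 0 hq hqn
  have euclid : ∀ q, ∃ r k, 0 ≤ r ∧ r < n ∧ q = r + n * k := fun q =>
    ⟨q % n, q / n, Int.emod_nonneg q (by omega), Int.emod_lt_of_pos q (by omega),
      (Int.emod_add_mul_ediv q n).symm⟩
  refine ⟨⟨d, by rw [d_eq 0 le_rfl (by omega), h0], fun q => ?_, fun q => ?_⟩, d_eq⟩
  · obtain ⟨r, k, hr, hrn, rfl⟩ := euclid q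
    have := hc r hr hrn
    rw [add_right_comm, d_add_mul r k hr hrn.le, d_add_mul (r + 1) k (by omega) (by omega)]
    omega
  · obtain ⟨r, k, hr, hrn, rfl⟩ := euclid q
    rw [add_assoc, ← mul_add_one, d_add_mul r k hr hrn.le, d_add_mul r (k + 1) hr hrn.le]
    ring

/-- The number of ones in the window `(t, s]`. -/
def ones (w : PeriodicWord n a) (t s : ℤ) : ℤ := w.count s - w.count t

lemma isWindowStatistic_ones (w : PeriodicWord n a) : IsWindowStatistic w.ones where
  self t := sub_self _
  succ_right {t s} _ := by have := w.count_succ s; simp only [ones]; omega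
  succ_left {t s} _ := by have := w.count_succ t; simp only [ones]; omega

lemma ones_rotate (w : PeriodicWord n a) (t s : ℤ) :
    w.rotate.ones t s = w.ones (t + 1) (s + 1) := by
  simp [ones]

lemma ones_period (w : PeriodicWord n a) (t : ℤ) : w.ones t (t + n) = a := by
  simp [ones, w.count_add_period]

lemma ones_add_ones (w : PeriodicWord n a) (t q s : ℤ) : w.ones t q + w.ones q s = w.ones t s := by
  simp only [ones]; ring

end PeriodicWord

/-- The minimum of `f` on the integer interval `[t, s]`; the junk value `0` if `s < t`. -/
def minOn (f : ℤ → ℤ) (t s : ℤ) : ℤ := sInf (f '' Set.Icc t s)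

section MinOn

variable (f : ℤ → ℤ) {t s : ℤ}

lemma bddBelow_image_Icc (t s : ℤ) : BddBelow (f '' Set.Icc t s) :=
  ((Set.finite_Icc t s).image f).bddBelow

lemma minOn_self (t : ℤ) : minOn f t t = f t := by simp [minOn]

lemma minOn_succ_right (h : t ≤ s) : minOn f t (s + 1) = min (minOn f t s) (f (s + 1)) := by
  have hIcc : Set.Icc t (s + 1) = insert (s + 1) (Set.Icc t s) := by ext; simp; omega
  rw [minOn, hIcc, Set.image_insert_eq, csInf_insert (bddBelow_image_Icc f t s)
    ((Set.nonempty_Icc.2 h).image f), inf_comm]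
  rfl

lemma minOn_eq_min_succ_left (h : t < s) : minOn f t s = min (f t) (minOn f (t + 1) s) := by
  have hIcc : Set.Icc t s = insert t (Set.Icc (t + 1) s) := by ext; simp; omega
  rw [minOn, hIcc, Set.image_insert_eq, csInf_insert (bddBelow_image_Icc f (t + 1) s)
    ((Set.nonempty_Icc.2 (by omega)).image f)]
  rfl

lemma minOn_le {q : ℤ} (htq : t ≤ q) (hqs : q ≤ s) : minOn f t s ≤ f q :=
  csInf_le (bddBelow_image_Icc f t s) ⟨q, ⟨htq, hqs⟩, rfl⟩

variable {f} in
lemma le_minOn (h : t ≤ s) {m : ℤ} (hm : ∀ q, t ≤ q → q ≤ s → m ≤ f q) : m ≤ minOn f t s :=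
  le_csInf ((Set.nonempty_Icc.2 h).image f) (Set.forall_mem_image.2 fun q hq => hm q hq.1 hq.2)

lemma minOn_comp_add_one_add (d : ℤ) (h : t ≤ s) :
    minOn (fun q => f (q + 1) + d) t s = minOn f (t + 1) (s + 1) + d := by
  induction s, h using Int.leInduction with
  | base => rw [minOn_self, minOn_self]
  | succ s hs ih =>
    rw [minOn_succ_right _ hs, minOn_succ_right _ (by omega), ih, min_add_add_right]

end MinOn

/-- The height at `q` of the lattice path with up-steps `0` and down-steps `1` whose number of
down-steps before `q` is `c q`. -/
def pathHeight (c : ℤ → ℤ) (q : ℤ) : ℤ := q - 2 * c q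

namespace PeriodicWord

variable {n a : ℤ}

/-- The number of matched pairs in the window `(t, s]`, reading `0` as an opening and `1` as a
closing parenthesis: a one is unmatched when the path reaches a new minimum there. -/
def pairs (w : PeriodicWord n a) (t s : ℤ) : ℤ :=
  w.ones t s - (pathHeight w.count t - minOn (pathHeight w.count) t s)

lemma pairs_eq (w : PeriodicWord n a) (t s : ℤ) :
    w.pairs t s = w.count s + w.count t - t + minOn (pathHeight w.count) t s := by
  simp only [pairs, ones, pathHeight]; ring

lemma isWindowStatistic_pairs (w : PeriodicWord n a) : IsWindowStatistic w.pairs where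
  self t := by simp [pairs, ones, minOn_self]
  succ_right {t s} h := by
    have hmin := minOn_succ_right (pathHeight w.count) h
    have hle := minOn_le (pathHeight w.count) h le_rfl
    have := w.count_succ s
    simp only [pairs_eq, pathHeight] at *
    omega
  succ_left {t s} h := by
    have hmin := minOn_eq_min_succ_left (pathHeight w.count) h
    have hle := minOn_le (pathHeight w.count) (show t + 1 ≤ t + 1 from le_rfl) h
    have := w.count_succ t
    simp only [pairs_eq, pathHeight] at *
    omega

lemma pairs_rotate (w : PeriodicWord n a) {t s : ℤ} (h : t ≤ s) :
    w.rotate.pairs t s = w.pairs (t + 1) (s + 1) := by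
  have hheight : pathHeight w.rotate.count =
      fun q => pathHeight w.count (q + 1) + (2 * w.count 1 - 1) := by
    funext q
    simp only [pathHeight, rotate_count]
    ring
  simp only [pairs, ones_rotate, hheight, minOn_comp_add_one_add _ _ h]
  ring

lemma pairs_le_ones (w : PeriodicWord n a) {t s : ℤ} (h : t ≤ s) : w.pairs t s ≤ w.ones t s := by
  have := minOn_le (pathHeight w.count) le_rfl h
  simp only [pairs]
  omega

lemma two_mul_pairs_le (w : PeriodicWord n a) {t s : ℤ} (h : t ≤ s) :
    2 * w.pairs t s ≤ s - t := by
  have hleft := minOn_le (pathHeight w.count) le_rfl h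
  have hright := minOn_le (pathHeight w.count) h le_rfl
  simp only [pairs_eq, pathHeight] at *
  omega

lemma pairs_le (w : PeriodicWord n a) {t s : ℤ} (hts : t ≤ s) (hs : s ≤ t + n) :
    w.pairs t s ≤ a :=
  calc w.pairs t s ≤ w.ones t s := w.pairs_le_ones hts
    _ ≤ w.ones t (t + n) := w.isWindowStatistic_ones.mono_right hts hs
    _ = a := w.ones_period t

lemma pairs_modular (w : PeriodicWord n a) {t s : ℤ} (hts : t < s)
    (hunmatched : 2 * w.pairs (t + 1) s ≠ s - (t + 1)) :
    w.pairs t s + w.pairs (t + 1) (s + 1) = w.pairs (t + 1) s + w.pairs t (s + 1) := by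
  have hleft := minOn_eq_min_succ_left (pathHeight w.count) hts
  have hright := minOn_succ_right (pathHeight w.count) (show t + 1 ≤ s by omega)
  have hboth := minOn_succ_right (pathHeight w.count) hts.le
  have hle_left := minOn_le (pathHeight w.count) (show t + 1 ≤ t + 1 from le_rfl) hts
  have hle_right := minOn_le (pathHeight w.count) (show t + 1 ≤ s by omega) le_rfl
  have := w.count_succ t
  have := w.count_succ s
  simp only [pairs_eq, pathHeight] at *
  omega

/-- When at most half of the letters are ones, a one at the end of a full period is matched. -/
lemma pairs_period_sub (w : PeriodicWord n a) (hn : 1 ≤ n) (han : 2 * a ≤ n) (t : ℤ) :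
    w.pairs t (t + n) - w.pairs t (t + n - 1) = w.ones (t + n - 1) (t + n) := by
  have hmin := minOn_succ_right (pathHeight w.count) (show t ≤ t + n - 1 by omega)
  have hle := minOn_le (pathHeight w.count) le_rfl (show t ≤ t + n - 1 by omega)
  have := w.count_add_period t
  rw [sub_add_cancel] at hmin
  simp only [pairs_eq, ones, pathHeight] at *
  omega

/-- The local rule of rowmotion at the points `(i, i)` of the trapezoid: they have no left
neighbour, and their windows are full periods. -/
lemma le_pairs_period_iff (w : PeriodicWord n a) (hn : 1 < n) (han : 2 * a ≤ n) (t : ℤ) {i : ℤ}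
    (hi : i ≤ a) : i ≤ w.pairs (t + 1) (t + n + 1) ↔
      i - 1 ≤ w.pairs (t + 1) (t + n) ∧ (w.pairs t (t + n) < i ∨ i ≤ w.pairs (t + 1) (t + n)) := by
  have hleft := minOn_eq_min_succ_left (pathHeight w.count) (show t < t + n by omega)
  have hright := minOn_succ_right (pathHeight w.count) (show t + 1 ≤ t + n by omega)
  have hle_left := minOn_le (pathHeight w.count) (show t + 1 ≤ t + 1 from le_rfl)
    (show t + 1 ≤ t + n by omega)
  have hle_right := minOn_le (pathHeight w.count) (show t + 1 ≤ t + n by omega) le_rfl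
  have := w.count_succ t
  have := w.count_add_period t
  have := w.count_add_period (t + 1)
  rw [add_right_comm t 1 n] at this
  simp only [pairs_eq, pathHeight] at *
  omega

end PeriodicWord

section PitmanInverse

variable {n a : ℤ} {c : ℤ → ℤ}

/-- `c` counts the matched and `v` the unmatched ones of the word to be constructed: an unmatched
one is put where the path of `c` leaves a level for the last time. -/
lemma exists_unmatched_count (hn : 0 ≤ n) (h0 : c 0 = 0)
    (hstep : ∀ p, 0 ≤ p → p < n → c (p + 1) = c p ∨ c (p + 1) = c p + 1)
    (hballot : ∀ p, 0 ≤ p → p ≤ n → 2 * c p ≤ p) (hcn : c n ≤ a) (han : 2 * a ≤ n) :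
    ∃ v : ℤ → ℤ, v 0 = 0 ∧ v n = a - c n ∧ ∀ p, 0 ≤ p → p < n →
      v (p + 1) ≤ pathHeight c (p + 1) ∧
      (v (p + 1) = v p ∨
        c (p + 1) = c p ∧ v (p + 1) = v p + 1 ∧ v (p + 1) = pathHeight c (p + 1)) := by
  refine ⟨fun p => min (minOn (pathHeight c) p n) (a - c n), ?_, ?_, fun p hp hpn => ?_⟩
  · have hle := minOn_le (pathHeight c) le_rfl hn
    have hge : 0 ≤ minOn (pathHeight c) 0 n := le_minOn hn fun q hq hqn => by
      have := hballot q hq hqn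
      rw [pathHeight]
      omega
    simp only [pathHeight] at hle
    simp only [h0] at *
    omega
  · simp only [minOn_self, pathHeight]
    omega
  · have hmin := minOn_eq_min_succ_left (pathHeight c) hpn
    have hle := minOn_le (pathHeight c) (show p + 1 ≤ p + 1 from le_rfl) hpn
    have := hstep p hp hpn
    simp only [pathHeight] at *
    omega

theorem PeriodicWord.exists_pairs_eq (hn : 1 ≤ n) (h0 : c 0 = 0)
    (hstep : ∀ p, 0 ≤ p → p < n → c (p + 1) = c p ∨ c (p + 1) = c p + 1)
    (hballot : ∀ p, 0 ≤ p → p ≤ n → 2 * c p ≤ p) (hcn : c n ≤ a) (han : 2 * a ≤ n) :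
    ∃ w : PeriodicWord n a, ∀ p, 0 ≤ p → p ≤ n → w.pairs 0 p = c p := by
  obtain ⟨v, hv0, hvn, hv⟩ := exists_unmatched_count (by omega) h0 hstep hballot hcn han
  obtain ⟨w, hw⟩ := exists_count_eq (a := a) (c := fun p => c p + v p) hn (by omega) (by omega)
    fun p hp hpn => by
      have := hstep p hp hpn
      have := hv p hp hpn
      omega
  have minOn_eq : ∀ p, 0 ≤ p → p ≤ n → minOn (pathHeight w.count) 0 p = -v p := by
    intro p hp
    induction p, hp using Int.leInduction with
    | base => simp [minOn_self, pathHeight, w.count_zero, hv0]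
    | succ p hp ih =>
      intro hpn
      have := hv p hp (by omega)
      rw [minOn_succ_right _ hp, ih (by omega)]
      simp only [pathHeight, hw (p + 1) (by omega) hpn] at *
      omega
  refine ⟨w, fun p hp hpn => ?_⟩
  rw [pairs_eq, minOn_eq p hp hpn, hw p hp hpn, w.count_zero]
  ring

end PitmanInverse

section Diagonals

variable {P I : Finset (ℤ × ℤ)} {N n : ℤ}

lemma IsIdeal.exists_mem_diagonal_iff (hI : IsIdeal P I) {p lo hi : ℤ} (hle : lo ≤ hi)
    (hP : ∀ i, (i, N - p + i) ∈ P ↔ lo < i ∧ i ≤ hi) :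
    ∃ m, lo ≤ m ∧ m ≤ hi ∧ ∀ i, (i, N - p + i) ∈ P → ((i, N - p + i) ∈ I ↔ i ≤ m) := by
  obtain ⟨m, ⟨hmhi, hmI⟩, hmax⟩ := Int.exists_greatest_of_bdd
    (P := fun z => z ≤ hi ∧ (lo < z → (z, N - p + z) ∈ I))
    ⟨hi, fun z hz => hz.1⟩ ⟨lo, hle, fun h => absurd h (lt_irrefl lo)⟩
  refine ⟨m, hmax lo ⟨hle, fun h => absurd h (lt_irrefl lo)⟩, hmhi, fun i hi_mem => ?_⟩
  obtain ⟨hlo_i, hi_hi⟩ := (hP i).1 hi_mem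
  refine ⟨fun hiI => hmax i ⟨hi_hi, fun _ => hiI⟩, fun him => ?_⟩
  exact hI.2 _ (hmI (hlo_i.trans_le him)) _ hi_mem (Prod.mk_le_mk.2 ⟨him, by omega⟩)

lemma IsIdeal.exists_eq_filter_le (hI : IsIdeal P I) {lo hi : ℤ → ℤ}
    (hle : ∀ p, 0 ≤ p → p ≤ n → lo p ≤ hi p)
    (hlo : ∀ p, 0 ≤ p → p < n → lo (p + 1) = lo p ∨ lo (p + 1) = lo p + 1)
    (hhi : ∀ p, 0 ≤ p → p < n → hi (p + 1) = hi p ∨ hi (p + 1) = hi p + 1)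
    (hP : ∀ p i, (i, N - p + i) ∈ P ↔ (0 ≤ p ∧ p ≤ n) ∧ lo p < i ∧ i ≤ hi p) :
    ∃ c : ℤ → ℤ,
      (∀ p, 0 ≤ p → p ≤ n → lo p ≤ c p ∧ c p ≤ hi p) ∧
      (∀ p, 0 ≤ p → p < n → c (p + 1) = c p ∨ c (p + 1) = c p + 1) ∧
      I = P.filter fun x => x.1 ≤ c (N - x.2 + x.1) := by
  have hdiag : ∀ p, 0 ≤ p → p ≤ n → ∃ m, lo p ≤ m ∧ m ≤ hi p ∧
      ∀ i, (i, N - p + i) ∈ P → ((i, N - p + i) ∈ I ↔ i ≤ m) := fun p h0 hpn =>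
    hI.exists_mem_diagonal_iff (hle p h0 hpn) fun i => by rw [hP, and_iff_right ⟨h0, hpn⟩]
  choose! c hlo_c hc_hi hcI using hdiag
  have mono : ∀ p, 0 ≤ p → p < n → c p ≤ c (p + 1) := fun p h0 hpn => by
    by_contra! hlt
    have := hlo_c (p + 1) (by omega) hpn
    have := hc_hi p h0 hpn.le
    have := hlo p h0 hpn
    have := hhi p h0 hpn
    have hmem := (hP p (c p)).2 (by omega)
    have hmem' := (hP (p + 1) (c p)).2 (by omega)
    have hcp := hI.2 _ ((hcI p h0 hpn.le _ hmem).2 le_rfl) _ hmem'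
      (Prod.mk_le_mk.2 ⟨le_rfl, by omega⟩)
    exact hlt.not_ge ((hcI (p + 1) (by omega) hpn _ hmem').1 hcp)
  have le_succ : ∀ p, 0 ≤ p → p < n → c (p + 1) ≤ c p + 1 := fun p h0 hpn => by
    by_contra! hlt
    have := hlo_c p h0 hpn.le
    have := hc_hi (p + 1) (by omega) hpn
    have := hlo p h0 hpn
    have := hhi p h0 hpn
    have hmem' := (hP (p + 1) (c (p + 1))).2 (by omega)
    have hmem := (hP p (c (p + 1) - 1)).2 (by omega)
    have hcp := hI.2 _ ((hcI (p + 1) (by omega) hpn _ hmem').2 le_rfl) _ hmem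
      (Prod.mk_le_mk.2 ⟨by omega, by omega⟩)
    have := (hcI p h0 hpn.le _ hmem).1 hcp
    omega
  refine ⟨c, fun p h0 hpn => ⟨hlo_c p h0 hpn, hc_hi p h0 hpn⟩, fun p h0 hpn => ?_, ?_⟩
  · have := mono p h0 hpn
    have := le_succ p h0 hpn
    omega
  · ext ⟨i, j⟩
    rw [Finset.mem_filter, ← and_iff_right_of_imp (@hI.1 (i, j)), and_congr_right_iff]
    intro hij
    have hj : N - (N - j + i) + i = j := by ring
    obtain ⟨h0, hpn⟩ := ((hP (N - j + i) i).1 (hj.symm ▸ hij)).1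
    simpa only [hj, hij, true_imp_iff] using hcI _ h0 hpn i

end Diagonals

section Rotation

variable {n a : ℤ} {P : Finset (ℤ × ℤ)} {N : ℤ} {F : PeriodicWord n a → ℤ → ℤ → ℤ}

lemma iterate_rotate_apply (hrot : ∀ w t s, t ≤ s → F w.rotate t s = F w (t + 1) (s + 1))
    (k : ℕ) (w : PeriodicWord n a) {t s : ℤ} (hts : t ≤ s) :
    F (PeriodicWord.rotate^[k] w) t s = F w (t + k) (s + k) := by
  induction k generalizing w with
  | zero => simp
  | succ k ih =>
    rw [Function.iterate_succ_apply, ih, hrot w _ _ (by omega)]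
    push_cast
    simp only [add_assoc]

lemma windowIdeal_rotate (hrot : ∀ w t s, t ≤ s → F w.rotate t s = F w (t + 1) (s + 1))
    (hN : ∀ i j, (i, j) ∈ P → -i < N - j) (w : PeriodicWord n a) :
    windowIdeal P N (F w.rotate) = windowIdeal P N fun t s => F w (t + 1) (s + 1) :=
  Finset.filter_congr fun ⟨i, j⟩ hij => by rw [hrot w _ _ (hN i j hij).le]

/-- An ideal only shows the windows `(-i, N - j]`, but its orbit shows all their translates. -/
lemma le_iff_le_of_windowIdeal_eq
    (hrot : ∀ w t s, t ≤ s → F w.rotate t s = F w (t + 1) (s + 1))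
    (hN : ∀ i j, (i, j) ∈ P → -i < N - j)
    (hrow : Function.Semiconj (fun w => windowIdeal P N (F w)) PeriodicWord.rotate (row P))
    {w w' : PeriodicWord n a} (hww' : windowIdeal P N (F w) = windowIdeal P N (F w'))
    {i j t s : ℤ} (hij : (i, j) ∈ P) (ht : -i ≤ t) (hs : s = t + i + (N - j)) :
    i ≤ F w t s ↔ i ≤ F w' t s := by
  let k := (t + i).toNat
  have horbit : ∀ v : PeriodicWord n a, (i, j) ∈ (row P)^[k] (windowIdeal P N (F v)) ↔
      i ≤ F v t s := fun v => by
    rw [← (hrow.iterate_right k).eq v, mem_windowIdeal, and_iff_right hij,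
      iterate_rotate_apply hrot k v (hN i j hij).le, show -i + (k : ℤ) = t by omega,
      show N - j + (k : ℤ) = s by omega]
  rw [← horbit, ← horbit, hww']

end Rotation

section Rectangle

variable {a b : ℤ}

lemma mem_rect {i j : ℤ} : (i, j) ∈ rect a b ↔ 1 ≤ i ∧ i ≤ a ∧ 1 ≤ j ∧ j ≤ b := by
  simp only [rect, Finset.mem_Icc, Prod.mk_le_mk]
  omega

lemma isSaturated_rect (a b : ℤ) : IsSaturated (rect a b) := by
  rintro ⟨i, j⟩ hx ⟨i', j'⟩ hy hlt
  rw [mem_rect] at hx hy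
  obtain ⟨hi, hj⟩ | ⟨hi, hj⟩ := Prod.mk_lt_mk.1 hlt
  · exact ⟨(i + 1, j), mem_rect.2 (by omega),
      Prod.mk_covBy_mk_iff_left.2 (Order.covBy_add_one _), Prod.mk_le_mk.2 (by omega)⟩
  · exact ⟨(i, j + 1), mem_rect.2 (by omega),
      Prod.mk_covBy_mk_iff_right.2 (Order.covBy_add_one _), Prod.mk_le_mk.2 (by omega)⟩

lemma neg_lt_sub_of_mem_rect (i j : ℤ) (hij : (i, j) ∈ rect a b) : -i < b - j := by
  rw [mem_rect] at hij
  omega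

/-- The order ideal of the rectangle attached to a word: it records numbers of ones in windows. -/
def rectIdeal (w : PeriodicWord (a + b) a) : Finset (ℤ × ℤ) := windowIdeal (rect a b) b w.ones

lemma semiconj_rectIdeal :
    Function.Semiconj (rectIdeal (a := a) (b := b)) PeriodicWord.rotate (row (rect a b)) := by
  intro w
  have hw := w.isWindowStatistic_ones
  rw [rectIdeal, rectIdeal, windowIdeal_rotate (F := PeriodicWord.ones)
    (fun w t s _ => w.ones_rotate t s) neg_lt_sub_of_mem_rect]
  refine (row_windowIdeal (isSaturated_rect a b) hw neg_lt_sub_of_mem_rect fun i j hij => ?_).symm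
  rw [hw.le_add_one_iff_of_modular (neg_lt_sub_of_mem_rect i j hij)
    fun _ => by simp only [PeriodicWord.ones]; ring]
  rw [mem_rect] at hij
  have left_edge := hw.nonneg (show -i + 1 ≤ b - j by omega)
  have right_edge : w.ones (-i) (b - j + 1) ≤ a := by
    have := hw.mono_right (t := -i) (s := b - j + 1) (s' := -i + (a + b)) (by omega) (by omega)
    rwa [w.ones_period] at this
  have bottom_edge : i - j + 1 ≤ w.ones (-i) (b - j + 1) := by
    have := hw.le_sub (show b - j + 1 ≤ -i + (a + b) by omega)
    have := w.ones_add_ones (-i) (b - j + 1) (-i + (a + b))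
    rw [w.ones_period] at this
    omega
  have top_edge := hw.le_sub (show -i + 1 ≤ b - j by omega)
  simp only [mem_rect]
  omega

lemma rectIdeal_injective (ha : 1 ≤ a) (hb : 1 ≤ b) :
    Function.Injective (rectIdeal (a := a) (b := b)) := by
  intro w w' hww'
  refine PeriodicWord.ext_of_eventually (by omega) (-1) fun q hq => ?_
  have hiff := le_iff_le_of_windowIdeal_eq (F := PeriodicWord.ones)
    (fun w t s _ => w.ones_rotate t s) neg_lt_sub_of_mem_rect semiconj_rectIdeal hww'
    (mem_rect.2 ⟨le_rfl, ha, hb, le_rfl⟩) hq (show q + 1 = q + 1 + (b - b) by ring)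
  have := w.count_succ q
  have := w'.count_succ q
  simp only [PeriodicWord.ones] at hiff
  omega

lemma IsIdeal.exists_eq_filter_ones {I : Finset (ℤ × ℤ)} (hI : IsIdeal (rect a b) I)
    (ha : 1 ≤ a) (hb : 1 ≤ b) : ∃ w : PeriodicWord (a + b) a,
      (rect a b).filter (fun x => x.1 ≤ w.ones 0 (b - x.2 + x.1)) = I := by
  obtain ⟨c, hbounds, hstep, rfl⟩ := hI.exists_eq_filter_le (N := b) (n := a + b)
    (lo := fun p => max 0 (p - b)) (hi := fun p => min a p) (by omega) (by omega) (by omega)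
    (fun p i => by rw [mem_rect]; omega)
  have h0 := hbounds 0 le_rfl (by omega)
  have hn := hbounds (a + b) (by omega) le_rfl
  obtain ⟨w, hw⟩ := PeriodicWord.exists_count_eq (by omega) (show c 0 = 0 by omega)
    (show c (a + b) = a by omega) hstep
  refine ⟨w, Finset.filter_congr fun ⟨i, j⟩ hij => ?_⟩
  rw [mem_rect] at hij
  rw [PeriodicWord.ones, w.count_zero, sub_zero, hw _ (by omega) (by omega)]

lemma range_rectIdeal (ha : 1 ≤ a) (hb : 1 ≤ b) :
    Set.range (rectIdeal (a := a) (b := b)) = {I | IsIdeal (rect a b) I} := by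
  refine range_eq_of_subset_range (rectIdeal_injective ha hb) (finite_setOf_isIdeal _) ?_
    fun I hI => hI.exists_eq_filter_ones ha hb
  rintro _ ⟨w, rfl⟩
  exact isIdeal_windowIdeal w.isWindowStatistic_ones neg_lt_sub_of_mem_rect

end Rectangle

section Trapezoid

variable {a b : ℤ}

lemma mem_trap {i j : ℤ} : (i, j) ∈ trap a b ↔ 1 ≤ i ∧ i ≤ a ∧ i ≤ j ∧ j ≤ a + b - i := by
  simp only [trap, Finset.mem_filter, Finset.mem_Icc, Prod.mk_le_mk]
  omega

lemma isSaturated_trap (a b : ℤ) : IsSaturated (trap a b) := by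
  rintro ⟨i, j⟩ hx ⟨i', j'⟩ hy hlt
  rw [mem_trap] at hx hy
  have hlt' := Prod.mk_lt_mk.1 hlt
  by_cases hi : i < i' ∧ i < j
  · exact ⟨(i + 1, j), mem_trap.2 (by omega),
      Prod.mk_covBy_mk_iff_left.2 (Order.covBy_add_one _), Prod.mk_le_mk.2 (by omega)⟩
  · exact ⟨(i, j + 1), mem_trap.2 (by omega),
      Prod.mk_covBy_mk_iff_right.2 (Order.covBy_add_one _), Prod.mk_le_mk.2 (by omega)⟩

lemma neg_lt_sub_of_mem_trap (i j : ℤ) (hij : (i, j) ∈ trap a b) : -i < a + b - j := by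
  rw [mem_trap] at hij
  omega

/-- The order ideal of the trapezoid attached to a word: it records numbers of matched pairs in
windows. -/
def trapIdeal (w : PeriodicWord (a + b) a) : Finset (ℤ × ℤ) :=
  windowIdeal (trap a b) (a + b) w.pairs

lemma semiconj_trapIdeal (hab : a ≤ b) :
    Function.Semiconj (trapIdeal (a := a) (b := b)) PeriodicWord.rotate (row (trap a b)) := by
  intro w
  have hw := w.isWindowStatistic_pairs
  rw [trapIdeal, trapIdeal, windowIdeal_rotate (F := PeriodicWord.pairs)
    (fun w _ _ => w.pairs_rotate) neg_lt_sub_of_mem_trap]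
  refine (row_windowIdeal (isSaturated_trap a b) hw neg_lt_sub_of_mem_trap fun i j hij => ?_).symm
  have hwindow := neg_lt_sub_of_mem_trap i j hij
  rw [mem_trap] at hij
  have left_edge := hw.nonneg (show -i + 1 ≤ a + b - j by omega)
  have right_edge := w.pairs_le (show -i ≤ a + b - j + 1 by omega)
  have top_edge := w.two_mul_pairs_le (show -i ≤ a + b - j + 1 by omega)
  have top_edge' := w.two_mul_pairs_le (show -i + 1 ≤ a + b - j by omega)
  simp only [mem_trap]
  obtain hdiag | hdiag := hij.2.2.1.eq_or_lt
  · have hrule := w.le_pairs_period_iff (by omega) (by omega) (-i) hij.2.1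
    rw [show -i + (a + b) = a + b - j by omega] at hrule
    omega
  · rw [hw.le_add_one_iff_of_modular hwindow fun hlt => w.pairs_modular hwindow (by omega)]
    omega

lemma pairs_le_pairs_of_trapIdeal_eq (hab : a ≤ b) {w w' : PeriodicWord (a + b) a}
    (hww' : trapIdeal w = trapIdeal w') {t s : ℤ} (ht : 0 ≤ t) (hts : t ≤ s)
    (hs : s ≤ t + (a + b)) : w.pairs t s ≤ w'.pairs t s := by
  rcases (w.isWindowStatistic_pairs.nonneg hts).eq_or_lt with hzero | hpos
  · exact hzero ▸ w'.isWindowStatistic_pairs.nonneg hts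
  · have hle := w.pairs_le hts hs
    have hballot := w.two_mul_pairs_le hts
    have hmem : (w.pairs t s, a + b - (s - t) + w.pairs t s) ∈ trap a b :=
      mem_trap.2 (by omega)
    exact (le_iff_le_of_windowIdeal_eq (F := PeriodicWord.pairs)
      (fun w _ _ => w.pairs_rotate) neg_lt_sub_of_mem_trap (semiconj_trapIdeal hab) hww'
      hmem (by omega) (by ring)).1 le_rfl

lemma trapIdeal_injective (ha : 1 ≤ a) (hab : a ≤ b) :
    Function.Injective (trapIdeal (a := a) (b := b)) := by
  intro w w' hww'
  have hpairs : ∀ t s, 0 ≤ t → t ≤ s → s ≤ t + (a + b) → w.pairs t s = w'.pairs t s :=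
    fun t s ht hts hs => le_antisymm (pairs_le_pairs_of_trapIdeal_eq hab hww' ht hts hs)
      (pairs_le_pairs_of_trapIdeal_eq hab hww'.symm ht hts hs)
  refine PeriodicWord.ext_of_eventually (by omega) (a + b) fun q hq => ?_
  obtain ⟨t, rfl⟩ : ∃ t, q = t + (a + b) - 1 := ⟨q + 1 - (a + b), by ring⟩
  have hlast := w.pairs_period_sub (by omega) (by omega) t
  have hlast' := w'.pairs_period_sub (by omega) (by omega) t
  rw [hpairs t _ (by omega) (by omega) le_rfl, hpairs t _ (by omega) (by omega) (by omega),
    hlast'] at hlast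
  rw [sub_add_cancel]
  exact hlast.symm

lemma IsIdeal.exists_eq_filter_pairs {I : Finset (ℤ × ℤ)} (hI : IsIdeal (trap a b) I)
    (ha : 1 ≤ a) (hab : a ≤ b) : ∃ w : PeriodicWord (a + b) a,
      (trap a b).filter (fun x => x.1 ≤ w.pairs 0 (a + b - x.2 + x.1)) = I := by
  obtain ⟨c, hbounds, hstep, rfl⟩ := hI.exists_eq_filter_le (N := a + b) (n := a + b)
    (lo := fun _ => 0) (hi := fun p => min a (p / 2)) (by omega) (by omega) (by omega)
    (fun p i => by rw [mem_trap]; omega)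
  have h0 := hbounds 0 le_rfl (by omega)
  have hn := hbounds (a + b) (by omega) le_rfl
  obtain ⟨w, hw⟩ := PeriodicWord.exists_pairs_eq (by omega) (show c 0 = 0 by omega) hstep
    (fun p hp hpn => by have := hbounds p hp hpn; omega) (show c (a + b) ≤ a by omega) (by omega)
  refine ⟨w, Finset.filter_congr fun ⟨i, j⟩ hij => ?_⟩
  rw [mem_trap] at hij
  rw [hw _ (by omega) (by omega)]

lemma range_trapIdeal (ha : 1 ≤ a) (hab : a ≤ b) :
    Set.range (trapIdeal (a := a) (b := b)) = {I | IsIdeal (trap a b) I} := by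
  refine range_eq_of_subset_range (trapIdeal_injective ha hab) (finite_setOf_isIdeal _) ?_
    fun I hI => hI.exists_eq_filter_pairs ha hab
  rintro _ ⟨w, rfl⟩
  exact isIdeal_windowIdeal w.isWindowStatistic_pairs neg_lt_sub_of_mem_trap

end Trapezoid

/-- Hopkins' conjecture / main theorem: there is a bijection between
`J(𝓡(a,b))` and `J(𝓣(a,b))` that commutes with rowmotion; in particular
rowmotion on the two posets has the same orbit structure. -/
theorem rect_trap_rowmotion_equivariant_bijection (a b : ℤ) (ha : 1 ≤ a) (hab : a ≤ b) :
    ∃ φ : Finset (ℤ × ℤ) → Finset (ℤ × ℤ),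
      Set.BijOn φ {I | IsIdeal (rect a b) I} {I | IsIdeal (trap a b) I} ∧
      ∀ I : Finset (ℤ × ℤ), IsIdeal (rect a b) I →
        φ (row (rect a b) I) = row (trap a b) (φ I) := by
  have hb : 1 ≤ b := ha.trans hab
  obtain ⟨φ, hφ, hφ_row⟩ := exists_bijOn_range_of_semiconj (rectIdeal_injective ha hb)
    (trapIdeal_injective ha hab) semiconj_rectIdeal (semiconj_trapIdeal hab)
  rw [range_rectIdeal ha hb] at hφ hφ_row
  rw [range_trapIdeal ha hab] at hφ
  exact ⟨φ, hφ, hφ_row⟩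

end Stmt0
end
end

section
/- Let 1 ≤ a ≤ 3 and a ≤ b. For any toggle-on-antichains-symmetric probability distribution μ on J(𝓣(a,b)), the expected down-degree equals ab/(a+b): E[μ; ddeg] = ab/(a+b). -/
/-!
STATEMENT 10: For 1 ≤ a ≤ 3 and a ≤ b, every toggle-on-antichains-symmetric
probability distribution μ on J(𝓣(a,b)) has expected down-degree ab/(a+b).
-/

open scoped Classical

noncomputable section

namespace Stmt10

/-- The trapezoid poset `𝓣(a,b) = {(i,j) : 1 ≤ i ≤ a, i ≤ j ≤ a+b-i}`,
as a finite subset of `ℤ × ℤ` with the componentwise order. -/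
def trap (a b : ℤ) : Finset (ℤ × ℤ) :=
  (Finset.Icc (1, 1) (a, a + b - 1)).filter (fun p => p.1 ≤ p.2 ∧ p.2 ≤ a + b - p.1)

/-- `I` is an order ideal of the poset with ground set `P ⊆ ℤ × ℤ`. -/
def IsIdeal (P I : Finset (ℤ × ℤ)) : Prop :=
  I ⊆ P ∧ ∀ x ∈ I, ∀ y ∈ P, y ≤ x → y ∈ I

/-- `J(P)`: the set of order ideals of `P`. -/
def ideals (P : Finset (ℤ × ℤ)) : Finset (Finset (ℤ × ℤ)) :=
  P.powerset.filter (fun I => IsIdeal P I)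

/-- The down-degree of `I`: the number of maximal elements of `I`. -/
def ddeg (I : Finset (ℤ × ℤ)) : ℕ :=
  (I.filter (fun x => ∀ y ∈ I, x ≤ y → x = y)).card

/-- `𝒯_A⁺(I) = 1` if `A ∩ I = ∅` and `I ∪ A` is an order ideal, else `0`. -/
def togPlus (P A I : Finset (ℤ × ℤ)) : ℝ :=
  if (∀ x ∈ A, x ∉ I) ∧ IsIdeal P (I ∪ A) then 1 else 0

/-- `𝒯_A⁻(I) = 1` if `A ⊆ I` and `I \ A` is an order ideal, else `0`. -/
def togMinus (P A I : Finset (ℤ × ℤ)) : ℝ :=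
  if A ⊆ I ∧ IsIdeal P (I \ A) then 1 else 0

/-- `𝒯_A = 𝒯_A⁺ − 𝒯_A⁻`. -/
def tog (P A I : Finset (ℤ × ℤ)) : ℝ := togPlus P A I - togMinus P A I

/-- Expectation of the statistic `f` with respect to `μ` on `J(P)`. -/
def expect (P : Finset (ℤ × ℤ)) (μ : Finset (ℤ × ℤ) → ℝ) (f : Finset (ℤ × ℤ) → ℝ) : ℝ :=
  ∑ I ∈ ideals P, μ I * f I

/-- `μ` is a probability distribution on `J(P)`. -/
def IsDistribution (P : Finset (ℤ × ℤ)) (μ : Finset (ℤ × ℤ) → ℝ) : Prop :=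
  (∀ I ∈ ideals P, 0 ≤ μ I) ∧ ∑ I ∈ ideals P, μ I = 1

/-- `μ` is toggle-on-antichains-symmetric: `E[μ; 𝒯_A] = 0` for every antichain `A ⊆ P`. -/
def ToggleAntichainSymmetric (P : Finset (ℤ × ℤ)) (μ : Finset (ℤ × ℤ) → ℝ) : Prop :=
  ∀ A : Finset (ℤ × ℤ), A ⊆ P → IsAntichain (· ≤ ·) (A : Set (ℤ × ℤ)) →
    expect P μ (tog P A) = 0

/-- `μ` is toggle-symmetric: `E[μ; 𝒯_p⁺ − 𝒯_p⁻] = 0` for every `p ∈ P`. -/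
def ToggleSymmetric (P : Finset (ℤ × ℤ)) (μ : Finset (ℤ × ℤ) → ℝ) : Prop :=
  ∀ p ∈ P, expect P μ (tog P {p}) = 0

/-!
The condition `E[𝒯_A] = 0` says that the events "every element of `A` is maximal in `I`" and
"every element of `A` is minimal outside `I`" have the same probability. By Möbius inversion over
subsets, the antichain of maximal elements of `I` and the antichain of minimal elements outside `I`
are then equidistributed. The latter is the set of maximal elements of the rowmotion of `I`, so the
expectation of any statistic is invariant under rowmotion, and `E[ddeg] = ab/(a+b)` follows once
`(a+b) · ddeg - ab`, evaluated at the rowmotion of `I`, is written as the increment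
`F (rowmotion I) - F I` of some potential `F`.
For `a ≤ 3` such a potential is an explicit piecewise linear function of the row ends of `I`.
-/

section MoebiusInversion

variable {ι α R : Type*}

lemma exists_sum_powerset_eq [AddCommGroup R] (g : Finset α → R) :
    ∃ c : Finset α → R, ∀ X, ∑ A ∈ X.powerset, c A = g X := by
  let c : Finset α → R :=
    Finset.strongInduction fun X ih ↦ g X - ∑ A : X.ssubsets, ih A (Finset.mem_ssubsets.1 A.2)
  have hc (X : Finset α) : c X = g X - ∑ A ∈ X.ssubsets, c A := by
    rw [← Finset.sum_coe_sort]
    exact Finset.strongInduction_eq _ X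
  refine ⟨c, fun X ↦ ?_⟩
  rw [← Finset.add_sum_erase _ _ (Finset.mem_powerset_self X), hc X]
  exact sub_add_cancel _ _

lemma sum_mul_comp_eq_of_subset_indicator [DecidableEq α] [CommRing R] {s : Finset ι}
    {w : ι → R} {P : Finset α} {X Y : ι → Finset α} (hX : ∀ i ∈ s, X i ⊆ P) (hY : ∀ i ∈ s, Y i ⊆ P)
    (hXY : ∀ A ⊆ P, ∑ i ∈ s, w i * (if A ⊆ X i then 1 else 0) =
      ∑ i ∈ s, w i * (if A ⊆ Y i then 1 else 0)) (g : Finset α → R) :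
    ∑ i ∈ s, w i * g (X i) = ∑ i ∈ s, w i * g (Y i) := by
  obtain ⟨c, hc⟩ := exists_sum_powerset_eq g
  have expand {Z : ι → Finset α} (hZ : ∀ i ∈ s, Z i ⊆ P) : ∑ i ∈ s, w i * g (Z i) =
      ∑ A ∈ P.powerset, c A * ∑ i ∈ s, w i * (if A ⊆ Z i then 1 else 0) := by
    simp_rw [Finset.mul_sum]
    rw [Finset.sum_comm]
    refine Finset.sum_congr rfl fun i hi ↦ ?_
    have hfilter : P.powerset.filter (· ⊆ Z i) = (Z i).powerset := by
      ext A
      simpa only [Finset.mem_filter, Finset.mem_powerset, and_iff_right_iff_imp]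
        using fun hA ↦ hA.trans (hZ i hi)
    rw [← hc, ← hfilter, Finset.sum_filter, Finset.mul_sum]
    exact Finset.sum_congr rfl fun A _ ↦ by split_ifs <;> ring
  rw [expand hX, expand hY]
  exact Finset.sum_congr rfl fun A hA ↦ by rw [hXY A (Finset.mem_powerset.1 hA)]

end MoebiusInversion

section Extremal

variable {α : Type*} [PartialOrder α]

/-- The antichain of maximal elements of `S`, whose cardinality is `ddeg S`. -/
def maxElements (S : Finset α) : Finset α :=
  S.filter (Maximal (· ∈ S))

/-- The antichain of minimal elements of `S`; for an ideal `I` of `P`, the elements of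
`minElements (P \ I)` are those that can be toggled into `I`. -/
def minElements (S : Finset α) : Finset α :=
  S.filter (Minimal (· ∈ S))

/-- The order ideal of `P` generated by `A`. -/
def idealGenerated (P A : Finset α) : Finset α :=
  P.filter fun p ↦ ∃ q ∈ A, p ≤ q

lemma mem_maxElements {S : Finset α} {x : α} :
    x ∈ maxElements S ↔ Maximal (· ∈ S) x := by
  simpa only [maxElements, Finset.mem_filter, and_iff_right_iff_imp] using Maximal.prop

lemma mem_minElements {S : Finset α} {x : α} :
    x ∈ minElements S ↔ Minimal (· ∈ S) x := by
  simpa only [minElements, Finset.mem_filter, and_iff_right_iff_imp] using Minimal.prop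

lemma mem_idealGenerated {P A : Finset α} {x : α} :
    x ∈ idealGenerated P A ↔ x ∈ P ∧ ∃ y ∈ A, x ≤ y :=
  Finset.mem_filter

lemma isAntichain_maxElements (S : Finset α) :
    IsAntichain (· ≤ ·) (maxElements S : Set α) :=
  (setOfPred_maximal_antichain (· ∈ S)).subset fun _ ↦ mem_maxElements.1

lemma isAntichain_minElements (S : Finset α) :
    IsAntichain (· ≤ ·) (minElements S : Set α) :=
  (setOfPred_minimal_antichain (· ∈ S)).subset fun _ ↦ mem_minElements.1

end Extremal

section Rowmotion

variable {P I A : Finset (ℤ × ℤ)} {μ : Finset (ℤ × ℤ) → ℝ}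

/-- Rowmotion on `J(P)`: the ideal generated by the minimal elements of `P` outside `I`. -/
def rowmotion (P I : Finset (ℤ × ℤ)) : Finset (ℤ × ℤ) :=
  idealGenerated P (minElements (P \ I))

lemma mem_ideals : I ∈ ideals P ↔ IsIdeal P I := by
  rw [ideals, Finset.mem_filter, Finset.mem_powerset, and_iff_right_iff_imp]
  exact And.left

lemma ddeg_eq_card_maxElements (I : Finset (ℤ × ℤ)) : ddeg I = (maxElements I).card := by
  refine congrArg Finset.card (Finset.filter_congr fun x hx ↦ ?_)
  rw [maximal_iff]
  exact ⟨fun h ↦ ⟨hx, fun y hy hxy ↦ h y hy hxy⟩, fun h y hy hxy ↦ h.2 hy hxy⟩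

lemma IsIdeal.subset_maxElements_iff (hI : IsIdeal P I)
    (hA : IsAntichain (· ≤ ·) (A : Set (ℤ × ℤ))) :
    A ⊆ maxElements I ↔ A ⊆ I ∧ IsIdeal P (I \ A) := by
  constructor
  · intro h
    refine ⟨fun x hx ↦ (mem_maxElements.1 (h hx)).prop,
      Finset.sdiff_subset.trans hI.1, fun x hx y hy hyx ↦ ?_⟩
    obtain ⟨hxI, hxA⟩ := Finset.mem_sdiff.1 hx
    refine Finset.mem_sdiff.2 ⟨hI.2 x hxI y hy hyx, fun hyA ↦ hxA ?_⟩
    rwa [← (mem_maxElements.1 (h hyA)).eq_of_le hxI hyx]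
  · rintro ⟨hAI, hdiff⟩ x hx
    refine mem_maxElements.2 (maximal_iff.2 ⟨hAI hx, fun y hy hxy ↦ ?_⟩)
    by_contra hne
    have hyA : y ∉ A := fun hyA ↦ hne (hA.eq hx hyA hxy)
    have hx' := hdiff.2 y (Finset.mem_sdiff.2 ⟨hy, hyA⟩) x (hI.1 (hAI hx)) hxy
    exact (Finset.mem_sdiff.1 hx').2 hx

lemma IsIdeal.subset_minElements_sdiff_iff (hI : IsIdeal P I) (hAP : A ⊆ P)
    (hA : IsAntichain (· ≤ ·) (A : Set (ℤ × ℤ))) :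
    A ⊆ minElements (P \ I) ↔ (∀ x ∈ A, x ∉ I) ∧ IsIdeal P (I ∪ A) := by
  constructor
  · intro h
    refine ⟨fun x hx ↦ (Finset.mem_sdiff.1 (mem_minElements.1 (h hx)).prop).2,
      Finset.union_subset hI.1 hAP, fun x hx y hy hyx ↦ ?_⟩
    by_cases hyI : y ∈ I
    · exact Finset.mem_union_left _ hyI
    rcases Finset.mem_union.1 hx with hxI | hxA
    · exact absurd (hI.2 x hxI y hy hyx) hyI
    · refine Finset.mem_union_right _ ?_
      rwa [← (mem_minElements.1 (h hxA)).eq_of_ge (Finset.mem_sdiff.2 ⟨hy, hyI⟩) hyx]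
  · rintro ⟨hdisj, hunion⟩ x hx
    refine mem_minElements.2 (minimal_iff.2
      ⟨Finset.mem_sdiff.2 ⟨hAP hx, hdisj x hx⟩, fun y hy hyx ↦ ?_⟩)
    obtain ⟨hyP, hyI⟩ := Finset.mem_sdiff.1 hy
    have hyIA := hunion.2 x (Finset.mem_union_right _ hx) y hyP hyx
    exact (hA.eq ((Finset.mem_union.1 hyIA).resolve_left hyI) hx hyx).symm

lemma ToggleAntichainSymmetric.expect_subset_maxElements (hsym : ToggleAntichainSymmetric P μ)
    (hAP : A ⊆ P) :
    expect P μ (fun I ↦ if A ⊆ maxElements I then 1 else 0) =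
      expect P μ (fun I ↦ if A ⊆ minElements (P \ I) then 1 else 0) := by
  by_cases hA : IsAntichain (· ≤ ·) (A : Set (ℤ × ℤ))
  · rw [eq_comm, ← sub_eq_zero]
    refine Eq.trans ?_ (hsym A hAP hA)
    simp only [expect]
    rw [← Finset.sum_sub_distrib]
    refine Finset.sum_congr rfl fun I hI ↦ ?_
    rw [mem_ideals] at hI
    rw [← mul_sub, tog, togPlus, togMinus, if_congr (hI.subset_maxElements_iff hA) rfl rfl,
      if_congr (hI.subset_minElements_sdiff_iff hAP hA) rfl rfl]
  · have hmax (I : Finset (ℤ × ℤ)) : ¬ A ⊆ maxElements I := fun h ↦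
      hA ((isAntichain_maxElements I).subset (Finset.coe_subset.2 h))
    have hmin (I : Finset (ℤ × ℤ)) : ¬ A ⊆ minElements (P \ I) := fun h ↦
      hA ((isAntichain_minElements (P \ I)).subset (Finset.coe_subset.2 h))
    simp only [hmax, hmin]

lemma ToggleAntichainSymmetric.expect_comp_maxElements (hsym : ToggleAntichainSymmetric P μ)
    (g : Finset (ℤ × ℤ) → ℝ) :
    expect P μ (fun I ↦ g (maxElements I)) = expect P μ (fun I ↦ g (minElements (P \ I))) :=
  sum_mul_comp_eq_of_subset_indicator (X := maxElements) (Y := fun I ↦ minElements (P \ I))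
    (fun _ hI ↦ (Finset.filter_subset _ _).trans (mem_ideals.1 hI).1)
    (fun _ _ ↦ (Finset.filter_subset _ _).trans Finset.sdiff_subset)
    (fun _ hAP ↦ hsym.expect_subset_maxElements hAP) g

lemma isIdeal_idealGenerated (P A : Finset (ℤ × ℤ)) : IsIdeal P (idealGenerated P A) := by
  refine ⟨fun x hx ↦ (mem_idealGenerated.1 hx).1, fun x hx y hy hyx ↦ ?_⟩
  obtain ⟨-, q, hq, hxq⟩ := mem_idealGenerated.1 hx
  exact mem_idealGenerated.2 ⟨hy, q, hq, hyx.trans hxq⟩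

lemma isIdeal_rowmotion (P I : Finset (ℤ × ℤ)) : IsIdeal P (rowmotion P I) :=
  isIdeal_idealGenerated P _

lemma IsIdeal.idealGenerated_maxElements (hI : IsIdeal P I) :
    idealGenerated P (maxElements I) = I := by
  ext p
  rw [mem_idealGenerated]
  constructor
  · rintro ⟨hp, q, hq, hpq⟩
    exact hI.2 q (mem_maxElements.1 hq).prop p hp hpq
  · intro hp
    obtain ⟨q, hpq, hq⟩ := I.exists_le_maximal hp
    exact ⟨hI.1 hp, q, mem_maxElements.2 hq, hpq⟩

lemma ToggleAntichainSymmetric.expect_rowmotion (hsym : ToggleAntichainSymmetric P μ)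
    (F : Finset (ℤ × ℤ) → ℝ) :
    expect P μ (fun I ↦ F (rowmotion P I)) = expect P μ F := by
  refine (hsym.expect_comp_maxElements fun A ↦ F (idealGenerated P A)).symm.trans ?_
  refine Finset.sum_congr rfl fun I hI ↦ ?_
  simp only [(mem_ideals.1 hI).idealGenerated_maxElements]

lemma ToggleAntichainSymmetric.mul_expect_ddeg_eq (hsym : ToggleAntichainSymmetric P μ)
    (hμ : ∑ I ∈ ideals P, μ I = 1) {F : Finset (ℤ × ℤ) → ℤ} {n α : ℤ}
    (hF : ∀ I, IsIdeal P I →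
      F (rowmotion P I) - F I = n * (minElements (P \ I)).card - α) :
    n * expect P μ (fun I ↦ (ddeg I : ℝ)) = α := by
  have hddeg : expect P μ (fun I ↦ (ddeg I : ℝ)) =
      expect P μ (fun I ↦ ((minElements (P \ I)).card : ℝ)) := by
    simp only [ddeg_eq_card_maxElements]
    exact hsym.expect_comp_maxElements fun A ↦ (A.card : ℝ)
  have hsum : expect P μ (fun I ↦ (F (rowmotion P I) : ℝ)) - expect P μ (fun I ↦ (F I : ℝ)) =
      n * expect P μ (fun I ↦ ((minElements (P \ I)).card : ℝ)) - α := by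
    simp only [expect]
    rw [← Finset.sum_sub_distrib, ← mul_one (α : ℝ), ← hμ, Finset.mul_sum, Finset.mul_sum,
      ← Finset.sum_sub_distrib]
    refine Finset.sum_congr rfl fun I hI ↦ ?_
    have hFI : (F (rowmotion P I) : ℝ) - F I = n * (minElements (P \ I)).card - α := mod_cast
      hF I (mem_ideals.1 hI)
    linear_combination μ I * hFI
  rw [hddeg]
  linarith [hsym.expect_rowmotion fun I ↦ (F I : ℝ)]

end Rowmotion

section RowEnds

variable {a b i j : ℤ} {I : Finset (ℤ × ℤ)}

/-- The column of the last element of the ideal `I` in row `i` of a trapezoid, or `i - 1` if that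
row of `I` is empty (row `i` starts at column `i`). -/
def rowEnd (I : Finset (ℤ × ℤ)) (i : ℤ) : ℤ :=
  i - 1 + (I.filter fun p ↦ p.1 = i).card

/-- The cell following row `i` of `I` lies in `𝓣(a,b)` and, unless `i = 1`, the cell preceding it
in its column belongs to `I`; so for `1 ≤ i ≤ a` it can be added to `I`. -/
def Addable (a b : ℤ) (I : Finset (ℤ × ℤ)) (i : ℤ) : Prop :=
  rowEnd I i < a + b - i ∧ (1 < i → rowEnd I i < rowEnd I (i - 1))

lemma addable_one : Addable a b I 1 ↔ rowEnd I 1 < a + b - 1 := by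
  simp only [Addable, lt_irrefl, false_imp_iff, and_true]

lemma addable_iff_of_one_lt (hi : 1 < i) :
    Addable a b I i ↔ rowEnd I i < a + b - i ∧ rowEnd I i < rowEnd I (i - 1) := by
  simp only [Addable, hi, true_imp_iff]

lemma mem_trap : (i, j) ∈ trap a b ↔ 1 ≤ i ∧ i ≤ a ∧ i ≤ j ∧ j ≤ a + b - i := by
  simp only [trap, Finset.mem_filter, Finset.mem_Icc, Prod.mk_le_mk]
  omega

lemma sub_one_le_rowEnd (I : Finset (ℤ × ℤ)) (i : ℤ) : i - 1 ≤ rowEnd I i :=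
  le_add_of_nonneg_right (Int.natCast_nonneg _)

lemma rowEnd_eq {c : ℤ} (hc : i - 1 ≤ c) (h : ∀ j, (i, j) ∈ I ↔ i ≤ j ∧ j ≤ c) :
    rowEnd I i = c := by
  have hrow : I.filter (fun p ↦ p.1 = i) = (Finset.Icc i c).image (Prod.mk i) := by
    ext ⟨k, j⟩
    simp only [Finset.mem_filter, Finset.mem_image, Finset.mem_Icc, Prod.mk.injEq]
    constructor
    · rintro ⟨hj, rfl⟩
      exact ⟨j, (h j).1 hj, rfl, rfl⟩
    · rintro ⟨j, hj, rfl, rfl⟩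
      exact ⟨(h j).2 hj, rfl⟩
  rw [rowEnd, hrow, Finset.card_image_of_injective _ (Prod.mk_right_injective i), Int.card_Icc]
  omega

lemma IsIdeal.mem_iff_le_rowEnd (hI : IsIdeal (trap a b) I) :
    (i, j) ∈ I ↔ i ≤ j ∧ j ≤ rowEnd I i := by
  suffices h : ∃ c, i - 1 ≤ c ∧ ∀ j, (i, j) ∈ I ↔ i ≤ j ∧ j ≤ c by
    obtain ⟨c, hc, h⟩ := h
    rw [rowEnd_eq hc h, h]
  by_cases hne : ∃ j, (i, j) ∈ I
  · obtain ⟨c, hc, hmax⟩ := Int.exists_greatest_of_bdd (P := fun j ↦ (i, j) ∈ I)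
      ⟨a + b - i, fun j hj ↦ (mem_trap.1 (hI.1 hj)).2.2.2⟩ hne
    have hct := mem_trap.1 (hI.1 hc)
    refine ⟨c, by omega, fun j ↦
      ⟨fun hj ↦ ⟨(mem_trap.1 (hI.1 hj)).2.2.1, hmax j hj⟩, fun hj ↦ ?_⟩⟩
    exact hI.2 _ hc _ (mem_trap.2 (by omega)) ⟨le_rfl, hj.2⟩
  · exact ⟨i - 1, le_rfl, fun j ↦ ⟨fun hj ↦ (hne ⟨j, hj⟩).elim, fun hj ↦ by omega⟩⟩

lemma IsIdeal.rowEnd_le (hI : IsIdeal (trap a b) I) (hab : a ≤ b) (hia : i ≤ a) :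
    rowEnd I i ≤ a + b - i := by
  by_contra! hlt
  have hmem : (i, rowEnd I i) ∈ I := hI.mem_iff_le_rowEnd.2 (by omega)
  have := mem_trap.1 (hI.1 hmem)
  omega

lemma IsIdeal.rowEnd_eq_of_lt (hI : IsIdeal (trap a b) I) (hai : a < i) :
    rowEnd I i = i - 1 := by
  have hle := sub_one_le_rowEnd I i
  by_contra hne
  have hmem : (i, rowEnd I i) ∈ I := hI.mem_iff_le_rowEnd.2 (by omega)
  have := mem_trap.1 (hI.1 hmem)
  omega

lemma IsIdeal.rowEnd_succ (hI : IsIdeal (trap a b) I) (hi : 1 ≤ i) :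
    rowEnd I (i + 1) = i ∨ rowEnd I (i + 1) ≤ rowEnd I i := by
  have hle := sub_one_le_rowEnd I (i + 1)
  refine or_iff_not_imp_left.2 fun hne ↦ ?_
  have hmem : (i + 1, rowEnd I (i + 1)) ∈ I := hI.mem_iff_le_rowEnd.2 (by omega)
  have ht := mem_trap.1 (hI.1 hmem)
  have hmem' := hI.2 _ hmem (i, rowEnd I (i + 1)) (mem_trap.2 (by omega)) ⟨by simp, le_rfl⟩
  exact (hI.mem_iff_le_rowEnd.1 hmem').2

lemma IsIdeal.mem_of_lt_of_addable (hI : IsIdeal (trap a b) I) {k : ℤ} (hk : Addable a b I k)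
    (hij : (i, j) ∈ trap a b) (hik : i < k) (hjk : j ≤ rowEnd I k + 1) : (i, j) ∈ I := by
  have ht := mem_trap.1 hij
  have hlt := hk.2 (by omega)
  have hle := sub_one_le_rowEnd I k
  have hmem : (k - 1, rowEnd I k + 1) ∈ I := hI.mem_iff_le_rowEnd.2 (by omega)
  exact hI.2 _ hmem _ hij ⟨by simp only; omega, hjk⟩

lemma IsIdeal.mem_minElements_sdiff (hI : IsIdeal (trap a b) I) :
    (i, j) ∈ minElements (trap a b \ I) ↔
      1 ≤ i ∧ i ≤ a ∧ Addable a b I i ∧ j = rowEnd I i + 1 := by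
  rw [mem_minElements, minimal_iff, Finset.mem_sdiff, hI.mem_iff_le_rowEnd, mem_trap]
  constructor
  · rintro ⟨⟨ht, hlt⟩, hmin⟩
    have hmem {p : ℤ × ℤ} (hp : p ∈ trap a b) (hlt : p < (i, j)) : p ∈ I := by
      by_contra hpI
      exact hlt.ne' (hmin (Finset.mem_sdiff.2 ⟨hp, hpI⟩) hlt.le)
    have hj : j = rowEnd I i + 1 := by
      have hle := sub_one_le_rowEnd I i
      by_contra hne
      have := hI.mem_iff_le_rowEnd.1
        (hmem (mem_trap.2 (by omega)) (Prod.mk_lt_mk_iff_right.2 (sub_one_lt j)))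
      omega
    refine ⟨ht.1, ht.2.1, ⟨by omega, fun hi ↦ ?_⟩, hj⟩
    have := hI.mem_iff_le_rowEnd.1
      (hmem (mem_trap.2 (by omega)) (Prod.mk_lt_mk_iff_left.2 (sub_one_lt i)))
    omega
  · rintro ⟨hi, hia, hadd, rfl⟩
    have hle := sub_one_le_rowEnd I i
    have hlt := hadd.1
    refine ⟨by omega, ?_⟩
    rintro ⟨k, l⟩ hkl ⟨hki, hlj⟩
    simp only at hki hlj
    obtain ⟨hkl, hkl'⟩ := Finset.mem_sdiff.1 hkl
    obtain rfl : k = i := by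
      by_contra hne
      exact hkl' (hI.mem_of_lt_of_addable hadd hkl (by omega) hlj)
    have ht := mem_trap.1 hkl
    rw [hI.mem_iff_le_rowEnd] at hkl'
    rw [Prod.mk.injEq]
    omega

lemma IsIdeal.card_minElements_sdiff (hI : IsIdeal (trap a b) I) :
    ((minElements (trap a b \ I)).card : ℤ) =
      ∑ i ∈ Finset.Icc 1 a, if Addable a b I i then 1 else 0 := by
  have himage : minElements (trap a b \ I) =
      ((Finset.Icc 1 a).filter (Addable a b I)).image fun i ↦ (i, rowEnd I i + 1) := by
    ext ⟨i, j⟩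
    simp only [hI.mem_minElements_sdiff, Finset.mem_image, Finset.mem_filter, Finset.mem_Icc,
      Prod.mk.injEq]
    constructor
    · rintro ⟨hi, hia, hadd, rfl⟩
      exact ⟨i, ⟨⟨hi, hia⟩, hadd⟩, rfl, rfl⟩
    · rintro ⟨i, ⟨⟨hi, hia⟩, hadd⟩, rfl, rfl⟩
      exact ⟨hi, hia, hadd, rfl⟩
  rw [himage, Finset.card_image_of_injective _ fun _ _ h ↦ (Prod.mk.inj h).1,
    Finset.natCast_card_filter]

lemma IsIdeal.mem_rowmotion (hI : IsIdeal (trap a b) I) :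
    (i, j) ∈ rowmotion (trap a b) I ↔ (i, j) ∈ trap a b ∧
      ∃ k, i ≤ k ∧ k ≤ a ∧ Addable a b I k ∧ j ≤ rowEnd I k + 1 := by
  simp only [rowmotion, mem_idealGenerated, Prod.exists, Prod.mk_le_mk,
    hI.mem_minElements_sdiff]
  refine and_congr_right fun ht ↦ ⟨?_, ?_⟩
  · rintro ⟨k, _, ⟨-, hka, hk, rfl⟩, hik, hjk⟩
    exact ⟨k, hik, hka, hk, hjk⟩
  · rintro ⟨k, hik, hka, hk, hjk⟩
    exact ⟨k, _, ⟨(mem_trap.1 ht).1.trans hik, hka, hk, rfl⟩, hik, hjk⟩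

lemma IsIdeal.rowEnd_rowmotion_of_addable (hI : IsIdeal (trap a b) I) (hi : 1 ≤ i) (hia : i ≤ a)
    (hadd : Addable a b I i) : rowEnd (rowmotion (trap a b) I) i = rowEnd I i + 1 := by
  have hle := sub_one_le_rowEnd I i
  refine rowEnd_eq (by omega) fun j ↦ ?_
  rw [hI.mem_rowmotion]
  constructor
  · rintro ⟨ht, k, hik, -, hk, hjk⟩
    refine ⟨(mem_trap.1 ht).2.2.1, ?_⟩
    obtain rfl | hlt := hik.eq_or_lt
    · exact hjk
    · have := hI.mem_iff_le_rowEnd.1 (hI.mem_of_lt_of_addable hk ht hlt hjk)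
      omega
  · rintro ⟨hij, hj⟩
    have hlt := hadd.1
    exact ⟨mem_trap.2 (by omega), i, le_rfl, hia, hadd, hj⟩

lemma IsIdeal.rowEnd_rowmotion_of_not_addable (hI : IsIdeal (trap a b) I) (hi : 1 ≤ i)
    (hia : i ≤ a) (hadd : ¬ Addable a b I i) :
    rowEnd (rowmotion (trap a b) I) i =
      if rowEnd (rowmotion (trap a b) I) (i + 1) = i then i - 1
      else rowEnd (rowmotion (trap a b) I) (i + 1) := by
  have hle := sub_one_le_rowEnd (rowmotion (trap a b) I) (i + 1)
  refine rowEnd_eq (by split_ifs <;> omega) fun j ↦ ?_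
  have hnext : (i, j) ∈ rowmotion (trap a b) I ↔
      i ≤ j ∧ (i + 1, max (i + 1) j) ∈ rowmotion (trap a b) I := by
    rw [hI.mem_rowmotion, hI.mem_rowmotion, mem_trap, mem_trap]
    constructor
    · rintro ⟨ht, k, hik, hka, hk, hjk⟩
      have hne : i ≠ k := by
        rintro rfl
        exact hadd hk
      have hk' := sub_one_le_rowEnd I k
      have hlt := hk.1
      exact ⟨by omega, by omega, k, by omega, hka, hk, by omega⟩
    · rintro ⟨hij, ht, k, hik, hka, hk, hjk⟩
      exact ⟨by omega, k, by omega, hka, hk, by omega⟩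
  rw [hnext, (isIdeal_rowmotion _ _).mem_iff_le_rowEnd]
  split_ifs <;> omega

lemma IsIdeal.rowEnd_rowmotion (hI : IsIdeal (trap a b) I) (hi : 1 ≤ i) (hia : i ≤ a) :
    rowEnd (rowmotion (trap a b) I) i =
      if Addable a b I i then rowEnd I i + 1
      else if rowEnd (rowmotion (trap a b) I) (i + 1) = i then i - 1
      else rowEnd (rowmotion (trap a b) I) (i + 1) := by
  split_ifs with hadd hend
  · exact hI.rowEnd_rowmotion_of_addable hi hia hadd
  · rw [hI.rowEnd_rowmotion_of_not_addable hi hia hadd, if_pos hend]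
  · rw [hI.rowEnd_rowmotion_of_not_addable hi hia hadd, if_neg hend]

lemma IsIdeal.rowEnd_rowmotion_last (hI : IsIdeal (trap a b) I) (ha : 1 ≤ a) :
    rowEnd (rowmotion (trap a b) I) a = if Addable a b I a then rowEnd I a + 1 else a - 1 := by
  rw [hI.rowEnd_rowmotion ha le_rfl,
    (isIdeal_rowmotion _ _).rowEnd_eq_of_lt (lt_add_one a), if_pos (add_sub_cancel_right a 1)]

end RowEnds

section Potentials

variable {b : ℤ} {I : Finset (ℤ × ℤ)}

/-- The potential for `a = 2`, in terms of `n = a + b` and the row ends `x`, `y` of an ideal. -/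
def potentialTwo (n x y : ℤ) : ℤ :=
  if x = 0 then 2 * n - 2
  else 2 * x + if y < x then 2 * y else n

/-- The potential for `a = 3`, in terms of `n = a + b` and the row ends `x`, `y`, `z` of an ideal.
On an ideal whose maximal elements avoid the diagonal and the corner `(1, n - 1)`, it is `3` times
the sum of the columns of these elements plus a constant depending only on their rows. -/
def potentialThree (n x y z : ℤ) : ℤ :=
  if x = 0 then 6 * n - 9
  else if y = 1 ∧ 2 ≤ x then 3 * x + if x = n - 1 then 3 * n - 3 else 2 * n + 3
  else 3 * x + (if y < x then 3 * y else 2 * n) +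
    if z < y then 3 * z else if y < x then n + 3 else 2 * n - 3

lemma potentialTwo_sub {n x y x' y' : ℤ} {p q : Prop}
    (hx : 0 ≤ x ∧ x ≤ n - 1) (hy : 1 ≤ y ∧ y ≤ n - 2)
    (hp : p ↔ x < n - 1) (hq : q ↔ y < n - 2 ∧ y < x)
    (hx' : x' = if p then x + 1 else if y' = 1 then 0 else y')
    (hy' : y' = if q then y + 1 else 1) :
    potentialTwo n x' y' - potentialTwo n x y =
      n * ((if p then 1 else 0) + if q then 1 else 0) - 2 * (n - 2) := by
  unfold potentialTwo
  by_cases p <;> by_cases q <;> grind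

lemma potentialThree_sub {n x y z x' y' z' : ℤ} {p q r : Prop}
    (hx : 0 ≤ x ∧ x ≤ n - 1) (hy : 1 ≤ y ∧ y ≤ n - 2) (hz : 2 ≤ z ∧ z ≤ n - 3)
    (hyx : y = 1 ∨ y ≤ x)
    (hp : p ↔ x < n - 1) (hq : q ↔ y < n - 2 ∧ y < x) (hr : r ↔ z < n - 3 ∧ z < y)
    (hx' : x' = if p then x + 1 else if y' = 1 then 0 else y')
    (hy' : y' = if q then y + 1 else if z' = 2 then 1 else z')
    (hz' : z' = if r then z + 1 else 2) :
    potentialThree n x' y' z' - potentialThree n x y z =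
      n * ((if p then 1 else 0) + ((if q then 1 else 0) + if r then 1 else 0)) - 3 * (n - 3) := by
  unfold potentialThree
  by_cases p <;> by_cases q <;> by_cases r <;> grind

lemma IsIdeal.rowEnd_rowmotion_sub (hI : IsIdeal (trap 1 b) I) (hb : 1 ≤ b) :
    rowEnd (rowmotion (trap 1 b) I) 1 - rowEnd I 1 =
      (1 + b) * (minElements (trap 1 b \ I)).card - 1 * b := by
  have hle := hI.rowEnd_le hb le_rfl
  have hrows : Finset.Icc (1 : ℤ) 1 = {1} := rfl
  rw [hI.rowEnd_rowmotion_last le_rfl, hI.card_minElements_sdiff, hrows, Finset.sum_singleton,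
    if_congr addable_one rfl rfl, if_congr addable_one rfl rfl]
  split_ifs <;> omega

lemma IsIdeal.potentialTwo_rowmotion_sub (hI : IsIdeal (trap 2 b) I) (hb : 2 ≤ b) :
    potentialTwo (2 + b) (rowEnd (rowmotion (trap 2 b) I) 1) (rowEnd (rowmotion (trap 2 b) I) 2) -
        potentialTwo (2 + b) (rowEnd I 1) (rowEnd I 2) =
      (2 + b) * (minElements (trap 2 b \ I)).card - 2 * b := by
  have hrows : Finset.Icc (1 : ℤ) 2 = {1, 2} := rfl
  rw [hI.card_minElements_sdiff, hrows, Finset.sum_pair (by decide)]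
  refine (potentialTwo_sub
    ⟨sub_one_le_rowEnd I 1, hI.rowEnd_le hb (by decide)⟩
    ⟨sub_one_le_rowEnd I 2, hI.rowEnd_le hb le_rfl⟩
    addable_one (addable_iff_of_one_lt (by decide))
    (hI.rowEnd_rowmotion le_rfl (by decide)) (hI.rowEnd_rowmotion_last (by decide))).trans ?_
  rw [add_sub_cancel_left]

lemma IsIdeal.potentialThree_rowmotion_sub (hI : IsIdeal (trap 3 b) I) (hb : 3 ≤ b) :
    potentialThree (3 + b) (rowEnd (rowmotion (trap 3 b) I) 1)
        (rowEnd (rowmotion (trap 3 b) I) 2) (rowEnd (rowmotion (trap 3 b) I) 3) -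
        potentialThree (3 + b) (rowEnd I 1) (rowEnd I 2) (rowEnd I 3) =
      (3 + b) * (minElements (trap 3 b \ I)).card - 3 * b := by
  have hrows : Finset.Icc (1 : ℤ) 3 = {1, 2, 3} := rfl
  rw [hI.card_minElements_sdiff, hrows, Finset.sum_insert (by decide), Finset.sum_pair (by decide)]
  refine (potentialThree_sub
    ⟨sub_one_le_rowEnd I 1, hI.rowEnd_le hb (by decide)⟩
    ⟨sub_one_le_rowEnd I 2, hI.rowEnd_le hb (by decide)⟩
    ⟨sub_one_le_rowEnd I 3, hI.rowEnd_le hb le_rfl⟩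
    (hI.rowEnd_succ le_rfl)
    addable_one (addable_iff_of_one_lt (by decide)) (addable_iff_of_one_lt (by decide))
    (hI.rowEnd_rowmotion le_rfl (by decide)) (hI.rowEnd_rowmotion (by decide) (by decide))
    (hI.rowEnd_rowmotion_last (by decide))).trans ?_
  rw [add_sub_cancel_left]

end Potentials

theorem expected_ddeg_eq_general (a b : ℤ) (ha : 1 ≤ a) (ha3 : a ≤ 3) (hab : a ≤ b)
    (μ : Finset (ℤ × ℤ) → ℝ) (hμ : ∑ I ∈ ideals (trap a b), μ I = 1)
    (hsym : ToggleAntichainSymmetric (trap a b) μ) :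
    expect (trap a b) μ (fun I => (ddeg I : ℝ)) = (a : ℝ) * b / (a + b) := by
  suffices h : ((a + b : ℤ) : ℝ) * expect (trap a b) μ (fun I ↦ (ddeg I : ℝ)) = (a * b : ℤ) by
    have hn : ((a + b : ℤ) : ℝ) ≠ 0 := by
      rw [Int.cast_ne_zero]
      omega
    push_cast at h hn
    rw [eq_div_iff hn, mul_comm, h]
  obtain rfl | rfl | rfl : a = 1 ∨ a = 2 ∨ a = 3 := by omega
  · exact hsym.mul_expect_ddeg_eq (F := (rowEnd · 1)) hμ fun _ hI ↦ hI.rowEnd_rowmotion_sub hab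
  · exact hsym.mul_expect_ddeg_eq
      (F := fun I ↦ potentialTwo (2 + b) (rowEnd I 1) (rowEnd I 2)) hμ
      fun _ hI ↦ hI.potentialTwo_rowmotion_sub hab
  · exact hsym.mul_expect_ddeg_eq
      (F := fun I ↦ potentialThree (3 + b) (rowEnd I 1) (rowEnd I 2) (rowEnd I 3)) hμ
      fun _ hI ↦ hI.potentialThree_rowmotion_sub hab

/-- The expected down-degree is `ab/(a+b)` for any toggle-on-antichains-symmetric
distribution on the order ideals of `𝓣(a,b)` with `a ≤ 3`. -/
theorem expected_ddeg_eq (a b : ℤ) (ha : 1 ≤ a) (ha3 : a ≤ 3) (hab : a ≤ b)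
    (μ : Finset (ℤ × ℤ) → ℝ) (hμ : IsDistribution (trap a b) μ)
    (hsym : ToggleAntichainSymmetric (trap a b) μ) :
    expect (trap a b) μ (fun I => (ddeg I : ℝ)) = (a : ℝ) * b / (a + b) := by
  exact expected_ddeg_eq_general a b ha ha3 hab μ hμ.2 hsym

end Stmt10
end
end

section
/- Let 1 ≤ a ≤ 3 and a ≤ b. Down-degree is homomesic with respect to rowmotion on J(𝓣(a,b)): for every order ideal I of 𝓣(a,b) and every n ≥ 1 with row^n(I) = I, the orbit average (1/n) Σ_{k=0}^{n−1} ddeg(row^k(I)) equals ab/(a+b). -/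
/-!
STATEMENT 11: For 1 ≤ a ≤ 3 and a ≤ b, down-degree is homomesic with respect
to rowmotion on J(𝓣(a,b)): every rowmotion orbit has average down-degree ab/(a+b).
-/

open scoped Classical

noncomputable section

namespace Stmt11

/-- The trapezoid poset `𝓣(a,b) = {(i,j) : 1 ≤ i ≤ a, i ≤ j ≤ a+b-i}`,
as a finite subset of `ℤ × ℤ` with the componentwise order. -/
def trap (a b : ℤ) : Finset (ℤ × ℤ) :=
  (Finset.Icc (1, 1) (a, a + b - 1)).filter (fun p => p.1 ≤ p.2 ∧ p.2 ≤ a + b - p.1)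

/-- `I` is an order ideal of the poset with ground set `P ⊆ ℤ × ℤ`. -/
def IsIdeal (P I : Finset (ℤ × ℤ)) : Prop :=
  I ⊆ P ∧ ∀ x ∈ I, ∀ y ∈ P, y ≤ x → y ∈ I

/-- `J(P)`: the set of order ideals of `P`. -/
def ideals (P : Finset (ℤ × ℤ)) : Finset (Finset (ℤ × ℤ)) :=
  P.powerset.filter (fun I => IsIdeal P I)

/-- The down-degree of `I`: the number of maximal elements of `I`. -/
def ddeg (I : Finset (ℤ × ℤ)) : ℕ :=
  (I.filter (fun x => ∀ y ∈ I, x ≤ y → x = y)).card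

/-- `𝒯_A⁺(I) = 1` if `A ∩ I = ∅` and `I ∪ A` is an order ideal, else `0`. -/
def togPlus (P A I : Finset (ℤ × ℤ)) : ℝ :=
  if (∀ x ∈ A, x ∉ I) ∧ IsIdeal P (I ∪ A) then 1 else 0

/-- `𝒯_A⁻(I) = 1` if `A ⊆ I` and `I \ A` is an order ideal, else `0`. -/
def togMinus (P A I : Finset (ℤ × ℤ)) : ℝ :=
  if A ⊆ I ∧ IsIdeal P (I \ A) then 1 else 0

/-- `𝒯_A = 𝒯_A⁺ − 𝒯_A⁻`. -/
def tog (P A I : Finset (ℤ × ℤ)) : ℝ := togPlus P A I - togMinus P A I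

/-- Expectation of the statistic `f` with respect to `μ` on `J(P)`. -/
def expect (P : Finset (ℤ × ℤ)) (μ : Finset (ℤ × ℤ) → ℝ) (f : Finset (ℤ × ℤ) → ℝ) : ℝ :=
  ∑ I ∈ ideals P, μ I * f I

/-- `μ` is a probability distribution on `J(P)`. -/
def IsDistribution (P : Finset (ℤ × ℤ)) (μ : Finset (ℤ × ℤ) → ℝ) : Prop :=
  (∀ I ∈ ideals P, 0 ≤ μ I) ∧ ∑ I ∈ ideals P, μ I = 1

/-- `μ` is toggle-on-antichains-symmetric: `E[μ; 𝒯_A] = 0` for every antichain `A ⊆ P`. -/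
def ToggleAntichainSymmetric (P : Finset (ℤ × ℤ)) (μ : Finset (ℤ × ℤ) → ℝ) : Prop :=
  ∀ A : Finset (ℤ × ℤ), A ⊆ P → IsAntichain (· ≤ ·) (A : Set (ℤ × ℤ)) →
    expect P μ (tog P A) = 0

/-- `μ` is toggle-symmetric: `E[μ; 𝒯_p⁺ − 𝒯_p⁻] = 0` for every `p ∈ P`. -/
def ToggleSymmetric (P : Finset (ℤ × ℤ)) (μ : Finset (ℤ × ℤ) → ℝ) : Prop :=
  ∀ p ∈ P, expect P μ (tog P {p}) = 0


/-- Rowmotion on order ideals of the poset with ground set `P`: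
`row P I` is the order ideal generated by the minimal elements of `P \ I`. -/
def row (P I : Finset (ℤ × ℤ)) : Finset (ℤ × ℤ) :=
  P.filter (fun x => ∃ m ∈ P, m ∉ I ∧ (∀ y ∈ P, y ∉ I → y ≤ m → y = m) ∧ x ≤ m)

/-!
Since the maximal elements of `row I` are the minimal elements of the complement of `I`, every
statistic `w (minOut I) - w (maxElts I)` sums to zero over a rowmotion orbit. A suitable linear
weight on the elements of `𝓣(a,b)`, corrected on the diagonal, turns this difference into
`(a + b) * ddeg I - a * b + (b - a) * boundaryDefect I`: row by row the contributions telescope.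
So homomesy amounts to the vanishing of the orbit sums of `boundaryDefect`, unless `a = b`, when
its coefficient is zero. For `a ≤ 3` these vanish because `boundaryDefect` is itself of the form
`w (minOut I) - w (maxElts I)`.
-/

section Rowmotion

/-- The set of maximal elements of `I`. -/
def maxElts (I : Finset (ℤ × ℤ)) : Finset (ℤ × ℤ) :=
  {x ∈ I | ∀ y ∈ I, x ≤ y → x = y}

/-- The minimal elements of `P \ I`, which generate the order ideal `row P I`. -/
def minOut (P I : Finset (ℤ × ℤ)) : Finset (ℤ × ℤ) :=
  {m ∈ P | m ∉ I ∧ ∀ y ∈ P, y ∉ I → y ≤ m → y = m}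

variable {P I : Finset (ℤ × ℤ)}

lemma mem_maxElts {x : ℤ × ℤ} : x ∈ maxElts I ↔ x ∈ I ∧ ∀ y ∈ I, x ≤ y → x = y :=
  Finset.mem_filter

lemma mem_minOut {m : ℤ × ℤ} :
    m ∈ minOut P I ↔ m ∈ P ∧ m ∉ I ∧ ∀ y ∈ P, y ∉ I → y ≤ m → y = m :=
  Finset.mem_filter

lemma ddeg_eq_card_maxElts (I : Finset (ℤ × ℤ)) : ddeg I = (maxElts I).card :=
  rfl

lemma mem_row {x : ℤ × ℤ} : x ∈ row P I ↔ x ∈ P ∧ ∃ m ∈ minOut P I, x ≤ m := by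
  simp only [row, Finset.mem_filter, mem_minOut, and_assoc]

lemma isIdeal_row (P I : Finset (ℤ × ℤ)) : IsIdeal P (row P I) := by
  refine ⟨Finset.filter_subset _ _, fun x hx y hy hyx => ?_⟩
  obtain ⟨-, m, hm, hxm⟩ := mem_row.1 hx
  exact mem_row.2 ⟨hy, m, hm, hyx.trans hxm⟩

lemma isIdeal_iterate_row (hI : IsIdeal P I) (k : ℕ) : IsIdeal P ((row P)^[k] I) := by
  cases k with
  | zero => exact hI
  | succ k => rw [Function.iterate_succ_apply']; exact isIdeal_row P _

lemma minOut_subset_row : minOut P I ⊆ row P I := fun m hm =>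
  mem_row.2 ⟨(mem_minOut.1 hm).1, m, hm, le_rfl⟩

lemma maxElts_row (P I : Finset (ℤ × ℤ)) : maxElts (row P I) = minOut P I := by
  ext x
  rw [mem_maxElts]
  constructor
  · rintro ⟨hx, hmax⟩
    obtain ⟨-, m, hm, hxm⟩ := mem_row.1 hx
    rwa [hmax m (minOut_subset_row hm) hxm]
  · refine fun hx => ⟨minOut_subset_row hx, fun y hy hxy => ?_⟩
    obtain ⟨-, m, hm, hym⟩ := mem_row.1 hy
    obtain ⟨hxP, hxI, -⟩ := mem_minOut.1 hx
    have hxm : x = m := (mem_minOut.1 hm).2.2 x hxP hxI (hxy.trans hym)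
    exact le_antisymm hxy (hxm ▸ hym)

theorem sum_iterate_row_eq_zero {M : Type*} [AddCommGroup M] {f w : Finset (ℤ × ℤ) → M}
    (hf : ∀ J, IsIdeal P J → f J = w (minOut P J) - w (maxElts J))
    (hI : IsIdeal P I) {n : ℕ} (hfix : (row P)^[n] I = I) :
    ∑ k ∈ Finset.range n, f ((row P)^[k] I) = 0 := by
  have hstep (k : ℕ) : f ((row P)^[k] I) =
      w (maxElts ((row P)^[k + 1] I)) - w (maxElts ((row P)^[k] I)) := by
    rw [hf _ (isIdeal_iterate_row hI k), Function.iterate_succ_apply', maxElts_row]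
  calc ∑ k ∈ Finset.range n, f ((row P)^[k] I)
      = w (maxElts ((row P)^[n] I)) - w (maxElts ((row P)^[0] I)) := by
        simp only [hstep]
        exact Finset.sum_range_sub (fun k => w (maxElts ((row P)^[k] I))) n
    _ = 0 := by rw [hfix, Function.iterate_zero_apply, sub_self]

end Rowmotion

section Intervals

lemma eq_Icc_of_forall_le_mem {S : Finset ℤ} {l : ℤ} (hl : ∀ j ∈ S, l ≤ j)
    (hS : ∀ k ∈ S, ∀ j, l ≤ j → j ≤ k → j ∈ S) : S = Finset.Icc l (l - 1 + S.card) := by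
  rcases S.eq_empty_or_nonempty with rfl | hne
  · simp
  · obtain ⟨m, hlm, hm⟩ : ∃ m, l ≤ m ∧ S = Finset.Icc l m := by
      refine ⟨S.max' hne, hl _ (S.max'_mem hne), ?_⟩
      ext j
      rw [Finset.mem_Icc]
      exact ⟨fun hj => ⟨hl j hj, S.le_max' j hj⟩, fun hj => hS _ (S.max'_mem hne) j hj.1 hj.2⟩
    rw [hm, Int.card_Icc, Int.toNat_of_nonneg (by omega)]
    ring_nf

lemma sum_Icc_one_sub {a : ℤ} (ha : 0 ≤ a) (f : ℤ → ℤ) :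
    ∑ i ∈ Finset.Icc 1 a, (f i - f (i + 1)) = f 1 - f (a + 1) := by
  induction a, ha using Int.leInduction with
  | base => simp
  | succ a ha ih =>
    have hIcc : Finset.Icc 1 (a + 1) = insert (a + 1) (Finset.Icc 1 a) := by
      ext i
      simp only [Finset.mem_insert, Finset.mem_Icc]
      omega
    rw [hIcc, Finset.sum_insert (by simp), ih]
    ring

end Intervals

section Trapezoid

variable {a b i j : ℤ} {I : Finset (ℤ × ℤ)}

lemma mem_trap : (i, j) ∈ trap a b ↔ 1 ≤ i ∧ i ≤ a ∧ i ≤ j ∧ j ≤ a + b - i := by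
  simp only [trap, Finset.mem_filter, Finset.mem_Icc, Prod.mk_le_mk]
  omega

/-- The second coordinate of the last element of `I` in row `i` of a trapezoid, with the value
`i - 1` when `I` does not meet that row. -/
def rowEnd (I : Finset (ℤ × ℤ)) (i : ℤ) : ℤ :=
  i - 1 + ({x ∈ I | x.1 = i} : Finset (ℤ × ℤ)).card

lemma mem_iff_le_rowEnd (hI : IsIdeal (trap a b) I) : (i, j) ∈ I ↔ i ≤ j ∧ j ≤ rowEnd I i := by
  set S : Finset ℤ := ({x ∈ I | x.1 = i} : Finset (ℤ × ℤ)).image Prod.snd with hS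
  have mem_S (k : ℤ) : k ∈ S ↔ (i, k) ∈ I := by simp [hS]
  have hcard : S.card = ({x ∈ I | x.1 = i} : Finset (ℤ × ℤ)).card := by
    refine Finset.card_image_of_injOn fun x hx y hy hxy => Prod.ext ?_ hxy
    rw [(Finset.mem_filter.1 hx).2, (Finset.mem_filter.1 hy).2]
  have hIcc : S = Finset.Icc i (i - 1 + S.card) := by
    refine eq_Icc_of_forall_le_mem (fun k hk => ?_) (fun k hk k' hik hkk' => ?_)
    · exact (mem_trap.1 (hI.1 ((mem_S k).1 hk))).2.2.1
    · have hkI := (mem_S k).1 hk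
      have hkP := mem_trap.1 (hI.1 hkI)
      exact (mem_S k').2 (hI.2 _ hkI _ (mem_trap.2 (by omega)) (Prod.mk_le_mk.2 ⟨le_rfl, hkk'⟩))
  rw [← mem_S, hIcc, Finset.mem_Icc, hcard, rowEnd]

lemma sub_one_le_rowEnd (I : Finset (ℤ × ℤ)) (i : ℤ) : i - 1 ≤ rowEnd I i := by
  rw [rowEnd]
  omega

lemma mem_trap_of_le_rowEnd (hI : IsIdeal (trap a b) I) (hi : i ≤ rowEnd I i) :
    (i, rowEnd I i) ∈ trap a b :=
  hI.1 ((mem_iff_le_rowEnd hI).2 ⟨hi, le_rfl⟩)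

lemma rowEnd_le (hI : IsIdeal (trap a b) I) (hab : a ≤ b) (hi : i ≤ a) :
    rowEnd I i ≤ a + b - i := by
  rcases lt_or_ge (rowEnd I i) i with hlt | hge
  · omega
  · exact (mem_trap.1 (mem_trap_of_le_rowEnd hI hge)).2.2.2

lemma rowEnd_of_lt (hI : IsIdeal (trap a b) I) (hi : a < i) : rowEnd I i = i - 1 := by
  have hlt : ¬ i ≤ rowEnd I i := fun hle =>
    absurd (mem_trap.1 (mem_trap_of_le_rowEnd hI hle)).2.1 (by omega)
  have := sub_one_le_rowEnd I i
  omega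

lemma rowEnd_succ_le (hI : IsIdeal (trap a b) I) (hi : 1 ≤ i) (hne : i + 1 ≤ rowEnd I (i + 1)) :
    rowEnd I (i + 1) ≤ rowEnd I i := by
  have hmem := (mem_iff_le_rowEnd hI).2 ⟨hne, le_rfl⟩
  have hP := mem_trap.1 (hI.1 hmem)
  exact ((mem_iff_le_rowEnd hI).1 (hI.2 _ hmem (i, _) (mem_trap.2 (by omega))
    (Prod.mk_le_mk.2 ⟨by omega, le_rfl⟩))).2

/-- The rows of `𝓣(a,b)` in which the ideal `I` has a maximal element. -/
def maxRows (a : ℤ) (I : Finset (ℤ × ℤ)) : Finset ℤ :=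
  {i ∈ Finset.Icc 1 a | i ≤ rowEnd I i ∧ (rowEnd I i = i ∨ rowEnd I (i + 1) < rowEnd I i)}

/-- The rows of `𝓣(a,b)` containing a minimal element of the complement of the ideal `I`. -/
def outRows (a b : ℤ) (I : Finset (ℤ × ℤ)) : Finset ℤ :=
  {i ∈ Finset.Icc 1 a | rowEnd I i < a + b - i ∧ (i = 1 ∨ rowEnd I i < rowEnd I (i - 1))}

lemma maxRows_subset (a : ℤ) (I : Finset (ℤ × ℤ)) : maxRows a I ⊆ Finset.Icc 1 a :=
  Finset.filter_subset _ _

lemma outRows_subset (a b : ℤ) (I : Finset (ℤ × ℤ)) : outRows a b I ⊆ Finset.Icc 1 a :=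
  Finset.filter_subset _ _

lemma mem_maxRows : i ∈ maxRows a I ↔
    (1 ≤ i ∧ i ≤ a) ∧ i ≤ rowEnd I i ∧ (rowEnd I i = i ∨ rowEnd I (i + 1) < rowEnd I i) := by
  rw [maxRows, Finset.mem_filter, Finset.mem_Icc]

lemma mem_outRows : i ∈ outRows a b I ↔
    (1 ≤ i ∧ i ≤ a) ∧ rowEnd I i < a + b - i ∧ (i = 1 ∨ rowEnd I i < rowEnd I (i - 1)) := by
  rw [outRows, Finset.mem_filter, Finset.mem_Icc]

lemma mem_maxElts_iff_rowEnd (hI : IsIdeal (trap a b) I) :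
    (i, j) ∈ maxElts I ↔ i ∈ maxRows a I ∧ j = rowEnd I i := by
  rw [mem_maxElts, mem_iff_le_rowEnd hI, mem_maxRows]
  constructor
  · rintro ⟨hij, hmax⟩
    have hP := mem_trap.1 (mem_trap_of_le_rowEnd hI (hij.1.trans hij.2))
    have hj : j = rowEnd I i := congrArg Prod.snd
      (hmax (i, rowEnd I i) ((mem_iff_le_rowEnd hI).2 ⟨by omega, le_rfl⟩)
        (Prod.mk_le_mk.2 ⟨le_rfl, hij.2⟩))
    have hbelow : (i + 1, j) ∉ I := fun hmem => by
      have := congrArg Prod.fst (hmax _ hmem (Prod.mk_le_mk.2 ⟨by omega, le_rfl⟩))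
      simp at this
    rw [mem_iff_le_rowEnd hI] at hbelow
    omega
  · rintro ⟨⟨hi, hcorner⟩, rfl⟩
    refine ⟨⟨hcorner.1, le_rfl⟩, fun ⟨i', j'⟩ hy hle => ?_⟩
    obtain ⟨hii', hjj'⟩ := Prod.mk_le_mk.1 hle
    have hyP := mem_trap.1 (hI.1 hy)
    have hrow : (i, j') ∈ I := hI.2 _ hy _ (mem_trap.2 (by omega)) (Prod.mk_le_mk.2 ⟨hii', le_rfl⟩)
    have hj' : j' = rowEnd I i := le_antisymm ((mem_iff_le_rowEnd hI).1 hrow).2 hjj'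
    have hi' : ¬ i < i' := fun hlt => by
      have hnext : (i + 1, j') ∈ I :=
        hI.2 _ hy _ (mem_trap.2 (by omega)) (Prod.mk_le_mk.2 ⟨hlt, le_rfl⟩)
      rw [mem_iff_le_rowEnd hI] at hnext
      omega
    exact Prod.ext (by dsimp only; omega) hj'.symm

lemma mem_minOut_iff_rowEnd (hI : IsIdeal (trap a b) I) :
    (i, j) ∈ minOut (trap a b) I ↔ i ∈ outRows a b I ∧ j = rowEnd I i + 1 := by
  have hrow := sub_one_le_rowEnd I i
  rw [mem_minOut, mem_iff_le_rowEnd hI, mem_outRows]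
  constructor
  · rintro ⟨hP, hout, hmin⟩
    rw [mem_trap] at hP
    have hj : rowEnd I i + 1 = j := congrArg Prod.snd
      (hmin (i, rowEnd I i + 1) (mem_trap.2 (by omega)) (by rw [mem_iff_le_rowEnd hI]; omega)
        (Prod.mk_le_mk.2 ⟨le_rfl, by omega⟩))
    have habove : i = 1 ∨ (i - 1, j) ∈ I := by
      by_contra! h
      have := congrArg Prod.fst (hmin (i - 1, j) (mem_trap.2 (by omega)) h.2
        (Prod.mk_le_mk.2 ⟨by omega, le_rfl⟩))
      simp at this
    rw [mem_iff_le_rowEnd hI] at habove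
    omega
  · rintro ⟨⟨hi, hlt, hcorner⟩, rfl⟩
    refine ⟨mem_trap.2 (by omega), by omega, fun ⟨i', j'⟩ hyP hyI hle => ?_⟩
    obtain ⟨hii', hjj'⟩ := Prod.mk_le_mk.1 hle
    rw [mem_trap] at hyP
    have hi' : ¬ i' < i := fun hlt' => by
      have habove : (i - 1, rowEnd I i + 1) ∈ I := (mem_iff_le_rowEnd hI).2 (by omega)
      exact hyI (hI.2 _ habove _ (mem_trap.2 hyP) (Prod.mk_le_mk.2 ⟨by omega, hjj'⟩))
    obtain rfl : i' = i := by omega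
    rw [mem_iff_le_rowEnd hI] at hyI
    exact Prod.ext rfl (by dsimp only; omega)

lemma maxElts_eq_image (hI : IsIdeal (trap a b) I) :
    maxElts I = (maxRows a I).image fun i => (i, rowEnd I i) := by
  ext ⟨i, j⟩
  simp [mem_maxElts_iff_rowEnd hI, eq_comm]

lemma minOut_eq_image (hI : IsIdeal (trap a b) I) :
    minOut (trap a b) I = (outRows a b I).image fun i => (i, rowEnd I i + 1) := by
  ext ⟨i, j⟩
  simp [mem_minOut_iff_rowEnd hI, eq_comm]

lemma sum_maxElts (hI : IsIdeal (trap a b) I) (f : ℤ × ℤ → ℤ) :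
    ∑ x ∈ maxElts I, f x =
      ∑ i ∈ Finset.Icc 1 a, if i ∈ maxRows a I then f (i, rowEnd I i) else 0 := by
  rw [maxElts_eq_image hI, Finset.sum_image fun i _ i' _ h => congrArg Prod.fst h,
    Finset.sum_ite_mem, Finset.inter_eq_right.2 (maxRows_subset a I)]

lemma sum_minOut (hI : IsIdeal (trap a b) I) (f : ℤ × ℤ → ℤ) :
    ∑ x ∈ minOut (trap a b) I, f x =
      ∑ i ∈ Finset.Icc 1 a, if i ∈ outRows a b I then f (i, rowEnd I i + 1) else 0 := by
  rw [minOut_eq_image hI, Finset.sum_image fun i _ i' _ h => congrArg Prod.fst h,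
    Finset.sum_ite_mem, Finset.inter_eq_right.2 (outRows_subset a b I)]

lemma ddeg_eq_sum_maxRows (hI : IsIdeal (trap a b) I) :
    (ddeg I : ℤ) = ∑ i ∈ Finset.Icc 1 a, if i ∈ maxRows a I then 1 else 0 := by
  rw [ddeg_eq_card_maxElts, ← sum_maxElts hI fun _ => 1]
  simp

/-- The weight of a corner of an ideal: up to a constant it is `a * j + b * i`, except that an
element of the diagonal `i = j` is weighted as if it were in the last row `a`. -/
def cornerWeight (a b : ℤ) (x : ℤ × ℤ) : ℤ :=
  a * (x.2 - a - b) + b * ((if x.1 = x.2 then a else x.1) - 1)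

/-- The contribution of row `i` to `boundaryDefect`. The last element of row `i` of `𝓣(a,b)` is
`(i, a + b - i)`, so the second term asks whether rows `i` and `i + 1` lie in `I`. -/
def rowDefect (a b : ℤ) (I : Finset (ℤ × ℤ)) (i : ℤ) : ℤ :=
  (if (i, i) ∈ minOut (trap a b) I then a - i else 0) -
    if (i, a + b - i) ∈ I ∧ (i + 1, a + b - (i + 1)) ∈ I then i else 0

/-- The statistic measuring how far `cornerWeight` is from proving homomesy: it counts, with
weights, the minimal elements of the complement of `I` on the diagonal, and the pairs of
consecutive rows contained in `I`. -/
def boundaryDefect (a b : ℤ) (I : Finset (ℤ × ℤ)) : ℤ :=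
  ∑ i ∈ Finset.Icc 1 a, rowDefect a b I i

/-- The contribution of row `i` to `∑ ℓ(minOut) - ∑ ℓ(maxElts) - (a + b) ddeg - (b - a) D`, where
`ℓ` is `cornerWeight` and `D` is `boundaryDefect`. -/
def rowExcess (a b : ℤ) (I : Finset (ℤ × ℤ)) (i : ℤ) : ℤ :=
  (if i ∈ outRows a b I then cornerWeight a b (i, rowEnd I i + 1) else 0) -
    (if i ∈ maxRows a I then cornerWeight a b (i, rowEnd I i) else 0) -
    (a + b) * (if i ∈ maxRows a I then 1 else 0) - (b - a) * rowDefect a b I i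

/-- A function of the row index `i` whose decrements are the row excesses; it makes their sum over
all rows telescope. -/
def cornerTail (a b : ℤ) (I : Finset (ℤ × ℤ)) (i : ℤ) : ℤ :=
  if i ∈ outRows a b I then a - a * (a + b) + b * (i - 1)
  else if i ≤ rowEnd I i then -(a * rowEnd I i) else a - a * a

lemma succ_mem_outRows (hi : 1 ≤ i) : i + 1 ∈ outRows a b I ↔
    i < a ∧ rowEnd I (i + 1) < a + b - (i + 1) ∧ rowEnd I (i + 1) < rowEnd I i := by
  rw [mem_outRows, add_sub_cancel_right]
  omega

lemma rowEnd_succ_of_le (hI : IsIdeal (trap a b) I) (hi : 1 ≤ i) (hle : rowEnd I i ≤ i) :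
    rowEnd I (i + 1) = i := by
  have hlow := sub_one_le_rowEnd I (i + 1)
  by_contra hne
  have := rowEnd_succ_le hI hi (by omega)
  omega

lemma cornerTail_succ_of_le (hI : IsIdeal (trap a b) I) (hi : 1 ≤ i) (hle : rowEnd I i ≤ i) :
    cornerTail a b I (i + 1) = a - a * a := by
  have hnext := rowEnd_succ_of_le hI hi hle
  rw [cornerTail, if_neg (by rw [succ_mem_outRows hi]; omega), if_neg (by omega)]

lemma cornerTail_succ_of_eq (hi : 1 ≤ i) (hlt : i < rowEnd I i)
    (heq : rowEnd I (i + 1) = rowEnd I i) : cornerTail a b I (i + 1) = -(a * rowEnd I i) := by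
  rw [cornerTail, if_neg (by rw [succ_mem_outRows hi]; omega), if_pos (by omega), heq]

lemma cornerTail_succ_of_lt (hI : IsIdeal (trap a b) I) (hab : a ≤ b) (hi : 1 ≤ i) (hia : i ≤ a)
    (hlt : rowEnd I (i + 1) < rowEnd I i) :
    cornerTail a b I (i + 1) = a - a * (a + b) + b * i - (b - a) *
      if (i, a + b - i) ∈ I ∧ (i + 1, a + b - (i + 1)) ∈ I then i else 0 := by
  have hend := rowEnd_le hI hab hia
  simp only [mem_iff_le_rowEnd hI]
  rcases hia.eq_or_lt with rfl | hia
  · have hnext := rowEnd_of_lt hI (lt_add_one i)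
    rw [cornerTail, if_neg (by rw [succ_mem_outRows hi]; omega), if_neg (by omega),
      if_neg (by omega)]
    ring
  have hend' := rowEnd_le hI hab (Int.add_one_le_iff.2 hia)
  rcases hend'.eq_or_lt with hfull | hopen
  · rw [cornerTail, if_neg (by rw [succ_mem_outRows hi]; omega), if_pos (by omega),
      if_pos (by omega), hfull]
    ring
  · rw [cornerTail, if_pos (by rw [succ_mem_outRows hi]; omega), if_neg (by omega)]
    ring

lemma diag_notMem_minOut (hI : IsIdeal (trap a b) I) (hi : i ≤ rowEnd I i) :
    (i, i) ∉ minOut (trap a b) I := fun h => by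
  have := ((mem_minOut_iff_rowEnd hI).1 h).2
  omega

lemma not_last_mem_and_succ_last_mem (hI : IsIdeal (trap a b) I)
    (hle : rowEnd I i ≤ rowEnd I (i + 1)) :
    ¬ ((i, a + b - i) ∈ I ∧ (i + 1, a + b - (i + 1)) ∈ I) := by
  simp only [mem_iff_le_rowEnd hI]
  rintro ⟨⟨-, htop⟩, hmem, htop'⟩
  have := (mem_trap.1 (mem_trap_of_le_rowEnd hI (hmem.trans htop'))).2.2.2
  omega

lemma rowExcess_of_lt (hI : IsIdeal (trap a b) I) (hab : a ≤ b) (hi : 1 ≤ i) (hia : i ≤ a)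
    (hlt : rowEnd I (i + 1) < rowEnd I i) :
    rowExcess a b I i = cornerTail a b I i - cornerTail a b I (i + 1) := by
  have hlow := sub_one_le_rowEnd I (i + 1)
  have hmax : i ∈ maxRows a I := mem_maxRows.2 (by omega)
  rw [rowExcess, cornerTail_succ_of_lt hI hab hi hia hlt, rowDefect, cornerTail,
    if_neg (diag_notMem_minOut hI (by omega))]
  simp only [hmax, cornerWeight, if_true, if_pos (show i ≤ rowEnd I i by omega),
    if_neg (show i ≠ rowEnd I i by omega), if_neg (show i ≠ rowEnd I i + 1 by omega)]
  split_ifs <;> ring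

lemma rowExcess_of_eq_succ (hI : IsIdeal (trap a b) I) (hi : 1 ≤ i) (hlt : i < rowEnd I i)
    (heq : rowEnd I (i + 1) = rowEnd I i) :
    rowExcess a b I i = cornerTail a b I i - cornerTail a b I (i + 1) := by
  have hmax : i ∉ maxRows a I := fun h => by
    have := (mem_maxRows.1 h).2
    omega
  rw [rowExcess, cornerTail_succ_of_eq hi hlt heq, rowDefect, cornerTail,
    if_neg (diag_notMem_minOut hI hlt.le),
    if_neg (not_last_mem_and_succ_last_mem hI heq.ge)]
  simp only [hmax, cornerWeight, if_false, if_pos hlt.le,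
    if_neg (show i ≠ rowEnd I i + 1 by omega)]
  split_ifs <;> ring

lemma rowExcess_of_eq_self (hI : IsIdeal (trap a b) I) (hi : 1 ≤ i) (hia : i ≤ a)
    (heq : rowEnd I i = i) :
    rowExcess a b I i = cornerTail a b I i - cornerTail a b I (i + 1) := by
  have hmax : i ∈ maxRows a I := mem_maxRows.2 (by omega)
  have hnext := rowEnd_succ_of_le hI hi heq.le
  rw [rowExcess, cornerTail_succ_of_le hI hi heq.le, rowDefect, cornerTail,
    if_neg (diag_notMem_minOut hI heq.ge),
    if_neg (not_last_mem_and_succ_last_mem hI (by omega))]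
  simp only [hmax, heq, cornerWeight, if_true, le_refl, if_neg (show i ≠ i + 1 by omega)]
  split_ifs <;> ring

lemma rowExcess_of_rowEnd_lt (hI : IsIdeal (trap a b) I) (hi : 1 ≤ i) (hlt : rowEnd I i < i) :
    rowExcess a b I i = cornerTail a b I i - cornerTail a b I (i + 1) := by
  have heq : rowEnd I i + 1 = i := by
    have := sub_one_le_rowEnd I i
    omega
  have hmax : i ∉ maxRows a I := fun h => hlt.not_ge (mem_maxRows.1 h).2.1
  have hnext := rowEnd_succ_of_le hI hi hlt.le
  have hdiag : (i, i) ∈ minOut (trap a b) I ↔ i ∈ outRows a b I := by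
    rw [mem_minOut_iff_rowEnd hI, heq, and_iff_left rfl]
  rw [rowExcess, cornerTail_succ_of_le hI hi hlt.le, rowDefect, cornerTail,
    if_neg (not_last_mem_and_succ_last_mem hI (by omega))]
  simp only [hmax, hdiag, heq, cornerWeight, if_true, if_false, if_neg hlt.not_ge]
  split_ifs <;> ring

lemma rowExcess_eq_cornerTail_sub (hI : IsIdeal (trap a b) I) (hab : a ≤ b) (hi : 1 ≤ i)
    (hia : i ≤ a) : rowExcess a b I i = cornerTail a b I i - cornerTail a b I (i + 1) := by
  rcases lt_trichotomy (rowEnd I i) i with hempty | hsingle | hlong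
  · exact rowExcess_of_rowEnd_lt hI hi hempty
  · exact rowExcess_of_eq_self hI hi hia hsingle
  rcases lt_or_ge (rowEnd I (i + 1)) (rowEnd I i) with hlt | hge
  · exact rowExcess_of_lt hI hab hi hia hlt
  · have hle := rowEnd_succ_le hI hi (by omega)
    exact rowExcess_of_eq_succ hI hi hlong (le_antisymm hle hge)

lemma cornerTail_one (hI : IsIdeal (trap a b) I) (ha : 1 ≤ a) (hab : a ≤ b) :
    cornerTail a b I 1 = a - a * (a + b) := by
  rcases (rowEnd_le hI hab ha).eq_or_lt with hfull | hopen
  · have hout : 1 ∉ outRows a b I := fun h => by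
      have := (mem_outRows.1 h).2.1
      omega
    rw [cornerTail, if_neg hout, if_pos (by omega), hfull]
    ring
  · rw [cornerTail, if_pos (mem_outRows.2 (by omega))]
    ring

lemma cornerTail_last (hI : IsIdeal (trap a b) I) (ha : 1 ≤ a) :
    cornerTail a b I (a + 1) = a - a * a := by
  have hend := rowEnd_of_lt hI (lt_add_one a)
  rw [cornerTail, if_neg (by rw [succ_mem_outRows ha]; omega), if_neg (by omega)]

theorem sum_cornerWeight_minOut_sub_maxElts (hI : IsIdeal (trap a b) I) (ha : 1 ≤ a)
    (hab : a ≤ b) :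
    ∑ x ∈ minOut (trap a b) I, cornerWeight a b x - ∑ x ∈ maxElts I, cornerWeight a b x =
      (a + b) * ddeg I + (b - a) * boundaryDefect a b I - a * b := by
  have htel : ∑ i ∈ Finset.Icc 1 a, rowExcess a b I i = -(a * b) := by
    rw [Finset.sum_congr rfl fun i hi => rowExcess_eq_cornerTail_sub hI hab
        (Finset.mem_Icc.1 hi).1 (Finset.mem_Icc.1 hi).2,
      sum_Icc_one_sub (by omega), cornerTail_one hI ha hab, cornerTail_last hI ha]
    ring
  simp only [rowExcess, Finset.sum_sub_distrib, ← Finset.mul_sum] at htel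
  rw [sum_minOut hI, sum_maxElts hI, ddeg_eq_sum_maxRows hI, boundaryDefect]
  linear_combination htel

theorem sum_ddeg_add_sum_boundaryDefect (ha : 1 ≤ a) (hab : a ≤ b) (hI : IsIdeal (trap a b) I)
    {n : ℕ} (hfix : (row (trap a b))^[n] I = I) :
    (a + b) * ∑ k ∈ Finset.range n, (ddeg ((row (trap a b))^[k] I) : ℤ) +
      (b - a) * ∑ k ∈ Finset.range n, boundaryDefect a b ((row (trap a b))^[k] I) =
        a * b * n := by
  have hzero := sum_iterate_row_eq_zero (w := fun A => ∑ x ∈ A, cornerWeight a b x)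
    (fun J hJ => (sum_cornerWeight_minOut_sub_maxElts hJ ha hab).symm) hI hfix
  simp only [Finset.sum_sub_distrib, Finset.sum_add_distrib, ← Finset.mul_sum, Finset.sum_const,
    Finset.card_range, nsmul_eq_mul] at hzero
  linear_combination hzero

end Trapezoid

section AtMostThreeRows

variable {b : ℤ} {I : Finset (ℤ × ℤ)}

lemma boundaryDefect_one_eq_zero (hI : IsIdeal (trap 1 b) I) : boundaryDefect 1 b I = 0 := by
  have hnext : (2, 1 + b - 2) ∉ I := fun h => by
    have := (mem_trap.1 (hI.1 h)).2.1
    omega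
  simp [boundaryDefect, rowDefect, hnext]

lemma Icc_one_two_eq : (Finset.Icc 1 2 : Finset ℤ) = {1, 2} := rfl

lemma Icc_one_three_eq : (Finset.Icc 1 3 : Finset ℤ) = {1, 2, 3} := rfl

lemma rowEnd_bounds_two (hI : IsIdeal (trap 2 b) I) (hb : 2 ≤ b) :
    (0 ≤ rowEnd I 1 ∧ rowEnd I 1 ≤ b + 1) ∧ (1 ≤ rowEnd I 2 ∧ rowEnd I 2 ≤ b) ∧
      rowEnd I 3 = 2 ∧ (2 ≤ rowEnd I 2 → rowEnd I 2 ≤ rowEnd I 1) := by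
  refine ⟨⟨sub_one_le_rowEnd I 1, ?_⟩, ⟨sub_one_le_rowEnd I 2, ?_⟩,
    rowEnd_of_lt hI (by norm_num), rowEnd_succ_le hI le_rfl⟩
  · linarith [rowEnd_le hI hb one_le_two]
  · linarith [rowEnd_le hI hb le_rfl]

lemma boundaryDefect_two_eq_sub (hI : IsIdeal (trap 2 b) I) (hb : 2 ≤ b) :
    boundaryDefect 2 b I =
      (if minOut (trap 2 b) I = ∅ then -1 else 0) - (if maxElts I = ∅ then -1 else 0) := by
  have hbounds := rowEnd_bounds_two hI hb
  have hmax : maxElts I = ∅ ↔ rowEnd I 1 = 0 := by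
    rw [maxElts_eq_image hI, Finset.image_eq_empty, maxRows, Icc_one_two_eq]
    simp only [Finset.filter_eq_empty_iff, Finset.forall_mem_insert, Finset.mem_singleton,
      forall_eq, Int.reduceAdd]
    omega
  have hout : minOut (trap 2 b) I = ∅ ↔ rowEnd I 1 = b + 1 ∧ rowEnd I 2 = b := by
    rw [minOut_eq_image hI, Finset.image_eq_empty, outRows, Icc_one_two_eq]
    simp only [Finset.filter_eq_empty_iff, Finset.forall_mem_insert, Finset.mem_singleton,
      forall_eq, Int.reduceSub, Int.reduceEq, true_or, false_or, and_true]
    omega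
  have hdiag : (1, 1) ∈ minOut (trap 2 b) I ↔ rowEnd I 1 = 0 := by
    rw [mem_minOut_iff_rowEnd hI, mem_outRows]
    omega
  have hpair₁ : (1, b + 1) ∈ I ∧ (2, b) ∈ I ↔ rowEnd I 1 = b + 1 ∧ rowEnd I 2 = b := by
    rw [mem_iff_le_rowEnd hI, mem_iff_le_rowEnd hI]
    omega
  have hpair₂ : (3, b - 1) ∉ I := by
    rw [mem_iff_le_rowEnd hI]
    omega
  rw [boundaryDefect, Icc_one_two_eq, Finset.sum_pair (by norm_num)]
  simp only [rowDefect, Int.reduceAdd, show 2 + b - 1 = b + 1 by ring,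
    show 2 + b - 2 = b by ring, show 2 + b - 3 = b - 1 by ring,
    hmax, hout, hdiag, hpair₁, hpair₂, and_false, if_false, sub_self, ite_self]
  split_ifs <;> rfl

/-- The function of `maxElts I` whose increment along rowmotion is the boundary defect of `I` when
`a = 3`. -/
def defectPotential (b : ℤ) (A : Finset (ℤ × ℤ)) : ℤ :=
  -((if ∀ x ∈ A, x.1 = 1 ∧ 1 < x.2 then 1 else 0) +
    (if ∀ x ∈ A, x.1 = 3 ∨ x.1 = x.2 then 1 else 0) +
    (if ∀ x ∈ A, x = (1, b + 2) then 1 else 0))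

lemma rowEnd_bounds_three (hI : IsIdeal (trap 3 b) I) (hb : 3 ≤ b) :
    (0 ≤ rowEnd I 1 ∧ rowEnd I 1 ≤ b + 2) ∧ (1 ≤ rowEnd I 2 ∧ rowEnd I 2 ≤ b + 1) ∧
      (2 ≤ rowEnd I 3 ∧ rowEnd I 3 ≤ b) ∧ rowEnd I 4 = 3 ∧
      (2 ≤ rowEnd I 2 → rowEnd I 2 ≤ rowEnd I 1) ∧
      (3 ≤ rowEnd I 3 → rowEnd I 3 ≤ rowEnd I 2) := by
  refine ⟨⟨sub_one_le_rowEnd I 1, ?_⟩, ⟨sub_one_le_rowEnd I 2, ?_⟩, ⟨sub_one_le_rowEnd I 3, ?_⟩,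
    rowEnd_of_lt hI (by norm_num), rowEnd_succ_le hI le_rfl, rowEnd_succ_le hI one_le_two⟩
  · linarith [rowEnd_le hI hb (i := 1) (by norm_num)]
  · linarith [rowEnd_le hI hb (i := 2) (by norm_num)]
  · linarith [rowEnd_le hI hb le_rfl]

lemma forall_mem_maxElts_three (hI : IsIdeal (trap 3 b) I) {φ : ℤ × ℤ → Prop} :
    (∀ x ∈ maxElts I, φ x) ↔
      (1 ≤ rowEnd I 1 ∧ (rowEnd I 1 = 1 ∨ rowEnd I 2 < rowEnd I 1) → φ (1, rowEnd I 1)) ∧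
      (2 ≤ rowEnd I 2 ∧ (rowEnd I 2 = 2 ∨ rowEnd I 3 < rowEnd I 2) → φ (2, rowEnd I 2)) ∧
      (3 ≤ rowEnd I 3 ∧ (rowEnd I 3 = 3 ∨ rowEnd I 4 < rowEnd I 3) → φ (3, rowEnd I 3)) := by
  rw [maxElts_eq_image hI, Finset.forall_mem_image, maxRows, Icc_one_three_eq]
  simp only [Finset.mem_filter, and_imp, Finset.forall_mem_insert, Finset.mem_singleton, forall_eq,
    Int.reduceAdd]

lemma forall_mem_minOut_three (hI : IsIdeal (trap 3 b) I) {φ : ℤ × ℤ → Prop} :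
    (∀ x ∈ minOut (trap 3 b) I, φ x) ↔
      (rowEnd I 1 < b + 2 → φ (1, rowEnd I 1 + 1)) ∧
      (rowEnd I 2 < b + 1 ∧ rowEnd I 2 < rowEnd I 1 → φ (2, rowEnd I 2 + 1)) ∧
      (rowEnd I 3 < b ∧ rowEnd I 3 < rowEnd I 2 → φ (3, rowEnd I 3 + 1)) := by
  rw [minOut_eq_image hI, Finset.forall_mem_image, outRows, Icc_one_three_eq]
  simp only [Finset.mem_filter, and_imp, Finset.forall_mem_insert, Finset.mem_singleton, forall_eq,
    Int.reduceSub, Int.reduceEq, true_or, false_or, true_imp_iff]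
  rw [show 3 + b - 1 = b + 2 by ring, show 3 + b - 2 = b + 1 by ring, add_sub_cancel_left]

lemma defectPotential_maxElts (hI : IsIdeal (trap 3 b) I) (hb : 3 ≤ b) :
    defectPotential b (maxElts I) =
      -((if rowEnd I 1 ≠ 1 ∧ rowEnd I 2 = 1 then 1 else 0) +
      (if (rowEnd I 1 ≤ 1 ∨ rowEnd I 1 = rowEnd I 2) ∧
        (rowEnd I 2 ≤ 2 ∨ rowEnd I 2 = rowEnd I 3) then 1 else 0) +
      (if rowEnd I 1 = 0 ∨ rowEnd I 1 = b + 2 ∧ rowEnd I 2 = 1 then 1 else 0)) := by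
  have hbounds := rowEnd_bounds_three hI hb
  simp only [defectPotential, forall_mem_maxElts_three hI, Prod.mk.injEq, Int.reduceEq,
    true_and, true_or, false_and, false_or, imp_false, implies_true, and_true]
  congr 2
  · congr 1 <;> refine if_congr ?_ rfl rfl <;> omega
  · exact if_congr (by omega) rfl rfl

lemma defectPotential_minOut (hI : IsIdeal (trap 3 b) I) (hb : 3 ≤ b) :
    defectPotential b (minOut (trap 3 b) I) =
      -((if 1 ≤ rowEnd I 1 ∧ (rowEnd I 2 = b + 1 ∨ rowEnd I 1 ≤ rowEnd I 2) ∧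
        (rowEnd I 3 = b ∨ rowEnd I 2 ≤ rowEnd I 3) then 1 else 0) +
      (if (rowEnd I 1 = 0 ∨ rowEnd I 1 = b + 2) ∧
        (rowEnd I 2 = 1 ∨ rowEnd I 2 = b + 1) then 1 else 0) +
      (if rowEnd I 2 = b + 1 ∧ rowEnd I 3 = b then 1 else 0)) := by
  have hbounds := rowEnd_bounds_three hI hb
  simp only [defectPotential, forall_mem_minOut_three hI, Prod.mk.injEq, Int.reduceEq,
    true_and, true_or, false_and, false_or, imp_false, implies_true, and_true]
  congr 2
  · congr 1 <;> refine if_congr ?_ rfl rfl <;> omega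
  · exact if_congr (by omega) rfl rfl

lemma boundaryDefect_three_eq_rowEnd (hI : IsIdeal (trap 3 b) I) (hb : 3 ≤ b) :
    boundaryDefect 3 b I =
      2 * (if rowEnd I 1 = 0 then 1 else 0) +
      (if 2 ≤ rowEnd I 1 ∧ rowEnd I 2 = 1 then 1 else 0) -
      (if rowEnd I 1 = b + 2 ∧ rowEnd I 2 = b + 1 then 1 else 0) -
      2 * (if rowEnd I 2 = b + 1 ∧ rowEnd I 3 = b then 1 else 0) := by
  have hbounds := rowEnd_bounds_three hI hb
  have hdiag₁ : (1, 1) ∈ minOut (trap 3 b) I ↔ rowEnd I 1 = 0 := by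
    rw [mem_minOut_iff_rowEnd hI, mem_outRows]
    omega
  have hdiag₂ : (2, 2) ∈ minOut (trap 3 b) I ↔ 2 ≤ rowEnd I 1 ∧ rowEnd I 2 = 1 := by
    rw [mem_minOut_iff_rowEnd hI, mem_outRows, show (2 : ℤ) - 1 = 1 by rfl]
    omega
  have hpair₁ : (1, b + 2) ∈ I ∧ (2, b + 1) ∈ I ↔ rowEnd I 1 = b + 2 ∧ rowEnd I 2 = b + 1 := by
    rw [mem_iff_le_rowEnd hI, mem_iff_le_rowEnd hI]
    omega
  have hpair₂ : (2, b + 1) ∈ I ∧ (3, b) ∈ I ↔ rowEnd I 2 = b + 1 ∧ rowEnd I 3 = b := by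
    rw [mem_iff_le_rowEnd hI, mem_iff_le_rowEnd hI]
    omega
  have hpair₃ : (4, b - 1) ∉ I := by
    rw [mem_iff_le_rowEnd hI]
    omega
  rw [boundaryDefect, Icc_one_three_eq, Finset.sum_insert (by norm_num),
    Finset.sum_pair (by norm_num)]
  simp only [rowDefect, Int.reduceAdd, show 3 + b - 1 = b + 2 by ring,
    show 3 + b - 2 = b + 1 by ring, show 3 + b - 3 = b by ring, show 3 + b - 4 = b - 1 by ring,
    hdiag₁, hdiag₂, hpair₁, hpair₂, hpair₃, and_false, if_false, sub_self, ite_self]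
  split_ifs <;> rfl

lemma boundaryDefect_three_eq_sub (hI : IsIdeal (trap 3 b) I) (hb : 3 ≤ b) :
    boundaryDefect 3 b I =
      defectPotential b (minOut (trap 3 b) I) - defectPotential b (maxElts I) := by
  have hbounds := rowEnd_bounds_three hI hb
  rw [boundaryDefect_three_eq_rowEnd hI hb, defectPotential_maxElts hI hb,
    defectPotential_minOut hI hb]
  generalize rowEnd I 1 = p at *
  generalize rowEnd I 2 = q at *
  generalize rowEnd I 3 = r at *
  have hdiag : (if p ≠ 1 ∧ q = 1 then 1 else 0 : ℤ) -
      (if (p = 0 ∨ p = b + 2) ∧ (q = 1 ∨ q = b + 1) then 1 else 0) =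
      (if 2 ≤ p ∧ q = 1 then 1 else 0) - (if p = b + 2 ∧ q = 1 then 1 else 0) -
        (if p = b + 2 ∧ q = b + 1 then 1 else 0) := by
    split_ifs <;> omega
  have hcol : (if (p ≤ 1 ∨ p = q) ∧ (q ≤ 2 ∨ q = r) then 1 else 0 : ℤ) -
      (if 1 ≤ p ∧ (q = b + 1 ∨ p ≤ q) ∧ (r = b ∨ q ≤ r) then 1 else 0) =
      (if p = 0 then 1 else 0) - (if q = b + 1 ∧ r = b then 1 else 0) := by
    split_ifs <;> omega
  have hrow : (if p = 0 ∨ p = b + 2 ∧ q = 1 then 1 else 0 : ℤ) =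
      (if p = 0 then 1 else 0) + (if p = b + 2 ∧ q = 1 then 1 else 0) := by
    split_ifs <;> omega
  linear_combination -hdiag - hcol - hrow

theorem sum_boundaryDefect_eq_zero {a : ℤ} (ha : 1 ≤ a) (ha3 : a ≤ 3) (hab : a ≤ b)
    (hI : IsIdeal (trap a b) I) {n : ℕ} (hfix : (row (trap a b))^[n] I = I) :
    ∑ k ∈ Finset.range n, boundaryDefect a b ((row (trap a b))^[k] I) = 0 := by
  obtain rfl | rfl | rfl : a = 1 ∨ a = 2 ∨ a = 3 := by omega
  · exact Finset.sum_eq_zero fun k _ => boundaryDefect_one_eq_zero (isIdeal_iterate_row hI k)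
  · exact sum_iterate_row_eq_zero (w := fun A => if A = ∅ then -1 else 0)
      (fun J hJ => boundaryDefect_two_eq_sub hJ hab) hI hfix
  · exact sum_iterate_row_eq_zero (w := defectPotential b)
      (fun J hJ => boundaryDefect_three_eq_sub hJ hab) hI hfix

end AtMostThreeRows

theorem ddeg_homomesic_general (a b : ℤ) (ha : 1 ≤ a) (h : a ≤ 3 ∨ a = b) (hab : a ≤ b)
    (I : Finset (ℤ × ℤ)) (hI : IsIdeal (trap a b) I)
    (n : ℕ) (hn : 1 ≤ n) (hfix : (row (trap a b))^[n] I = I) :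
    (1 / (n : ℝ)) * ∑ k ∈ Finset.range n, (ddeg ((row (trap a b))^[k] I) : ℝ)
      = (a : ℝ) * b / (a + b) := by
  have hdefect :
      (b - a) * ∑ k ∈ Finset.range n, boundaryDefect a b ((row (trap a b))^[k] I) = 0 := by
    rcases h with ha3 | rfl
    · rw [sum_boundaryDefect_eq_zero ha ha3 hab hI hfix, mul_zero]
    · rw [sub_self, zero_mul]
  have hsum := sum_ddeg_add_sum_boundaryDefect ha hab hI hfix
  rw [hdefect, add_zero] at hsum
  have hsumReal : ((a : ℝ) + b) * ∑ k ∈ Finset.range n, (ddeg ((row (trap a b))^[k] I) : ℝ) =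
      a * b * n := by exact_mod_cast hsum
  have hn0 : (n : ℝ) ≠ 0 := by exact_mod_cast (by omega : n ≠ 0)
  have hab0 : (a : ℝ) + b ≠ 0 := by exact_mod_cast (by omega : a + b ≠ 0)
  rw [eq_div_iff hab0, mul_comm, mul_left_comm, hsumReal]
  field_simp

/-- Down-degree is homomesic under rowmotion on `J(𝓣(a,b))` for `a ≤ 3`. -/
theorem ddeg_homomesic (a b : ℤ) (ha : 1 ≤ a) (ha3 : a ≤ 3) (hab : a ≤ b)
    (I : Finset (ℤ × ℤ)) (hI : IsIdeal (trap a b) I)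
    (n : ℕ) (hn : 1 ≤ n) (hfix : (row (trap a b))^[n] I = I) :
    (1 / (n : ℝ)) * ∑ k ∈ Finset.range n, (ddeg ((row (trap a b))^[k] I) : ℝ)
      = (a : ℝ) * b / (a + b) :=
  ddeg_homomesic_general a b ha (.inl ha3) hab I hI n hn hfix

end Stmt11
end
end

section
/- Let P be a finite poset and A ⊆ P an antichain. For every order ideal I of P, 𝒯_A⁺(I) = 1 if and only if 𝒯_A⁻(row(I)) = 1. Consequently, for every order ideal I and every n ≥ 1 with row^n(I) = I, Σ_{k=0}^{n−1} 𝒯_A(row^k(I)) = 0; i.e. the uniform distribution on any rowmotion orbit is toggle-on-antichains-symmetric. -/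
/-!
STATEMENT 12: For a finite poset `P` and an antichain `A ⊆ P`:
`𝒯_A⁺(I) = 1 ↔ 𝒯_A⁻(row I) = 1` for every order ideal `I`; consequently the
sum of `𝒯_A` along any rowmotion orbit vanishes, i.e. the uniform distribution
on a rowmotion orbit is toggle-on-antichains-symmetric.
-/

open scoped Classical

noncomputable section

namespace Stmt12

variable {P : Type*}

/-- `I` is an order ideal of the finite poset `P`: a downward-closed subset. -/
def IsIdeal [PartialOrder P] (I : Finset P) : Prop :=
  ∀ x ∈ I, ∀ y, y ≤ x → y ∈ I

/-- Rowmotion: `row I` is the order ideal generated by the minimal elements of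
the complement of `I`. -/
def row [Fintype P] [PartialOrder P] (I : Finset P) : Finset P :=
  Finset.univ.filter (fun x => ∃ m, m ∉ I ∧ (∀ y, y ∉ I → y ≤ m → y = m) ∧ x ≤ m)

/-- `𝒯_A⁺(I) = 1` if `A ∩ I = ∅` and `I ∪ A` is an order ideal, else `0`. -/
def togPlus [PartialOrder P] [DecidableEq P] (A I : Finset P) : ℝ :=
  if (∀ x ∈ A, x ∉ I) ∧ IsIdeal (I ∪ A) then 1 else 0

/-- `𝒯_A⁻(I) = 1` if `A ⊆ I` and `I \ A` is an order ideal, else `0`. -/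
def togMinus [PartialOrder P] [DecidableEq P] (A I : Finset P) : ℝ :=
  if A ⊆ I ∧ IsIdeal (I \ A) then 1 else 0

/-- `𝒯_A = 𝒯_A⁺ − 𝒯_A⁻`. -/
def tog [PartialOrder P] [DecidableEq P] (A I : Finset P) : ℝ :=
  togPlus A I - togMinus A I

/-!
Both toggle conditions are extremality conditions: `A` can be toggled into an ideal `I` exactly when
its elements are minimal outside `I`, and toggled out of an ideal `J` exactly when its elements are
maximal in `J`. Since the minimal elements outside `I` form an antichain, they are the maximal
elements of the ideal `row I` they generate. Hence `𝒯_A⁺ = 𝒯_A⁻ ∘ row`, and the sum of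
`𝒯_A = 𝒯_A⁻ ∘ row − 𝒯_A⁻` along an orbit telescopes.
-/

section Toggleability

variable [PartialOrder P] [DecidableEq P] {A I : Finset P}

theorem disjoint_and_isIdeal_union_iff (hA : IsAntichain (· ≤ ·) (A : Set P)) (hI : IsIdeal I) :
    ((∀ x ∈ A, x ∉ I) ∧ IsIdeal (I ∪ A)) ↔ ∀ a ∈ A, Minimal (· ∉ I) a := by
  constructor
  · rintro ⟨hdisj, hideal⟩ a ha
    refine minimal_iff.2 ⟨hdisj a ha, fun y hyI hya => ?_⟩
    have hyA : y ∈ A :=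
      (Finset.mem_union.1 (hideal a (Finset.mem_union_right I ha) y hya)).resolve_left hyI
    exact (hA.eq hyA ha hya).symm
  · intro hmin
    refine ⟨fun a ha => (hmin a ha).prop, fun x hx y hyx => ?_⟩
    by_cases hyI : y ∈ I
    · exact Finset.mem_union_left A hyI
    · have hxA : x ∈ A := (Finset.mem_union.1 hx).resolve_left fun hxI => hyI (hI x hxI y hyx)
      have hxy : x = y := (hmin x hxA).eq_of_ge hyI hyx
      exact hxy ▸ hx

theorem subset_and_isIdeal_sdiff_iff (hA : IsAntichain (· ≤ ·) (A : Set P)) (hI : IsIdeal I) :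
    (A ⊆ I ∧ IsIdeal (I \ A)) ↔ ∀ a ∈ A, Maximal (· ∈ I) a := by
  constructor
  · rintro ⟨hsub, hideal⟩ a ha
    refine maximal_iff.2 ⟨hsub ha, fun y hyI hay => ?_⟩
    have hyA : y ∈ A := by
      by_contra hyA
      exact (Finset.mem_sdiff.1 (hideal y (Finset.mem_sdiff.2 ⟨hyI, hyA⟩) a hay)).2 ha
    exact hA.eq ha hyA hay
  · intro hmax
    refine ⟨fun a ha => (hmax a ha).prop, fun x hx y hyx => ?_⟩
    obtain ⟨hxI, hxA⟩ := Finset.mem_sdiff.1 hx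
    refine Finset.mem_sdiff.2 ⟨hI x hxI y hyx, fun hyA => hxA ?_⟩
    have hy : y = x := (hmax y hyA).eq_of_le hxI hyx
    exact hy ▸ hyA

end Toggleability

section Rowmotion

variable [Fintype P] [PartialOrder P]

theorem mem_row {I : Finset P} {x : P} :
    x ∈ row I ↔ x ∈ lowerClosure {m | Minimal (· ∉ I) m} := by
  simp only [row, Finset.mem_filter, Finset.mem_univ, true_and, mem_lowerClosure,
    Set.mem_ofPred_eq, minimal_iff, and_assoc, eq_comm]

theorem isIdeal_row (I : Finset P) : IsIdeal (row I) :=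
  fun _ hx _ hyx => mem_row.2 ((lowerClosure _).lower hyx (mem_row.1 hx))

theorem IsIdeal.iterate_row {I : Finset P} (hI : IsIdeal I) (k : ℕ) : IsIdeal (row^[k] I) :=
  Function.Iterate.rec IsIdeal hI (fun J _ => isIdeal_row J) k

theorem maximal_mem_row_iff {I : Finset P} {x : P} :
    Maximal (· ∈ row I) x ↔ Minimal (· ∉ I) x := by
  simp only [mem_row]
  exact (setOfPred_minimal_antichain _).maximal_mem_lowerClosure_iff_mem

variable [DecidableEq P] {A I : Finset P}

theorem togPlus_eq_togMinus_row (hA : IsAntichain (· ≤ ·) (A : Set P)) (hI : IsIdeal I) :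
    togPlus A I = togMinus A (row I) := by
  simp only [togPlus, togMinus, disjoint_and_isIdeal_union_iff hA hI,
    subset_and_isIdeal_sdiff_iff hA (isIdeal_row I), maximal_mem_row_iff]

theorem sum_range_tog_iterate_row (hA : IsAntichain (· ≤ ·) (A : Set P)) (hI : IsIdeal I) (n : ℕ) :
    ∑ k ∈ Finset.range n, tog A (row^[k] I) = togMinus A (row^[n] I) - togMinus A I := by
  calc ∑ k ∈ Finset.range n, tog A (row^[k] I)
      = ∑ k ∈ Finset.range n, (togMinus A (row^[k + 1] I) - togMinus A (row^[k] I)) := by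
        simp only [tog, togPlus_eq_togMinus_row hA (hI.iterate_row _), Function.iterate_succ_apply']
    _ = togMinus A (row^[n] I) - togMinus A I :=
        Finset.sum_range_sub (fun k => togMinus A (row^[k] I)) n

end Rowmotion

/-- An antichain can be toggled into `I` iff it can be toggled out of `row I`;
hence `𝒯_A` sums to zero along every rowmotion orbit. -/
theorem togPlus_iff_togMinus_row_and_orbit_sum_zero
    [Fintype P] [PartialOrder P] [DecidableEq P]
    (A : Finset P) (hA : IsAntichain (· ≤ ·) (A : Set P)) :
    (∀ I : Finset P, IsIdeal I → (togPlus A I = 1 ↔ togMinus A (row I) = 1)) ∧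
    (∀ I : Finset P, IsIdeal I → ∀ n : ℕ, 1 ≤ n → row^[n] I = I →
      ∑ k ∈ Finset.range n, tog A (row^[k] I) = 0) := by
  refine ⟨fun I hI => by rw [togPlus_eq_togMinus_row hA hI], fun I hI n _ hperiod => ?_⟩
  rw [sum_range_tog_iterate_row hA hI, hperiod, sub_self]

end Stmt12
end
end

section
/- Let 1 ≤ a ≤ b. For any toggle-symmetric probability distribution μ on J(𝓣(a,b)): Σ_{i=1}^{a} (a−i)·E[μ; 𝒯⁻_{(i,i)}] = Σ E[μ; 𝒯⁻_{(i,j)}], where the right-hand sum ranges over all elements (i,j) of 𝓣(a,b) with i < j ≤ a (the strictly-above-diagonal elements in the first a columns). -/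
/-!
STATEMENT 14: For any toggle-symmetric distribution μ on J(𝓣(a,b)):
Σ_{i=1}^{a} (a−i)·E[μ; 𝒯⁻_{(i,i)}] equals the sum of E[μ; 𝒯⁻_{(i,j)}] over the
elements (i,j) of 𝓣(a,b) with i < j ≤ a.
-/

open scoped Classical

noncomputable section

namespace Stmt14

/-- The trapezoid poset `𝓣(a,b) = {(i,j) : 1 ≤ i ≤ a, i ≤ j ≤ a+b-i}`,
as a finite subset of `ℤ × ℤ` with the componentwise order. -/
def trap (a b : ℤ) : Finset (ℤ × ℤ) :=
  (Finset.Icc (1, 1) (a, a + b - 1)).filter (fun p => p.1 ≤ p.2 ∧ p.2 ≤ a + b - p.1)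

/-- `I` is an order ideal of the poset with ground set `P ⊆ ℤ × ℤ`. -/
def IsIdeal (P I : Finset (ℤ × ℤ)) : Prop :=
  I ⊆ P ∧ ∀ x ∈ I, ∀ y ∈ P, y ≤ x → y ∈ I

/-- `J(P)`: the set of order ideals of `P`. -/
def ideals (P : Finset (ℤ × ℤ)) : Finset (Finset (ℤ × ℤ)) :=
  P.powerset.filter (fun I => IsIdeal P I)

/-- The down-degree of `I`: the number of maximal elements of `I`. -/
def ddeg (I : Finset (ℤ × ℤ)) : ℕ :=
  (I.filter (fun x => ∀ y ∈ I, x ≤ y → x = y)).card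

/-- `𝒯_A⁺(I) = 1` if `A ∩ I = ∅` and `I ∪ A` is an order ideal, else `0`. -/
def togPlus (P A I : Finset (ℤ × ℤ)) : ℝ :=
  if (∀ x ∈ A, x ∉ I) ∧ IsIdeal P (I ∪ A) then 1 else 0

/-- `𝒯_A⁻(I) = 1` if `A ⊆ I` and `I \ A` is an order ideal, else `0`. -/
def togMinus (P A I : Finset (ℤ × ℤ)) : ℝ :=
  if A ⊆ I ∧ IsIdeal P (I \ A) then 1 else 0

/-- `𝒯_A = 𝒯_A⁺ − 𝒯_A⁻`. -/
def tog (P A I : Finset (ℤ × ℤ)) : ℝ := togPlus P A I - togMinus P A I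

/-- Expectation of the statistic `f` with respect to `μ` on `J(P)`. -/
def expect (P : Finset (ℤ × ℤ)) (μ : Finset (ℤ × ℤ) → ℝ) (f : Finset (ℤ × ℤ) → ℝ) : ℝ :=
  ∑ I ∈ ideals P, μ I * f I

/-- `μ` is a probability distribution on `J(P)`. -/
def IsDistribution (P : Finset (ℤ × ℤ)) (μ : Finset (ℤ × ℤ) → ℝ) : Prop :=
  (∀ I ∈ ideals P, 0 ≤ μ I) ∧ ∑ I ∈ ideals P, μ I = 1

/-- `μ` is toggle-on-antichains-symmetric: `E[μ; 𝒯_A] = 0` for every antichain `A ⊆ P`. -/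
def ToggleAntichainSymmetric (P : Finset (ℤ × ℤ)) (μ : Finset (ℤ × ℤ) → ℝ) : Prop :=
  ∀ A : Finset (ℤ × ℤ), A ⊆ P → IsAntichain (· ≤ ·) (A : Set (ℤ × ℤ)) →
    expect P μ (tog P A) = 0

/-- `μ` is toggle-symmetric: `E[μ; 𝒯_p⁺ − 𝒯_p⁻] = 0` for every `p ∈ P`. -/
def ToggleSymmetric (P : Finset (ℤ × ℤ)) (μ : Finset (ℤ × ℤ) → ℝ) : Prop :=
  ∀ p ∈ P, expect P μ (tog P {p}) = 0

/-!
Fix an order ideal `I` and a column `m < n` inside the staircase, and let `S` be the set of rows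
`i ≤ m` such that `(i, m) ∈ I` but `(i, m + 1) ∉ I`. Since `I` is an ideal, the box `(i, m + 1)`
can be added to `I` exactly when `i` starts a run of consecutive elements of `S`, and `(i, m)` can
be removed from `I` exactly when `i` ends such a run. There are as many starts as ends, so after
taking expectations toggle-symmetry says that the off-diagonal sum of column `m + 1` is the full
sum of column `m`. Hence the off-diagonal sum of column `m` is the sum of all diagonal terms
`(i, i)` with `i < m`, and over the columns `m ≤ n` the term `(i, i)` is counted `n - i` times.
-/

theorem card_filter_sub_notMem_eq_card_filter_add_notMem {G : Type*} [AddGroup G] [DecidableEq G]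
    (S : Finset G) (g : G) :
    (S.filter fun i => i - g ∉ S).card = (S.filter fun i => i + g ∉ S).card := by
  have hshift : (S.filter fun i => i - g ∈ S).card = (S.filter fun i => i + g ∈ S).card :=
    Finset.card_nbij' (· - g) (· + g) (fun i hi => by simp_all) (fun i hi => by simp_all)
      (fun i _ => sub_add_cancel i g) (fun i _ => add_sub_cancel_right i g)
  have hstart := S.card_filter_add_card_filter_not fun i => i - g ∈ S
  have hend := S.card_filter_add_card_filter_not fun i => i + g ∈ S
  omega

theorem sum_Icc_sum_Ico_eq {R : Type*} [NonAssocRing R] (f : ℤ → R) (k n : ℤ) :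
    ∑ m ∈ Finset.Icc k n, ∑ i ∈ Finset.Ico k m, f i
      = ∑ i ∈ Finset.Icc k n, ((n - i : ℤ) : R) * f i := by
  rw [Finset.sum_comm' (t' := Finset.Icc k n) (s' := fun i => Finset.Ioc i n)
    (by simp only [Finset.mem_Icc, Finset.mem_Ico, Finset.mem_Ioc]; omega)]
  refine Finset.sum_congr rfl fun i hi => ?_
  have hcard : ((n - i).toNat : ℤ) = n - i :=
    Int.toNat_of_nonneg (sub_nonneg.2 (Finset.mem_Icc.1 hi).2)
  rw [Finset.sum_const, Int.card_Ioc, nsmul_eq_mul, ← hcard, Int.cast_natCast, Int.toNat_natCast]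

section Expectation

variable {P : Finset (ℤ × ℤ)} {μ : Finset (ℤ × ℤ) → ℝ}

theorem sum_expect {ι : Type*} (s : Finset ι) (f : ι → Finset (ℤ × ℤ) → ℝ) :
    ∑ i ∈ s, expect P μ (f i) = expect P μ (fun I => ∑ i ∈ s, f i I) := by
  simp only [expect, Finset.mul_sum]
  exact Finset.sum_comm

theorem expect_congr {f g : Finset (ℤ × ℤ) → ℝ} (h : ∀ I, IsIdeal P I → f I = g I) :
    expect P μ f = expect P μ g :=
  Finset.sum_congr rfl fun I hI => by rw [h I (Finset.mem_filter.1 hI).2]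

theorem ToggleSymmetric.expect_togPlus_eq (hsym : ToggleSymmetric P μ) {p : ℤ × ℤ} (hp : p ∈ P) :
    expect P μ (togPlus P {p}) = expect P μ (togMinus P {p}) := by
  have h := hsym p hp
  simp only [expect, tog, mul_sub, Finset.sum_sub_distrib] at h
  exact sub_eq_zero.1 h

end Expectation

section Ideal

variable {P I : Finset (ℤ × ℤ)} {p : ℤ × ℤ}

theorem IsIdeal.union_singleton_iff (hI : IsIdeal P I) (hp : p ∈ P) :
    IsIdeal P (I ∪ {p}) ↔ ∀ y ∈ P, y < p → y ∈ I := by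
  constructor
  · intro h y hy hyp
    have hmem := h.2 p (by simp) y hy hyp.le
    simpa [hyp.ne] using hmem
  · refine fun h => ⟨Finset.union_subset hI.1 (by simpa using hp), fun x hx y hy hyx => ?_⟩
    simp only [Finset.mem_union, Finset.mem_singleton] at hx ⊢
    rcases hx with hx | rfl
    · exact Or.inl (hI.2 x hx y hy hyx)
    · exact hyx.lt_or_eq.imp_left (h y hy)

theorem IsIdeal.sdiff_singleton_iff (hI : IsIdeal P I) (hp : p ∈ I) :
    IsIdeal P (I \ {p}) ↔ ∀ x ∈ I, ¬ p < x := by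
  constructor
  · intro h x hx hpx
    have hmem := h.2 x (by simp [hx, hpx.ne']) p (hI.1 hp) hpx.le
    simp at hmem
  · refine fun h => ⟨Finset.sdiff_subset.trans hI.1, fun x hx y hy hyx => ?_⟩
    simp only [Finset.mem_sdiff, Finset.mem_singleton] at hx ⊢
    refine ⟨hI.2 x hx.1 y hy hyx, ?_⟩
    rintro rfl
    exact h x hx.1 (hyx.lt_of_ne' hx.2)

theorem IsIdeal.togPlus_singleton (hI : IsIdeal P I) (hp : p ∈ P) :
    togPlus P {p} I = if p ∉ I ∧ ∀ y ∈ P, y < p → y ∈ I then 1 else 0 := by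
  simp only [togPlus, Finset.mem_singleton, forall_eq, hI.union_singleton_iff hp]

theorem IsIdeal.togMinus_singleton (hI : IsIdeal P I) :
    togMinus P {p} I = if p ∈ I ∧ ∀ x ∈ I, ¬ p < x then 1 else 0 := by
  simp only [togMinus, Finset.singleton_subset_iff]
  exact if_congr (and_congr_right hI.sdiff_singleton_iff) rfl rfl

end Ideal

/-- The columns `j ≤ n` of `P` are those of the shifted staircase `{(i, j) : 1 ≤ i ≤ j}`, where
`(i, j)` is the box in row `i` and column `j`. This is all that the argument uses about the shape;
the columns of `P` beyond `n` are arbitrary. -/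
def HasFullColumns (P : Finset (ℤ × ℤ)) (n : ℤ) : Prop :=
  ∀ ⦃i j : ℤ⦄, j ≤ n → ((i, j) ∈ P ↔ 1 ≤ i ∧ i ≤ j)

theorem hasFullColumns_trap {a b : ℤ} (hab : a ≤ b) : HasFullColumns (trap a b) a := by
  intro i j hj
  simp only [trap, Finset.mem_filter, Finset.mem_Icc, Prod.mk_le_mk]
  omega

/-- The gap between columns `m` and `m + 1` of `I`: the rows in which only column `m` is occupied.
It governs which boxes of the two columns can be toggled. The rows stop at `m`, which leaves out the
diagonal box `(m + 1, m + 1)`. -/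
def columnGap (I : Finset (ℤ × ℤ)) (m : ℤ) : Finset ℤ :=
  (Finset.Icc 1 m).filter fun i => (i, m) ∈ I ∧ (i, m + 1) ∉ I

theorem mem_columnGap {I : Finset (ℤ × ℤ)} {m i : ℤ} :
    i ∈ columnGap I m ↔ (1 ≤ i ∧ i ≤ m) ∧ (i, m) ∈ I ∧ (i, m + 1) ∉ I := by
  rw [columnGap, Finset.mem_filter, Finset.mem_Icc]

theorem columnGap_subset {I : Finset (ℤ × ℤ)} {m : ℤ} : columnGap I m ⊆ Finset.Icc 1 m :=
  Finset.filter_subset _ _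

section FullColumns

variable {P I : Finset (ℤ × ℤ)} {n m i : ℤ}

theorem HasFullColumns.mem_of_le (hP : HasFullColumns P n) (hI : IsIdeal P I) {u v x y : ℤ}
    (hxy : (x, y) ∈ I) (hu : 1 ≤ u) (huv : u ≤ v) (hv : v ≤ n) (hux : u ≤ x) (hvy : v ≤ y) :
    (u, v) ∈ I :=
  hI.2 _ hxy _ ((hP hv).2 ⟨hu, huv⟩) ⟨hux, hvy⟩

theorem HasFullColumns.addable_iff (hP : HasFullColumns P n) (hI : IsIdeal P I)
    (hm : m + 1 ≤ n) (hi : i ∈ Finset.Icc 1 m) :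
    ((i, m + 1) ∉ I ∧ ∀ y ∈ P, y < (i, m + 1) → y ∈ I)
      ↔ i ∈ columnGap I m ∧ i - 1 ∉ columnGap I m := by
  obtain ⟨hi1, him⟩ := Finset.mem_Icc.1 hi
  simp only [mem_columnGap]
  constructor
  · rintro ⟨hnot, hbelow⟩
    have hleft : (i, m) ∈ I :=
      hbelow _ ((hP (by omega)).2 ⟨hi1, him⟩) (Prod.mk_lt_mk_iff_right.2 (lt_add_one m))
    refine ⟨⟨⟨hi1, him⟩, hleft, hnot⟩, ?_⟩
    rintro ⟨⟨hpred, -⟩, -, habove⟩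
    exact habove (hbelow _ ((hP hm).2 ⟨hpred, by omega⟩)
      (Prod.mk_lt_mk_iff_left.2 (sub_one_lt i)))
  · rintro ⟨⟨-, hleft, hnot⟩, hpred⟩
    refine ⟨hnot, ?_⟩
    rintro ⟨u, v⟩ hy hlt
    obtain ⟨hui, hvm⟩ := Prod.mk_le_mk.1 hlt.le
    obtain ⟨hu, huv⟩ := (hP (hvm.trans hm)).1 hy
    rcases hvm.lt_or_eq with hv | rfl
    · exact hP.mem_of_le hI hleft hu huv (by omega) hui (by omega)
    · have hui' : u < i := Prod.mk_lt_mk_iff_left.1 hlt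
      have hleft' : (i - 1, m) ∈ I :=
        hP.mem_of_le hI hleft (by omega) (by omega) (by omega) (by omega) le_rfl
      have habove : (i - 1, m + 1) ∈ I := by
        by_contra h
        exact hpred ⟨⟨by omega, by omega⟩, hleft', h⟩
      exact hP.mem_of_le hI habove hu huv hm (by omega) le_rfl

theorem HasFullColumns.removable_iff (hP : HasFullColumns P n) (hI : IsIdeal P I)
    (hm : m + 1 ≤ n) (hi : i ∈ Finset.Icc 1 m) :
    ((i, m) ∈ I ∧ ∀ x ∈ I, ¬ (i, m) < x)
      ↔ i ∈ columnGap I m ∧ i + 1 ∉ columnGap I m := by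
  obtain ⟨hi1, him⟩ := Finset.mem_Icc.1 hi
  simp only [mem_columnGap]
  constructor
  · rintro ⟨hmem, hmax⟩
    refine ⟨⟨⟨hi1, him⟩, hmem, fun h => hmax _ h (Prod.mk_lt_mk_iff_right.2 (lt_add_one m))⟩, ?_⟩
    rintro ⟨-, hbelow, -⟩
    exact hmax _ hbelow (Prod.mk_lt_mk_iff_left.2 (lt_add_one i))
  · rintro ⟨⟨-, hmem, hright⟩, hsucc⟩
    refine ⟨hmem, ?_⟩
    rintro ⟨x, y⟩ hx hlt
    obtain ⟨hix, hmy⟩ := Prod.mk_le_mk.1 hlt.le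
    rcases hmy.lt_or_eq with hy | rfl
    · exact hright (hP.mem_of_le hI hx hi1 (by omega) hm hix hy)
    · have hix' : i < x := Prod.mk_lt_mk_iff_left.1 hlt
      have hxm : x ≤ m := ((hP (by omega)).1 (hI.1 hx)).2
      have hbelow : (i + 1, m) ∈ I :=
        hP.mem_of_le hI hx (by omega) (by omega) (by omega) hix' le_rfl
      refine hsucc ⟨⟨by omega, by omega⟩, hbelow, fun h => hright ?_⟩
      exact hP.mem_of_le hI h hi1 (by omega) hm (by omega) le_rfl

theorem HasFullColumns.sum_togPlus_eq_card (hP : HasFullColumns P n) (hI : IsIdeal P I)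
    (hm : m + 1 ≤ n) :
    ∑ i ∈ Finset.Icc 1 m, togPlus P {(i, m + 1)} I
      = ((columnGap I m).filter fun i => i - 1 ∉ columnGap I m).card := by
  have htog : ∀ i ∈ Finset.Icc 1 m, togPlus P {(i, m + 1)} I
      = if i ∈ columnGap I m ∧ i - 1 ∉ columnGap I m then 1 else 0 := by
    intro i hi
    obtain ⟨hi1, him⟩ := Finset.mem_Icc.1 hi
    rw [hI.togPlus_singleton ((hP hm).2 ⟨hi1, by omega⟩)]
    exact if_congr (hP.addable_iff hI hm hi) rfl rfl
  rw [Finset.sum_congr rfl htog, Finset.sum_boole, ← Finset.filter_filter,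
    Finset.filter_mem_eq_inter, Finset.inter_eq_right.2 columnGap_subset]

theorem HasFullColumns.sum_togMinus_eq_card (hP : HasFullColumns P n) (hI : IsIdeal P I)
    (hm : m + 1 ≤ n) :
    ∑ i ∈ Finset.Icc 1 m, togMinus P {(i, m)} I
      = ((columnGap I m).filter fun i => i + 1 ∉ columnGap I m).card := by
  have htog : ∀ i ∈ Finset.Icc 1 m, togMinus P {(i, m)} I
      = if i ∈ columnGap I m ∧ i + 1 ∉ columnGap I m then 1 else 0 := fun i hi =>
    hI.togMinus_singleton.trans (if_congr (hP.removable_iff hI hm hi) rfl rfl)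
  rw [Finset.sum_congr rfl htog, Finset.sum_boole, ← Finset.filter_filter,
    Finset.filter_mem_eq_inter, Finset.inter_eq_right.2 columnGap_subset]

theorem HasFullColumns.sum_togPlus_eq_sum_togMinus (hP : HasFullColumns P n) (hI : IsIdeal P I)
    (hm : m + 1 ≤ n) :
    ∑ i ∈ Finset.Icc 1 m, togPlus P {(i, m + 1)} I
      = ∑ i ∈ Finset.Icc 1 m, togMinus P {(i, m)} I := by
  rw [hP.sum_togPlus_eq_card hI hm, hP.sum_togMinus_eq_card hI hm,
    card_filter_sub_notMem_eq_card_filter_add_notMem]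

variable {μ : Finset (ℤ × ℤ) → ℝ}

theorem HasFullColumns.sum_expect_column_succ (hP : HasFullColumns P n)
    (hsym : ToggleSymmetric P μ) (hm : m + 1 ≤ n) :
    ∑ i ∈ Finset.Icc 1 m, expect P μ (togMinus P {(i, m + 1)})
      = ∑ i ∈ Finset.Icc 1 m, expect P μ (togMinus P {(i, m)}) :=
  calc ∑ i ∈ Finset.Icc 1 m, expect P μ (togMinus P {(i, m + 1)})
      = ∑ i ∈ Finset.Icc 1 m, expect P μ (togPlus P {(i, m + 1)}) := by
        refine Finset.sum_congr rfl fun i hi => (hsym.expect_togPlus_eq ((hP hm).2 ?_)).symm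
        rw [Finset.mem_Icc] at hi
        omega
    _ = ∑ i ∈ Finset.Icc 1 m, expect P μ (togMinus P {(i, m)}) := by
        rw [sum_expect, sum_expect]
        exact expect_congr fun I hI => hP.sum_togPlus_eq_sum_togMinus hI hm

theorem HasFullColumns.sum_expect_column_eq_diagonal (hP : HasFullColumns P n)
    (hsym : ToggleSymmetric P μ) (hm1 : 1 ≤ m) (hmn : m ≤ n) :
    ∑ i ∈ Finset.Ico 1 m, expect P μ (togMinus P {(i, m)})
      = ∑ i ∈ Finset.Ico 1 m, expect P μ (togMinus P {(i, i)}) := by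
  induction m, hm1 using Int.leInduction with
  | base => simp
  | succ m hm1 ih =>
    rw [Finset.Ico_add_one_right_eq_Icc, hP.sum_expect_column_succ hsym hmn,
      ← Finset.sum_Ico_add_eq_sum_Icc hm1, ih (by omega), Finset.sum_Ico_add_eq_sum_Icc hm1]

theorem HasFullColumns.sum_offDiagonal {M : Type*} [AddCommMonoid M] (hP : HasFullColumns P n)
    (f : ℤ × ℤ → M) :
    ∑ p ∈ P.filter (fun p => p.1 < p.2 ∧ p.2 ≤ n), f p
      = ∑ m ∈ Finset.Icc 1 n, ∑ i ∈ Finset.Ico 1 m, f (i, m) := by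
  refine Finset.sum_finset_product_right _ _ _ ?_
  rintro ⟨i, j⟩
  simp only [Finset.mem_filter, Finset.mem_Icc, Finset.mem_Ico]
  constructor
  · rintro ⟨hp, hij, hj⟩
    obtain ⟨hi, -⟩ := (hP hj).1 hp
    omega
  · rintro ⟨⟨-, hj⟩, hi, hij⟩
    exact ⟨(hP hj).2 ⟨hi, hij.le⟩, hij, hj⟩

theorem diagonal_toggle_sum_eq_general (hP : HasFullColumns P n) (hsym : ToggleSymmetric P μ) :
    ∑ i ∈ Finset.Icc (1 : ℤ) n, ((n - i : ℤ) : ℝ) * expect P μ (togMinus P {(i, i)})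
      = ∑ p ∈ P.filter (fun p => p.1 < p.2 ∧ p.2 ≤ n), expect P μ (togMinus P {p}) := by
  rw [hP.sum_offDiagonal, ← sum_Icc_sum_Ico_eq]
  refine Finset.sum_congr rfl fun m hm => ?_
  obtain ⟨hm1, hmn⟩ := Finset.mem_Icc.1 hm
  exact (hP.sum_expect_column_eq_diagonal hsym hm1 hmn).symm

end FullColumns

theorem diagonal_toggle_sum_eq (a b : ℤ) (ha : 1 ≤ a) (hab : a ≤ b)
    (μ : Finset (ℤ × ℤ) → ℝ) (hμ : IsDistribution (trap a b) μ)
    (hsym : ToggleSymmetric (trap a b) μ) :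
    (∑ i ∈ Finset.Icc (1 : ℤ) a,
        ((a - i : ℤ) : ℝ) * expect (trap a b) μ (togMinus (trap a b) {(i, i)}))
      = ∑ p ∈ (trap a b).filter (fun p => p.1 < p.2 ∧ p.2 ≤ a),
          expect (trap a b) μ (togMinus (trap a b) {p}) :=
  diagonal_toggle_sum_eq_general (hasFullColumns_trap hab) hsym

end Stmt14
end
end

section
/- Let 1 ≤ a ≤ b. For any toggle-on-antichains-symmetric probability distribution μ on J(𝓣(a,b)): Σ_{i=1}^{a−1} Σ_{j=i+1}^{a} E[μ; 𝒯⁻_{{(i,j+1),(j,j)}}] = Σ_{i=1}^{a−1} E[μ; 𝒯⁻_{(i,i+1)}]. -/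
/-!
STATEMENT 17: For any toggle-on-antichains-symmetric distribution μ on
J(𝓣(a,b)): Σ_{i=1}^{a−1} Σ_{j=i+1}^{a} E[μ; 𝒯⁻_{{(i,j+1),(j,j)}}]
= Σ_{i=1}^{a−1} E[μ; 𝒯⁻_{(i,i+1)}].
-/

open scoped Classical

noncomputable section

namespace Stmt17

/-- The trapezoid poset `𝓣(a,b) = {(i,j) : 1 ≤ i ≤ a, i ≤ j ≤ a+b-i}`,
as a finite subset of `ℤ × ℤ` with the componentwise order. -/
def trap (a b : ℤ) : Finset (ℤ × ℤ) :=
  (Finset.Icc (1, 1) (a, a + b - 1)).filter (fun p => p.1 ≤ p.2 ∧ p.2 ≤ a + b - p.1)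

/-- `I` is an order ideal of the poset with ground set `P ⊆ ℤ × ℤ`. -/
def IsIdeal (P I : Finset (ℤ × ℤ)) : Prop :=
  I ⊆ P ∧ ∀ x ∈ I, ∀ y ∈ P, y ≤ x → y ∈ I

/-- `J(P)`: the set of order ideals of `P`. -/
def ideals (P : Finset (ℤ × ℤ)) : Finset (Finset (ℤ × ℤ)) :=
  P.powerset.filter (fun I => IsIdeal P I)

/-- The down-degree of `I`: the number of maximal elements of `I`. -/
def ddeg (I : Finset (ℤ × ℤ)) : ℕ :=
  (I.filter (fun x => ∀ y ∈ I, x ≤ y → x = y)).card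

/-- `𝒯_A⁺(I) = 1` if `A ∩ I = ∅` and `I ∪ A` is an order ideal, else `0`. -/
def togPlus (P A I : Finset (ℤ × ℤ)) : ℝ :=
  if (∀ x ∈ A, x ∉ I) ∧ IsIdeal P (I ∪ A) then 1 else 0

/-- `𝒯_A⁻(I) = 1` if `A ⊆ I` and `I \ A` is an order ideal, else `0`. -/
def togMinus (P A I : Finset (ℤ × ℤ)) : ℝ :=
  if A ⊆ I ∧ IsIdeal P (I \ A) then 1 else 0

/-- `𝒯_A = 𝒯_A⁺ − 𝒯_A⁻`. -/
def tog (P A I : Finset (ℤ × ℤ)) : ℝ := togPlus P A I - togMinus P A I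

/-- Expectation of the statistic `f` with respect to `μ` on `J(P)`. -/
def expect (P : Finset (ℤ × ℤ)) (μ : Finset (ℤ × ℤ) → ℝ) (f : Finset (ℤ × ℤ) → ℝ) : ℝ :=
  ∑ I ∈ ideals P, μ I * f I

/-- `μ` is a probability distribution on `J(P)`. -/
def IsDistribution (P : Finset (ℤ × ℤ)) (μ : Finset (ℤ × ℤ) → ℝ) : Prop :=
  (∀ I ∈ ideals P, 0 ≤ μ I) ∧ ∑ I ∈ ideals P, μ I = 1

/-- `μ` is toggle-on-antichains-symmetric: `E[μ; 𝒯_A] = 0` for every antichain `A ⊆ P`. -/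
def ToggleAntichainSymmetric (P : Finset (ℤ × ℤ)) (μ : Finset (ℤ × ℤ) → ℝ) : Prop :=
  ∀ A : Finset (ℤ × ℤ), A ⊆ P → IsAntichain (· ≤ ·) (A : Set (ℤ × ℤ)) →
    expect P μ (tog P A) = 0

/-- `μ` is toggle-symmetric: `E[μ; 𝒯_p⁺ − 𝒯_p⁻] = 0` for every `p ∈ P`. -/
def ToggleSymmetric (P : Finset (ℤ × ℤ)) (μ : Finset (ℤ × ℤ) → ℝ) : Prop :=
  ∀ p ∈ P, expect P μ (tog P {p}) = 0

/-!
Adding an antichain to an ideal `I` amounts to adding each of its elements separately, and an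
element can be added exactly when it is minimal outside `I`. If `j ≥ 2` and `(j, j)` can be
added, then `(j - 1, j) ∈ I`, so a unique `(i, j + 1)` with `i < j` can be added as well, unless
`(j - 1, j + 1) ∈ I` already. Hence `∑ i < j, 𝒯⁺_{(i,j+1),(j,j)}` is the indicator of
`(j - 1, j) ∈ I` and `(j, j), (j - 1, j + 1) ∉ I`, which is `𝒯⁻_{(j-1,j)}`. Antichain symmetry
exchanges `𝒯⁺` and `𝒯⁻` on the left in expectation.
-/

section OrderIdeal

variable {P A I : Finset (ℤ × ℤ)} {μ : Finset (ℤ × ℤ) → ℝ}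

theorem togPlus_eq_ite_minimal (hI : IsIdeal P I) (hA : IsAntichain (· ≤ ·) (A : Set (ℤ × ℤ))) :
    togPlus P A I = if ∀ x ∈ A, Minimal (fun y => y ∈ P ∧ y ∉ I) x then 1 else 0 := by
  refine if_congr ⟨?_, fun h => ?_⟩ rfl rfl
  · rintro ⟨hdisj, hsub, hlower⟩ x hx
    refine ⟨⟨hsub (Finset.mem_union_right _ hx), hdisj x hx⟩, ?_⟩
    rintro y ⟨hyP, hyI⟩ hyx
    have hyA : y ∈ A :=
      (Finset.mem_union.1 (hlower x (Finset.mem_union_right _ hx) y hyP hyx)).resolve_left hyI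
    exact (hA.eq hyA hx hyx).ge
  · refine ⟨fun x hx => (h x hx).prop.2,
      Finset.union_subset hI.1 fun x hx => (h x hx).prop.1, fun x hx y hy hyx => ?_⟩
    rcases Finset.mem_union.1 hx with hxI | hxA
    · exact Finset.mem_union_left _ (hI.2 x hxI y hy hyx)
    · by_cases hyI : y ∈ I
      · exact Finset.mem_union_left _ hyI
      · exact Finset.mem_union_right _ ((h x hxA).eq_of_le ⟨hy, hyI⟩ hyx ▸ hxA)

theorem togPlus_singleton (hI : IsIdeal P I) (x : ℤ × ℤ) :
    togPlus P {x} I = if Minimal (fun y => y ∈ P ∧ y ∉ I) x then 1 else 0 := by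
  rw [togPlus_eq_ite_minimal hI (by simp)]
  simp only [Finset.mem_singleton, forall_eq]

theorem togPlus_eq_prod (hI : IsIdeal P I) (hA : IsAntichain (· ≤ ·) (A : Set (ℤ × ℤ))) :
    togPlus P A I = ∏ x ∈ A, togPlus P {x} I := by
  simp only [togPlus_eq_ite_minimal hI hA, togPlus_singleton hI, Finset.prod_ite_zero,
    Finset.prod_const_one]

theorem togMinus_eq_ite_maximal (hI : IsIdeal P I) (hA : IsAntichain (· ≤ ·) (A : Set (ℤ × ℤ))) :
    togMinus P A I = if ∀ x ∈ A, Maximal (· ∈ I) x then 1 else 0 := by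
  refine if_congr ⟨?_, fun h => ?_⟩ rfl rfl
  · rintro ⟨hAI, -, hlower⟩ x hx
    refine ⟨hAI hx, fun y hy hxy => ?_⟩
    by_cases hyA : y ∈ A
    · exact (hA.eq hx hyA hxy).ge
    · have hx' := hlower y (Finset.mem_sdiff.2 ⟨hy, hyA⟩) x (hI.1 (hAI hx)) hxy
      exact absurd hx (Finset.mem_sdiff.1 hx').2
  · refine ⟨fun x hx => (h x hx).prop, Finset.sdiff_subset.trans hI.1, fun x hx y hy hyx => ?_⟩
    obtain ⟨hxI, hxA⟩ := Finset.mem_sdiff.1 hx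
    refine Finset.mem_sdiff.2 ⟨hI.2 x hxI y hy hyx, fun hyA => hxA ?_⟩
    exact (h y hyA).eq_of_le hxI hyx ▸ hyA

theorem expect_sum {ι : Type*} (s : Finset ι) (f : ι → Finset (ℤ × ℤ) → ℝ) :
    expect P μ (fun I => ∑ i ∈ s, f i I) = ∑ i ∈ s, expect P μ (f i) := by
  simp only [expect, Finset.mul_sum]
  exact Finset.sum_comm

theorem expect_congr {f g : Finset (ℤ × ℤ) → ℝ} (h : ∀ I, IsIdeal P I → f I = g I) :
    expect P μ f = expect P μ g :=
  Finset.sum_congr rfl fun I hI => by rw [h I (Finset.mem_filter.1 hI).2]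

theorem ToggleAntichainSymmetric.expect_togPlus_eq_expect_togMinus
    (hμ : ToggleAntichainSymmetric P μ) (hAP : A ⊆ P)
    (hA : IsAntichain (· ≤ ·) (A : Set (ℤ × ℤ))) :
    expect P μ (togPlus P A) = expect P μ (togMinus P A) := by
  have h := hμ A hAP hA
  simp only [expect, tog, mul_sub, Finset.sum_sub_distrib] at h
  exact sub_eq_zero.1 h

end OrderIdeal

section Trapezoid

variable {a b i j k l : ℤ} {I : Finset (ℤ × ℤ)} {μ : Finset (ℤ × ℤ) → ℝ}

theorem mem_trap : (i, j) ∈ trap a b ↔ 1 ≤ i ∧ i ≤ a ∧ i ≤ j ∧ j ≤ a + b - i := by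
  simp only [trap, Finset.mem_filter, Finset.mem_Icc, Prod.mk_le_mk]
  omega

theorem minimal_notMem_iff_of_isIdeal_trap (hI : IsIdeal (trap a b) I) :
    Minimal (fun x => x ∈ trap a b ∧ x ∉ I) (i, j) ↔ ((i, j) ∈ trap a b ∧ (i, j) ∉ I) ∧
      ((i - 1, j) ∈ trap a b → (i - 1, j) ∈ I) ∧ ((i, j - 1) ∈ trap a b → (i, j - 1) ∈ I) := by
  constructor
  · refine fun h => ⟨h.prop, fun hP => ?_, fun hP => ?_⟩
    all_goals
      by_contra hx
      simpa using h.le_of_le ⟨hP, hx⟩ (by simp)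
  · rintro ⟨hij, hleft, hbelow⟩
    refine ⟨hij, ?_⟩
    rintro ⟨k, l⟩ ⟨hklP, hklI⟩ hle
    have hij' := mem_trap.1 hij.1
    have hkl' := mem_trap.1 hklP
    rw [Prod.mk_le_mk] at hle ⊢
    by_contra hlt
    rcases hle.1.lt_or_eq with hki | rfl
    · exact hklI (hI.2 _ (hleft (mem_trap.2 (by omega))) _ hklP (Prod.mk_le_mk.2 (by omega)))
    · exact hklI (hI.2 _ (hbelow (mem_trap.2 (by omega))) _ hklP (Prod.mk_le_mk.2 (by omega)))

theorem maximal_mem_iff_of_isIdeal_trap (hI : IsIdeal (trap a b) I) :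
    Maximal (· ∈ I) (i, j) ↔ (i, j) ∈ I ∧ (i + 1, j) ∉ I ∧ (i, j + 1) ∉ I := by
  constructor
  · exact fun h => ⟨h.prop, fun hx => by simpa using h.le_of_ge hx (by simp),
      fun hx => by simpa using h.le_of_ge hx (by simp)⟩
  · rintro ⟨hij, hright, habove⟩
    refine ⟨hij, ?_⟩
    rintro ⟨k, l⟩ hkl hle
    have hij' := mem_trap.1 (hI.1 hij)
    have hkl' := mem_trap.1 (hI.1 hkl)
    rw [Prod.mk_le_mk] at hle ⊢
    by_contra hlt
    by_cases hjl : j < l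
    · exact habove (hI.2 _ hkl _ (mem_trap.2 (by omega)) (Prod.mk_le_mk.2 (by omega)))
    · exact hright (hI.2 _ hkl _ (mem_trap.2 (by omega)) (Prod.mk_le_mk.2 (by omega)))

theorem sum_togPlus_singleton_column (hI : IsIdeal (trap a b) I) (hk : 1 ≤ k)
    (hkj : (k, j) ∈ I) (hP : (k, j + 1) ∈ trap a b) :
    ∑ i ∈ Finset.Icc 1 k, togPlus (trap a b) {(i, j + 1)} I =
      if (k, j + 1) ∈ I then 0 else 1 := by
  induction k, hk using Int.leInduction with
  | base =>
    have hzero : (0, j + 1) ∉ trap a b := by simp [mem_trap]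
    simp only [Finset.Icc_self, Finset.sum_singleton, togPlus_singleton hI,
      minimal_notMem_iff_of_isIdeal_trap hI]
    simp [hzero, hP, hkj]
  | succ k hk ih =>
    have hkjP := mem_trap.1 (hI.1 hkj)
    have hkP := mem_trap.1 hP
    have hprev : (k, j + 1) ∈ trap a b := mem_trap.2 (by omega)
    have hprev_of_mem : (k + 1, j + 1) ∈ I → (k, j + 1) ∈ I := fun h =>
      hI.2 _ h _ hprev (Prod.mk_le_mk.2 (by omega))
    have hkj' : (k, j) ∈ I :=
      hI.2 _ hkj _ (mem_trap.2 (by omega)) (Prod.mk_le_mk.2 (by omega))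
    have htop : togPlus (trap a b) {(k + 1, j + 1)} I =
        if (k + 1, j + 1) ∉ I ∧ (k, j + 1) ∈ I then 1 else 0 := by
      rw [togPlus_singleton hI]
      refine if_congr ?_ rfl rfl
      rw [minimal_notMem_iff_of_isIdeal_trap hI]
      simp [hP, hprev, hkj]
    rw [← Finset.insert_Icc_right_eq_Icc_add_one (by omega), Finset.sum_insert (by simp),
      ih hkj' hprev, htop]
    by_cases (k, j + 1) ∈ I <;> by_cases (k + 1, j + 1) ∈ I <;> simp_all

theorem togPlus_singleton_diagonal (hI : IsIdeal (trap a b) I) (hk : 1 ≤ k)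
    (hP : (k + 1, k + 1) ∈ trap a b) :
    togPlus (trap a b) {(k + 1, k + 1)} I =
      if (k, k + 1) ∈ I ∧ (k + 1, k + 1) ∉ I then 1 else 0 := by
  have hk_bounds := mem_trap.1 hP
  have hleft : (k, k + 1) ∈ trap a b := mem_trap.2 (by omega)
  have hbelow : (k + 1, k) ∉ trap a b := by simp [mem_trap]
  rw [togPlus_singleton hI]
  refine if_congr ?_ rfl rfl
  rw [minimal_notMem_iff_of_isIdeal_trap hI]
  simp [hP, hleft, hbelow, and_comm]

theorem isAntichain_pair_of_lt_of_lt (hik : i < k) (hlj : l < j) :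
    IsAntichain (· ≤ ·) (({(i, j), (k, l)} : Finset (ℤ × ℤ)) : Set (ℤ × ℤ)) := by
  rw [Finset.coe_pair]
  refine IsAntichain.insert (by simp) ?_ ?_ <;>
    simp only [Set.mem_singleton_iff, forall_eq, Prod.mk_le_mk] <;> omega

theorem sum_togPlus_pair_eq_togMinus (hI : IsIdeal (trap a b) I) (hk : 1 ≤ k)
    (hP : (k + 1, k + 1) ∈ trap a b) :
    ∑ i ∈ Finset.Icc 1 k, togPlus (trap a b) {(i, k + 1 + 1), (k + 1, k + 1)} I =
      togMinus (trap a b) {(k, k + 1)} I := by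
  have hk_bounds := mem_trap.1 hP
  have hpair : ∀ i ∈ Finset.Icc 1 k, togPlus (trap a b) {(i, k + 1 + 1), (k + 1, k + 1)} I =
      togPlus (trap a b) {(i, k + 1 + 1)} I * togPlus (trap a b) {(k + 1, k + 1)} I := by
    intro i hi
    rw [Finset.mem_Icc] at hi
    rw [togPlus_eq_prod hI (isAntichain_pair_of_lt_of_lt (by omega) (by omega)),
      Finset.prod_pair (by simp)]
  have hminus : togMinus (trap a b) {(k, k + 1)} I =
      if (k, k + 1) ∈ I ∧ (k + 1, k + 1) ∉ I ∧ (k, k + 1 + 1) ∉ I then 1 else 0 := by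
    simp only [togMinus_eq_ite_maximal hI (A := {(k, k + 1)}) (by simp), Finset.mem_singleton,
      forall_eq, maximal_mem_iff_of_isIdeal_trap hI]
  rw [Finset.sum_congr rfl hpair, ← Finset.sum_mul, togPlus_singleton_diagonal hI hk hP, hminus]
  by_cases hleft : (k, k + 1) ∈ I
  · rw [sum_togPlus_singleton_column hI hk hleft (mem_trap.2 (by omega))]
    by_cases (k + 1, k + 1) ∈ I <;> by_cases (k, k + 1 + 1) ∈ I <;> simp_all
  · simp [hleft]

theorem ToggleAntichainSymmetric.sum_expect_togMinus_pair
    (hμ : ToggleAntichainSymmetric (trap a b) μ) (hk : 1 ≤ k)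
    (hP : (k + 1, k + 1) ∈ trap a b) :
    ∑ i ∈ Finset.Icc 1 k,
        expect (trap a b) μ (togMinus (trap a b) {(i, k + 1 + 1), (k + 1, k + 1)}) =
      expect (trap a b) μ (togMinus (trap a b) {(k, k + 1)}) := by
  calc
    _ = ∑ i ∈ Finset.Icc 1 k,
        expect (trap a b) μ (togPlus (trap a b) {(i, k + 1 + 1), (k + 1, k + 1)}) := by
      refine Finset.sum_congr rfl fun i hi => ?_
      rw [Finset.mem_Icc] at hi
      have hk_bounds := mem_trap.1 hP
      refine (hμ.expect_togPlus_eq_expect_togMinus ?_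
        (isAntichain_pair_of_lt_of_lt (by omega) (by omega))).symm
      rw [Finset.insert_subset_iff, Finset.singleton_subset_iff, mem_trap, mem_trap]
      omega
    _ = expect (trap a b) μ fun I =>
        ∑ i ∈ Finset.Icc 1 k, togPlus (trap a b) {(i, k + 1 + 1), (k + 1, k + 1)} I :=
      (expect_sum _ _).symm
    _ = expect (trap a b) μ (togMinus (trap a b) {(k, k + 1)}) :=
      expect_congr fun _ hI => sum_togPlus_pair_eq_togMinus hI hk hP

end Trapezoid

theorem pair_toggle_sum_eq_single_general (a b : ℤ) (hab : a ≤ b) (μ : Finset (ℤ × ℤ) → ℝ)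
    (hsym : ToggleAntichainSymmetric (trap a b) μ) :
    (∑ i ∈ Finset.Icc (1 : ℤ) (a - 1), ∑ j ∈ Finset.Icc (i + 1) a,
        expect (trap a b) μ (togMinus (trap a b) {(i, j + 1), (j, j)}))
      = ∑ i ∈ Finset.Icc (1 : ℤ) (a - 1),
          expect (trap a b) μ (togMinus (trap a b) {(i, i + 1)}) := by
  have hshift : ∀ i, Finset.Icc (i + 1) a =
      (Finset.Icc i (a - 1)).map (addRightEmbedding 1) := by simp
  simp only [hshift, Finset.sum_map, addRightEmbedding_apply]
  rw [Finset.sum_comm' (t' := Finset.Icc 1 (a - 1)) (s' := fun k => Finset.Icc 1 k)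
    (by simp only [Finset.mem_Icc]; omega)]
  refine Finset.sum_congr rfl fun k hk => ?_
  rw [Finset.mem_Icc] at hk
  exact hsym.sum_expect_togMinus_pair hk.1 (mem_trap.2 (by omega))

theorem pair_toggle_sum_eq_single (a b : ℤ) (ha : 1 ≤ a) (hab : a ≤ b)
    (μ : Finset (ℤ × ℤ) → ℝ) (hμ : IsDistribution (trap a b) μ)
    (hsym : ToggleAntichainSymmetric (trap a b) μ) :
    (∑ i ∈ Finset.Icc (1 : ℤ) (a - 1), ∑ j ∈ Finset.Icc (i + 1) a,
        expect (trap a b) μ (togMinus (trap a b) {(i, j + 1), (j, j)}))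
      = ∑ i ∈ Finset.Icc (1 : ℤ) (a - 1),
          expect (trap a b) μ (togMinus (trap a b) {(i, i + 1)}) :=
  pair_toggle_sum_eq_single_general a b hab μ hsym

end Stmt17
end
end

section
/- Fix n ≥ 2. Let Q be the poset D(2n−1, n) and let R be the poset D(2n−1, 1), where for 1 ≤ r ≤ m, D(m,r) is the poset on the set {(k,0) : 1 ≤ k ≤ m} ∪ {(r,1)} with (k,ε) ≤ (k',ε') iff k < k' or (k,ε) = (k',ε') (a chain of length m with the element at level r doubled into two incomparable elements). Then there exists a bijection φ : J(Q) → J(R) commuting with rowmotion: φ(row(I)) = row(φ(I)) for all I ∈ J(Q). (Q is the minuscule quadric poset Λ_{Q^{2n}} and R is the root poset Φ⁺_{I₂(2n)}.) -/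
/-!
STATEMENT 18: For `n ≥ 2` there is a rowmotion-equivariant bijection between
the order ideals of `Q = D(2n−1, n)` (the minuscule quadric poset `Λ_{Q^{2n}}`)
and those of `R = D(2n−1, 1)` (the root poset `Φ⁺_{I₂(2n)}`), where `D(m,r)`
is a chain of length `m` with the element at level `r` doubled.
-/

open scoped Classical

noncomputable section

namespace Stmt18

/-- The order on `D(m,r)`: `(k,ε) ≤ (k',ε')` iff `k < k'` or `(k,ε) = (k',ε')`. -/
def leD (p q : ℕ × ℕ) : Prop := p.1 < q.1 ∨ p = q

/-- The ground set of `D(m,r)`: `{(k,0) : 1 ≤ k ≤ m} ∪ {(r,1)}`. -/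
def Dposet (m r : ℕ) : Finset (ℕ × ℕ) :=
  ((Finset.Icc 1 m).image (fun k => (k, 0))) ∪ {(r, 1)}

/-- `I` is an order ideal of the poset with ground set `P` and order `leD`. -/
def IsIdeal (P I : Finset (ℕ × ℕ)) : Prop :=
  I ⊆ P ∧ ∀ x ∈ I, ∀ y ∈ P, leD y x → y ∈ I

/-- Rowmotion with respect to the order `leD` on the ground set `P`:
the order ideal generated by the minimal elements of `P \ I`. -/
def row (P I : Finset (ℕ × ℕ)) : Finset (ℕ × ℕ) :=
  P.filter (fun x => ∃ m ∈ P, m ∉ I ∧ (∀ y ∈ P, y ∉ I → leD y m → y = m) ∧ leD x m)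

/-!
In the order `leD` every element lies above all elements of smaller level, so an ideal is determined
by its part in the highest level it meets. Hence `J(D(m,r))` consists of the `m + 1` ideals cut out
by a bound `c ≤ m` on the level, which rowmotion permutes by `c ↦ c + 1` modulo `m + 1`, and of the
two principal ideals generated by the elements of the doubled level `r`, which rowmotion swaps. This
description of rowmotion does not depend on `r`.
-/

section Conjugacy

variable {α β γ : Type*} {i : α → β} {j : α → γ} {σ : α → α} {f : β → β} {g : γ → γ}

theorem exists_bijOn_range_equivariant [Nonempty γ] (hi : i.Injective) (hj : j.Injective)
    (hf : Function.Semiconj i σ f) (hg : Function.Semiconj j σ g) :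
    ∃ φ : β → γ, Set.BijOn φ (Set.range i) (Set.range j) ∧
      ∀ x ∈ Set.range i, φ (f x) = g (φ x) := by
  obtain ⟨φ, hφ⟩ : ∃ φ : β → γ, ∀ a, φ (i a) = j a :=
    ⟨Function.extend i j fun _ => Classical.arbitrary γ, hi.extend_apply j _⟩
  refine ⟨φ, ⟨?_, ?_, ?_⟩, ?_⟩
  · rintro _ ⟨a, rfl⟩
    exact ⟨a, (hφ a).symm⟩
  · rintro _ ⟨a, rfl⟩ _ ⟨b, rfl⟩ hab
    rw [hφ, hφ] at hab
    rw [hj hab]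
  · rintro _ ⟨a, rfl⟩
    exact ⟨i a, ⟨a, rfl⟩, hφ a⟩
  · rintro _ ⟨a, rfl⟩
    rw [← hf a, hφ, hφ, hg a]

end Conjugacy

section LevelOrder

variable {P I : Finset (ℕ × ℕ)} {p q x : ℕ × ℕ} {c : ℕ}

/-- The ideal of `P` formed by all elements of level at most `c`, the level of a point being its
first coordinate. -/
def levelIdeal (P : Finset (ℕ × ℕ)) (c : ℕ) : Finset (ℕ × ℕ) :=
  P.filter fun x => x.1 ≤ c

/-- The ideal of `P` generated by `p`, for the order `leD`. -/
def principalIdeal (P : Finset (ℕ × ℕ)) (p : ℕ × ℕ) : Finset (ℕ × ℕ) :=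
  P.filter fun x => leD x p

/-- The minimal elements of `P \ I` for the order `leD`; they generate the ideal `row P I`. -/
def minimalCompl (P I : Finset (ℕ × ℕ)) : Finset (ℕ × ℕ) :=
  P.filter fun p => p ∉ I ∧ ∀ x ∈ P, x ∉ I → leD x p → x = p

theorem mem_levelIdeal : x ∈ levelIdeal P c ↔ x ∈ P ∧ x.1 ≤ c :=
  Finset.mem_filter

theorem mem_principalIdeal : x ∈ principalIdeal P p ↔ x ∈ P ∧ leD x p :=
  Finset.mem_filter

theorem mem_minimalCompl :
    p ∈ minimalCompl P I ↔ p ∈ P ∧ p ∉ I ∧ ∀ x ∈ P, x ∉ I → leD x p → x = p :=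
  Finset.mem_filter

theorem mem_row : x ∈ row P I ↔ x ∈ P ∧ ∃ p ∈ minimalCompl P I, leD x p := by
  simp only [row, Finset.mem_filter, mem_minimalCompl, and_assoc]

theorem isIdeal_levelIdeal (P : Finset (ℕ × ℕ)) (c : ℕ) : IsIdeal P (levelIdeal P c) := by
  simp only [IsIdeal, levelIdeal, leD]
  grind

theorem isIdeal_principalIdeal (P : Finset (ℕ × ℕ)) (p : ℕ × ℕ) :
    IsIdeal P (principalIdeal P p) := by
  simp only [IsIdeal, principalIdeal, leD]
  grind

theorem minimalCompl_self (P : Finset (ℕ × ℕ)) : minimalCompl P P = ∅ := by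
  ext p
  grind [mem_minimalCompl]

theorem minimalCompl_levelIdeal (hc : ∃ p ∈ P, p.1 = c + 1) :
    minimalCompl P (levelIdeal P c) = P.filter fun x => x.1 = c + 1 := by
  ext x
  simp only [mem_minimalCompl, mem_levelIdeal, Finset.mem_filter, leD]
  grind

theorem minimalCompl_principalIdeal (hq : q ∈ P) (hqp : q.1 = p.1) (hne : q ≠ p)
    (hlevel : ∀ x ∈ P, x.1 = p.1 → x = p ∨ x = q) :
    minimalCompl P (principalIdeal P p) = {q} := by
  ext x
  simp only [mem_minimalCompl, mem_principalIdeal, Finset.mem_singleton, leD]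
  grind

theorem row_self (P : Finset (ℕ × ℕ)) : row P P = ∅ := by
  ext x
  simp [mem_row, minimalCompl_self]

theorem row_levelIdeal (hc : ∃ p ∈ P, p.1 = c + 1) :
    row P (levelIdeal P c) = levelIdeal P (c + 1) := by
  ext x
  simp only [mem_row, minimalCompl_levelIdeal hc, mem_levelIdeal, Finset.mem_filter, leD]
  grind

theorem row_principalIdeal (hq : q ∈ P) (hqp : q.1 = p.1) (hne : q ≠ p)
    (hlevel : ∀ x ∈ P, x.1 = p.1 → x = p ∨ x = q) :
    row P (principalIdeal P p) = principalIdeal P q := by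
  ext x
  simp only [mem_row, minimalCompl_principalIdeal hq hqp hne hlevel, mem_principalIdeal,
    Finset.mem_singleton, exists_eq_left]

theorem IsIdeal.eq_levelIdeal (hI : IsIdeal P I) (hx : x ∈ I) (hmax : ∀ y ∈ I, y.1 ≤ x.1)
    (hlevel : ∀ y ∈ P, y.1 = x.1 → y ∈ I) : I = levelIdeal P x.1 := by
  ext y
  have hbelow : y ∈ P → y.1 < x.1 → y ∈ I := fun hy hlt => hI.2 x hx y hy (.inl hlt)
  grind [mem_levelIdeal, IsIdeal]

theorem IsIdeal.eq_principalIdeal (hI : IsIdeal P I) (hx : x ∈ I) (hmax : ∀ y ∈ I, y.1 ≤ x.1)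
    (hlevel : ∀ y ∈ I, y.1 = x.1 → y = x) : I = principalIdeal P x := by
  ext y
  rw [mem_principalIdeal]
  refine ⟨fun hy => ⟨hI.1 hy, ?_⟩, fun hy => hI.2 x hx y hy.1 hy.2⟩
  exact (hmax y hy).lt_or_eq.imp_right (hlevel y hy)

end LevelOrder

section DoubledChain

variable {m r c : ℕ} {x y : ℕ × ℕ}

theorem mem_Dposet : x ∈ Dposet m r ↔ (x.1 ∈ Finset.Icc 1 m ∧ x.2 = 0) ∨ x = (r, 1) := by
  obtain ⟨k, ε⟩ := x
  simp only [Dposet, Finset.mem_union, Finset.mem_image, Finset.mem_singleton, Prod.mk.injEq]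
  grind

theorem mk_zero_mem_Dposet (hc : c ∈ Finset.Icc 1 m) : (c, 0) ∈ Dposet m r :=
  mem_Dposet.2 (.inl ⟨hc, rfl⟩)

theorem mk_mem_Dposet (hr : r ∈ Finset.Icc 1 m) (ε : Fin 2) : (r, (ε : ℕ)) ∈ Dposet m r := by
  fin_cases ε <;> simp [mem_Dposet, Finset.mem_Icc.1 hr]

theorem fst_mem_Icc_of_mem_Dposet (hr : r ∈ Finset.Icc 1 m) (hx : x ∈ Dposet m r) :
    x.1 ∈ Finset.Icc 1 m := by
  grind [mem_Dposet]

theorem exists_eq_mk_of_mem_Dposet (hx : x ∈ Dposet m r) (hxr : x.1 = r) :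
    ∃ ε : Fin 2, x = (r, (ε : ℕ)) := by
  rcases mem_Dposet.1 hx with ⟨-, h0⟩ | rfl
  · exact ⟨0, Prod.ext hxr h0⟩
  · exact ⟨1, rfl⟩

theorem fst_eq_of_mem_Dposet_of_ne (hx : x ∈ Dposet m r) (hy : y ∈ Dposet m r)
    (hxy : x.1 = y.1) (hne : x ≠ y) : x.1 = r := by
  grind [mem_Dposet]

theorem levelIdeal_Dposet_zero (hr : r ∈ Finset.Icc 1 m) : levelIdeal (Dposet m r) 0 = ∅ := by
  ext x
  have hx := fst_mem_Icc_of_mem_Dposet (x := x) hr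
  grind [mem_levelIdeal]

theorem levelIdeal_Dposet_top (hr : r ∈ Finset.Icc 1 m) :
    levelIdeal (Dposet m r) m = Dposet m r := by
  ext x
  have hx := fst_mem_Icc_of_mem_Dposet (x := x) hr
  grind [mem_levelIdeal]

/-- The list of all ideals of `D(m,r)`: those cut out by a level `c ≤ m`, and the two principal
ideals generated by the elements of the doubled level `r`. -/
def idealOfIndex (m r : ℕ) : Fin (m + 1) ⊕ Fin 2 → Finset (ℕ × ℕ) :=
  Sum.elim (fun c => levelIdeal (Dposet m r) c) fun ε => principalIdeal (Dposet m r) (r, (ε : ℕ))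

/-- Rowmotion of `D(m,r)` on the indices of `idealOfIndex`; addition in `Fin` is cyclic. -/
def rowIndex (m : ℕ) : Fin (m + 1) ⊕ Fin 2 → Fin (m + 1) ⊕ Fin 2 :=
  Sum.map (· + 1) (· + 1)

theorem levelIdeal_Dposet_injective (m r : ℕ) :
    Function.Injective fun c : Fin (m + 1) => levelIdeal (Dposet m r) c := by
  have hle : ∀ c d : Fin (m + 1),
      levelIdeal (Dposet m r) c = levelIdeal (Dposet m r) d → c ≤ d := by
    intro c d hcd
    rcases Nat.eq_zero_or_pos (c : ℕ) with hc | hc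
    · exact Fin.le_def.2 (hc ▸ Nat.zero_le _)
    · have hmem : ((c : ℕ), 0) ∈ Dposet m r :=
        mk_zero_mem_Dposet (Finset.mem_Icc.2 ⟨hc, c.is_le⟩)
      exact (mem_levelIdeal.1 (hcd ▸ mem_levelIdeal.2 ⟨hmem, le_rfl⟩)).2
  exact fun c d hcd => le_antisymm (hle c d hcd) (hle d c hcd.symm)

theorem mk_mem_principalIdeal_Dposet_iff (hr : r ∈ Finset.Icc 1 m) {ε δ : Fin 2} :
    (r, (δ : ℕ)) ∈ principalIdeal (Dposet m r) (r, (ε : ℕ)) ↔ δ = ε := by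
  simp [mem_principalIdeal, mk_mem_Dposet hr, leD, Fin.ext_iff]

theorem principalIdeal_Dposet_injective (hr : r ∈ Finset.Icc 1 m) :
    Function.Injective fun ε : Fin 2 => principalIdeal (Dposet m r) (r, (ε : ℕ)) :=
  fun _ _ (h : principalIdeal _ _ = principalIdeal _ _) =>
    (mk_mem_principalIdeal_Dposet_iff hr).1 (h ▸ (mk_mem_principalIdeal_Dposet_iff hr).2 rfl)

theorem levelIdeal_ne_principalIdeal_Dposet (hr : r ∈ Finset.Icc 1 m) (c : ℕ) (ε : Fin 2) :
    levelIdeal (Dposet m r) c ≠ principalIdeal (Dposet m r) (r, (ε : ℕ)) := by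
  intro h
  have hmem : ∀ δ : Fin 2, r ≤ c ↔ δ = ε := fun δ => by
    rw [← mk_mem_principalIdeal_Dposet_iff hr, ← h, mem_levelIdeal]
    exact (and_iff_right (mk_mem_Dposet hr δ)).symm
  have hne : ε + 1 ≠ ε := by simp
  exact hne ((hmem _).1 ((hmem ε).2 rfl))

theorem idealOfIndex_injective (hr : r ∈ Finset.Icc 1 m) :
    Function.Injective (idealOfIndex m r) :=
  (levelIdeal_Dposet_injective m r).sumElim (principalIdeal_Dposet_injective hr)
    fun c ε => levelIdeal_ne_principalIdeal_Dposet hr c ε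

theorem range_idealOfIndex (hr : r ∈ Finset.Icc 1 m) :
    Set.range (idealOfIndex m r) = {I | IsIdeal (Dposet m r) I} := by
  refine Set.Subset.antisymm ?_ fun I (hI : IsIdeal _ I) => ?_
  · rintro _ ⟨c | ε, rfl⟩
    exacts [isIdeal_levelIdeal _ _, isIdeal_principalIdeal _ _]
  rcases I.eq_empty_or_nonempty with rfl | hne
  · exact ⟨.inl 0, levelIdeal_Dposet_zero hr⟩
  obtain ⟨x, hx, hmax⟩ := I.exists_max_image Prod.fst hne
  by_cases hlevel : ∀ y ∈ Dposet m r, y.1 = x.1 → y ∈ I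
  · have hxm := (Finset.mem_Icc.1 (fst_mem_Icc_of_mem_Dposet hr (hI.1 hx))).2
    exact ⟨.inl ⟨x.1, Nat.lt_succ_of_le hxm⟩, (hI.eq_levelIdeal hx hmax hlevel).symm⟩
  · push Not at hlevel
    obtain ⟨y, hy, hyx, hyI⟩ := hlevel
    have hyr : y.1 = r := fst_eq_of_mem_Dposet_of_ne hy (hI.1 hx) hyx fun h => hyI (h ▸ hx)
    have hunique : ∀ z ∈ I, z.1 = x.1 → z = x := by
      grind [mem_Dposet, IsIdeal]
    obtain ⟨ε, rfl⟩ := exists_eq_mk_of_mem_Dposet (hI.1 hx) (hyx ▸ hyr)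
    exact ⟨.inr ε, (hI.eq_principalIdeal hx hmax hunique).symm⟩

theorem row_levelIdeal_Dposet (hr : r ∈ Finset.Icc 1 m) (c : Fin (m + 1)) :
    row (Dposet m r) (levelIdeal (Dposet m r) c) =
      levelIdeal (Dposet m r) (c + 1 : Fin (m + 1)) := by
  induction c using Fin.lastCases with
  | last =>
    rw [Fin.last_add_one, Fin.val_last, Fin.val_zero, levelIdeal_Dposet_top hr,
      levelIdeal_Dposet_zero hr, row_self]
  | cast c =>
    rw [Fin.coeSucc_eq_succ, Fin.val_castSucc, Fin.val_succ]
    have hc : (c : ℕ) + 1 ∈ Finset.Icc 1 m := Finset.mem_Icc.2 ⟨Nat.le_add_left 1 c, c.is_lt⟩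
    exact row_levelIdeal ⟨(c + 1, 0), mk_zero_mem_Dposet hc, rfl⟩

theorem row_principalIdeal_Dposet (hr : r ∈ Finset.Icc 1 m) (ε : Fin 2) :
    row (Dposet m r) (principalIdeal (Dposet m r) (r, (ε : ℕ))) =
      principalIdeal (Dposet m r) (r, ((ε + 1 : Fin 2) : ℕ)) := by
  refine row_principalIdeal (mk_mem_Dposet hr _) rfl ?_ fun x hx hxr => ?_
  · simp [← Fin.ext_iff]
  · obtain ⟨δ, rfl⟩ := exists_eq_mk_of_mem_Dposet hx hxr
    obtain rfl | rfl : δ = ε ∨ δ = ε + 1 := by omega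
    exacts [.inl rfl, .inr rfl]

theorem idealOfIndex_semiconj_row (hr : r ∈ Finset.Icc 1 m) :
    Function.Semiconj (idealOfIndex m r) (rowIndex m) (row (Dposet m r))
  | .inl c => (row_levelIdeal_Dposet hr c).symm
  | .inr ε => (row_principalIdeal_Dposet hr ε).symm

end DoubledChain

theorem quadric_dihedral_rowmotion_equivariant_bijection_general {m r s : ℕ}
    (hr : r ∈ Finset.Icc 1 m) (hs : s ∈ Finset.Icc 1 m) :
    ∃ φ : Finset (ℕ × ℕ) → Finset (ℕ × ℕ),
      Set.BijOn φ {I | IsIdeal (Dposet m r) I} {I | IsIdeal (Dposet m s) I} ∧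
      ∀ I : Finset (ℕ × ℕ), IsIdeal (Dposet m r) I →
        φ (row (Dposet m r) I) = row (Dposet m s) (φ I) := by
  have h := exists_bijOn_range_equivariant (idealOfIndex_injective hr) (idealOfIndex_injective hs)
    (idealOfIndex_semiconj_row hr) (idealOfIndex_semiconj_row hs)
  rwa [range_idealOfIndex hr, range_idealOfIndex hs] at h

/-- There is a bijection `φ : J(D(2n−1,n)) → J(D(2n−1,1))` commuting with rowmotion. -/
theorem quadric_dihedral_rowmotion_equivariant_bijection (n : ℕ) (hn : 2 ≤ n) :
    ∃ φ : Finset (ℕ × ℕ) → Finset (ℕ × ℕ),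
      Set.BijOn φ {I | IsIdeal (Dposet (2 * n - 1) n) I} {I | IsIdeal (Dposet (2 * n - 1) 1) I} ∧
      ∀ I : Finset (ℕ × ℕ), IsIdeal (Dposet (2 * n - 1) n) I →
        φ (row (Dposet (2 * n - 1) n) I) = row (Dposet (2 * n - 1) 1) (φ I) := by
  exact quadric_dihedral_rowmotion_equivariant_bijection_general
    (Finset.mem_Icc.2 ⟨by omega, by omega⟩) (Finset.mem_Icc.2 ⟨le_rfl, by omega⟩)

end Stmt18
end
end
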